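/- arXiv:2001.00429 — 2 statements merged into one kernel-verified Lean document; each statement's English description precedes it below -/
import Mathlib

section
/- Let δ > 0 and let u be an admissible map. If 0 < ‖u‖ < r(δ), then D_δ(u) > 0. In particular, if 0 < ‖u‖ < r(1) then D(u) > 0. -/
open MeasureTheory Real Filter

/-- x-partial derivative of a map `u : ℝ² → ℝ³`. -/
noncomputable def pderivX (u : ℝ × ℝ → Fin 3 → ℝ) (p : ℝ × ℝ) : Fin 3 → ℝ :=
  fderiv ℝ u p (1, 0)

/-- y-partial derivative of a map `u : ℝ² → ℝ³`. -/
noncomputable def pderivY (u : ℝ × ℝ → Fin 3 → ℝ) (p : ℝ × ℝ) : Fin 3 → ℝ :=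
  fderiv ℝ u p (0, 1)

/-- Euclidean dot product on `ℝ³`. -/
def dot3 (a b : Fin 3 → ℝ) : ℝ := ∑ i, a i * b i

/-- Squared Dirichlet norm `‖u‖² = ∫_Ω |∇u|²`. -/
noncomputable def dirEnergy (Ω : Set (ℝ × ℝ)) (u : ℝ × ℝ → Fin 3 → ℝ) : ℝ :=
  ∫ p in Ω, (dot3 (pderivX u p) (pderivX u p) + dot3 (pderivY u p) (pderivY u p))

/-- Dirichlet norm `‖u‖`. -/
noncomputable def dnorm (Ω : Set (ℝ × ℝ)) (u : ℝ × ℝ → Fin 3 → ℝ) : ℝ :=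
  Real.sqrt (dirEnergy Ω u)

/-- Volume functional `V(u) = ∫_Ω u · (u_x ∧ u_y)`. -/
noncomputable def vol (Ω : Set (ℝ × ℝ)) (u : ℝ × ℝ → Fin 3 → ℝ) : ℝ :=
  ∫ p in Ω, dot3 (u p) (crossProduct (pderivX u p) (pderivY u p))

/-- An admissible map: smooth with compact support contained in `Ω`. -/
def IsAdmissible (Ω : Set (ℝ × ℝ)) (u : ℝ × ℝ → Fin 3 → ℝ) : Prop :=
  ContDiff ℝ (⊤ : ℕ∞) u ∧ HasCompactSupport u ∧ tsupport u ⊆ Ω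

/-- Energy functional `E(u) = (1/2)‖u‖² + (2H/3)·V(u)`. -/
noncomputable def Efun (Ω : Set (ℝ × ℝ)) (H : ℝ) (u : ℝ × ℝ → Fin 3 → ℝ) : ℝ :=
  (1 / 2) * dirEnergy Ω u + (2 * H / 3) * vol Ω u

/-- Modified Nehari functional `D_δ(u) = δ‖u‖² + 2H·V(u)`; `D = D₁`. -/
noncomputable def Dfun (Ω : Set (ℝ × ℝ)) (H δ : ℝ) (u : ℝ × ℝ → Fin 3 → ℝ) : ℝ :=
  δ * dirEnergy Ω u + 2 * H * vol Ω u

/-- The radius `r(δ) = 2√(2π)·δ/H`. -/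
noncomputable def rPW (H δ : ℝ) : ℝ := 2 * Real.sqrt (2 * Real.pi) * δ / H

/-- The coefficient `a(δ) = 1/2 − δ/3`. -/
noncomputable def aPW (δ : ℝ) : ℝ := 1 / 2 - δ / 3

section helpers
open scoped Pointwise

lemma bmOneDimCompact {K L : Set ℝ} (hK : IsCompact K) (hL : IsCompact L) (hKn : K.Nonempty)
    (hLn : L.Nonempty) {C : Set ℝ} (hC : ∀ x ∈ K, ∀ y ∈ L, x + y ∈ C) :
    volume K + volume L ≤ volume C := by
  obtain ⟨k, hk, hkm⟩ := hK.exists_isGreatest hKn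
  obtain ⟨l, hl, hlm⟩ := hL.exists_isLeast hLn
  have h1 : (fun x => x + l) '' K ∪ (fun y => k + y) '' L ⊆ C := by
    rintro _ (⟨x, hx, rfl⟩ | ⟨y, hy, rfl⟩)
    · exact hC x hx l hl
    · exact hC k hk y hy
  have hKc : IsCompact ((fun x => x + l) '' K) := hK.image (by fun_prop)
  have hLc : IsCompact ((fun y => k + y) '' L) := hL.image (by fun_prop)
  have h2 : volume ((fun x => x + l) '' K ∪ (fun y => k + y) '' L)
      = volume ((fun x => x + l) '' K) + volume ((fun y => k + y) '' L) := by
    apply measure_union₀ hLc.measurableSet.nullMeasurableSet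
    refine measure_mono_null (t := {k + l}) ?_ (by simp)
    rintro _ ⟨⟨x, hx, rfl⟩, ⟨y, hy, hxy⟩⟩
    have := hkm hx
    have := hlm hy
    simp only [Set.mem_singleton_iff] at *
    linarith
  have h3 : volume ((fun x => x + l) '' K) = volume K := by
    simp
  have h4 : volume ((fun y => k + y) '' L) = volume L := by
    simp
  rw [← h3, ← h4, ← h2]
  exact measure_mono h1

lemma bmOneDim {A B C : Set ℝ} (hA : MeasurableSet A) (hB : MeasurableSet B) (hAn : A.Nonempty)
    (hBn : B.Nonempty) (hC : ∀ x ∈ A, ∀ y ∈ B, x + y ∈ C) :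
    volume A + volume B ≤ volume C := by
  obtain ⟨a, ha⟩ := hAn
  obtain ⟨b, hb⟩ := hBn
  have key : ∀ K ⊆ A, IsCompact K → ∀ L ⊆ B, IsCompact L → volume K + volume L ≤ volume C := by
    intro K hKA hK L hLB hL
    refine le_trans (add_le_add (measure_mono (Set.subset_insert a K))
      (measure_mono (Set.subset_insert b L))) ?_
    refine bmOneDimCompact (hK.insert a) (hL.insert b) (by simp) (by simp) ?_
    intro x hx y hy
    refine hC x ?_ y ?_
    · exact Set.insert_subset ha hKA hx
    · exact Set.insert_subset hb hLB hy
  rw [hA.measure_eq_iSup_isCompact volume, hB.measure_eq_iSup_isCompact volume]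
  simp only [iSup_and']
  refine ENNReal.biSup_add_biSup_le' (p := fun K => K ⊆ A ∧ IsCompact K)
    (q := fun L => L ⊆ B ∧ IsCompact L) (by exact ⟨∅, by simp⟩) (by exact ⟨∅, by simp⟩) ?_
  rintro K ⟨h1, h2⟩ L ⟨h3, h4⟩
  exact key K h1 h2 L h3 h4

lemma bmOneDimScaled {A B C : Set ℝ} {a b : ℝ} (ha : 0 < a) (hb : 0 < b)
    (hA : MeasurableSet A) (hB : MeasurableSet B) (hAn : A.Nonempty)
    (hBn : B.Nonempty) (hC : ∀ x ∈ A, ∀ y ∈ B, a * x + b * y ∈ C) :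
    ENNReal.ofReal a * volume A + ENNReal.ofReal b * volume B ≤ volume C := by
  have hA' := Measure.addHaar_smul (volume : Measure ℝ) a A
  have hB' := Measure.addHaar_smul (volume : Measure ℝ) b B
  simp only [Module.finrank_self, pow_one, abs_of_pos ha, abs_of_pos hb] at hA' hB'
  rw [← hA', ← hB']
  refine bmOneDim (hA.const_smul_of_ne_zero ha.ne') (hB.const_smul_of_ne_zero hb.ne')
    (hAn.image _) (hBn.image _) ?_
  rintro _ ⟨x, hx, rfl⟩ _ ⟨y, hy, rfl⟩
  exact hC x hx y hy

lemma plNormalized {f g h : ℝ → ℝ} {a b : ℝ} (ha : 0 < a) (hb : 0 < b) (hab : a + b = 1)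
    (hf : Measurable f) (hg : Measurable g) (hh : Measurable h)
    (hf0 : ∀ x, 0 ≤ f x) (hg0 : ∀ x, 0 ≤ g x) (hh0 : ∀ x, 0 ≤ h x)
    (hf1 : ∀ x, f x ≤ 1) (hg1 : ∀ x, g x ≤ 1)
    (hfs : ∀ s < 1, ∃ x, s < f x) (hgs : ∀ s < 1, ∃ x, s < g x)
    (H : ∀ x y, f x ^ a * g y ^ b ≤ h (a * x + b * y)) :
    ENNReal.ofReal a * (∫⁻ x, ENNReal.ofReal (f x))
      + ENNReal.ofReal b * (∫⁻ x, ENNReal.ofReal (g x))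
      ≤ ∫⁻ x, ENNReal.ofReal (h x) := by
  rw [lintegral_eq_lintegral_meas_lt volume (Eventually.of_forall hf0) hf.aemeasurable,
    lintegral_eq_lintegral_meas_lt volume (Eventually.of_forall hg0) hg.aemeasurable,
    lintegral_eq_lintegral_meas_lt volume (Eventually.of_forall hh0) hh.aemeasurable]
  have m1 : ∀ k : ℝ → ℝ, Measurable (fun t : ℝ => volume {x | t < k x}) := fun k =>
    Antitone.measurable (fun s t hst => measure_mono (fun x (hx : t < k x) => lt_of_le_of_lt hst hx))
  rw [← lintegral_const_mul _ (m1 f), ← lintegral_const_mul _ (m1 g),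
    ← lintegral_add_left ((m1 f).const_mul _)]
  refine setLIntegral_mono (m1 h) ?_
  intro s hs
  have hs : 0 < s := hs
  by_cases h1 : s < 1
  · refine bmOneDimScaled ha hb (measurableSet_lt measurable_const hf)
      (measurableSet_lt measurable_const hg) (hfs s h1) (hgs s h1) ?_
    intro x hx y hy
    have hx : s < f x := hx
    have hy : s < g y := hy
    refine lt_of_lt_of_le ?_ (H x y)
    calc s = s ^ a * s ^ b := by rw [← Real.rpow_add hs, hab, Real.rpow_one]
      _ < f x ^ a * g y ^ b := by
        apply mul_lt_mul'' (Real.rpow_lt_rpow hs.le hx ha) (Real.rpow_lt_rpow hs.le hy hb) <;>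
        positivity
  · have e1 : {x | s < f x} = ∅ := by
      ext x; simp; linarith [hf1 x]
    have e2 : {x | s < g x} = ∅ := by
      ext x; simp; linarith [hg1 x]
    rw [e1, e2]; simp

lemma plReal {f g h : ℝ → ℝ} {a b : ℝ} (ha : 0 < a) (hb : 0 < b) (hab : a + b = 1)
    (hf : Measurable f) (hg : Measurable g) (hh : Measurable h)
    (hf0 : ∀ x, 0 ≤ f x) (hg0 : ∀ x, 0 ≤ g x) (hh0 : ∀ x, 0 ≤ h x)
    (hfi : Integrable f) (hgi : Integrable g) (hhi : Integrable h)
    (hf1 : BddAbove (Set.range f)) (hg1 : BddAbove (Set.range g))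
    (H : ∀ x y, f x ^ a * g y ^ b ≤ h (a * x + b * y)) :
    (∫ x, f x) ^ a * (∫ x, g x) ^ b ≤ ∫ x, h x := by
  have hI : 0 ≤ ∫ x, h x := integral_nonneg hh0
  have hzero : ∀ k : ℝ → ℝ, (∀ x, 0 ≤ k x) → BddAbove (Set.range k) → ¬ (0 < ⨆ x, k x) →
      ∫ x, k x = 0 := by
    intro k hk hb hs
    have : k = fun _ => 0 := by
      funext x
      exact le_antisymm (by linarith [le_ciSup hb x]) (hk x)
    rw [this]; simp
  by_cases hF : 0 < ⨆ x, f x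
  swap
  · rw [hzero f hf0 hf1 hF, Real.zero_rpow ha.ne']; simpa using hI
  by_cases hG : 0 < ⨆ x, g x
  swap
  · rw [hzero g hg0 hg1 hG, Real.zero_rpow hb.ne']; simpa using hI
  set F := ⨆ x, f x with hFd
  set G := ⨆ x, g x with hGd
  have hs : ∀ (k : ℝ → ℝ) (M : ℝ), 0 < M → M = (⨆ x, k x) → ∀ s < 1, ∃ x, s < k x / M := by
    intro k M hM hMd s hs
    have : s * M < ⨆ x, k x := by rw [← hMd]; nlinarith
    obtain ⟨x, hx⟩ := exists_lt_of_lt_ciSup this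
    exact ⟨x, by rwa [lt_div_iff₀ hM]⟩
  have hP : 0 < F ^ a * G ^ b := by positivity
  have key := plNormalized (f := fun x => f x / F) (g := fun x => g x / G)
    (h := fun x => h x / (F ^ a * G ^ b)) ha hb hab (hf.div_const _) (hg.div_const _)
    (hh.div_const _) (fun x => div_nonneg (hf0 x) hF.le) (fun x => div_nonneg (hg0 x) hG.le)
    (fun x => div_nonneg (hh0 x) hP.le)
    (fun x => (div_le_one hF).2 (le_ciSup hf1 x)) (fun x => (div_le_one hG).2 (le_ciSup hg1 x))
    (hs f F hF hFd) (hs g G hG hGd) (by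
      intro x y
      rw [Real.div_rpow (hf0 x) hF.le, Real.div_rpow (hg0 y) hG.le, div_mul_div_comm]
      gcongr
      exact H x y)
  rw [← ofReal_integral_eq_lintegral_ofReal (hfi.div_const _)
      (Eventually.of_forall fun x => div_nonneg (hf0 x) hF.le),
    ← ofReal_integral_eq_lintegral_ofReal (hgi.div_const _)
      (Eventually.of_forall fun x => div_nonneg (hg0 x) hG.le),
    ← ofReal_integral_eq_lintegral_ofReal (hhi.div_const _)
      (Eventually.of_forall fun x => div_nonneg (hh0 x) hP.le),
    ← ENNReal.ofReal_mul ha.le, ← ENNReal.ofReal_mul hb.le,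
    integral_div, integral_div, integral_div] at key
  have i1 : 0 ≤ ∫ x, f x := integral_nonneg hf0
  have i2 : 0 ≤ ∫ x, g x := integral_nonneg hg0
  rw [← ENNReal.ofReal_add (by positivity) (by positivity),
    ENNReal.ofReal_le_ofReal_iff (by positivity)] at key
  have am := Real.geom_mean_le_arith_mean2_weighted ha.le hb.le
    (div_nonneg i1 hF.le) (div_nonneg i2 hG.le) hab
  have := am.trans key
  rw [Real.div_rpow i1 hF.le, Real.div_rpow i2 hG.le, div_mul_div_comm] at this
  exact (div_le_div_iff_of_pos_right hP).1 this

/-- Multiplicative Brunn-Minkowski inequality for the measure space `E`. -/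
def HasMBM (E : Type) [NormedAddCommGroup E] [NormedSpace ℝ E] [MeasureSpace E] : Prop :=
  ∀ (a b : ℝ), 0 < a → 0 < b → a + b = 1 → ∀ A B C : Set E, MeasurableSet A → MeasurableSet B →
    MeasurableSet C → Bornology.IsBounded A → Bornology.IsBounded B → Bornology.IsBounded C →
    (∀ x ∈ A, ∀ y ∈ B, a • x + b • y ∈ C) →
    volume.real A ^ a * volume.real B ^ b ≤ volume.real C

lemma hasMBM_real : HasMBM ℝ := by
  intro a b ha hb hab A B C hA hB hC bA bB bC h
  rcases A.eq_empty_or_nonempty with rfl | hAn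
  · simp [Real.zero_rpow ha.ne']
  rcases B.eq_empty_or_nonempty with rfl | hBn
  · simp [Real.zero_rpow hb.ne']
  have key := bmOneDimScaled ha hb hA hB hAn hBn h
  have am := Real.geom_mean_le_arith_mean2_weighted ha.le hb.le
    (measureReal_nonneg (μ := volume) (s := A)) (measureReal_nonneg (μ := volume) (s := B)) hab
  refine am.trans ?_
  have := ENNReal.toReal_mono bC.measure_lt_top.ne key
  rw [ENNReal.toReal_add (ENNReal.mul_ne_top (by simp) bA.measure_lt_top.ne)
    (ENNReal.mul_ne_top (by simp) bB.measure_lt_top.ne), ENNReal.toReal_mul, ENNReal.toReal_mul,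
    ENNReal.toReal_ofReal ha.le, ENNReal.toReal_ofReal hb.le] at this
  exact this

lemma hasMBM_prod (E : Type) [NormedAddCommGroup E] [NormedSpace ℝ E] [MeasureSpace E]
    [BorelSpace E] [SecondCountableTopology E] [ProperSpace E]
    [SigmaFinite (volume : Measure E)]
    [IsFiniteMeasureOnCompacts (volume : Measure E)] (hE : HasMBM E) : HasMBM (ℝ × E) := by
  intro a b ha hb hab A B C hA hB hC bA bB bC h
  -- slices
  have hsl : ∀ S : Set (ℝ × E), MeasurableSet S → Bornology.IsBounded S →
      (∀ x, Bornology.IsBounded (Prod.mk x ⁻¹' S)) ∧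
      Measurable (fun x => volume.real (Prod.mk x ⁻¹' S)) ∧
      Integrable (fun x => volume.real (Prod.mk x ⁻¹' S)) ∧
      BddAbove (Set.range (fun x => volume.real (Prod.mk x ⁻¹' S))) ∧
      ∫ x, volume.real (Prod.mk x ⁻¹' S) = volume.real S := by
    intro S hS bS
    have hb1 : ∀ x, Prod.mk x ⁻¹' S ⊆ Prod.snd '' S := by
      intro x y hy
      exact ⟨(x, y), hy, rfl⟩
    have hb2 : Bornology.IsBounded (Prod.snd '' S) := bS.image_snd
    have hm : Measurable (fun x => volume (Prod.mk x ⁻¹' S)) := measurable_measure_prodMk_left hS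
    have hint : ∫⁻ x, volume (Prod.mk x ⁻¹' S) = volume S := by
      rw [Measure.volume_eq_prod, Measure.prod_apply hS]
    refine ⟨fun x => hb2.subset (hb1 x), hm.ennreal_toReal, ?_, ?_, ?_⟩
    · refine integrable_toReal_of_lintegral_ne_top hm.aemeasurable ?_
      rw [hint]; exact bS.measure_lt_top.ne
    · refine ⟨volume.real (Prod.snd '' S), ?_⟩
      rintro _ ⟨x, rfl⟩
      exact measureReal_mono (hb1 x) hb2.measure_lt_top.ne
    · have : ∀ x, volume (Prod.mk x ⁻¹' S) < ⊤ := fun x => (hb2.subset (hb1 x)).measure_lt_top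
      simp only [Measure.real]
      rw [integral_toReal hm.aemeasurable (Eventually.of_forall this), hint]
  obtain ⟨a1, a2, a3, a4, a5⟩ := hsl A hA bA
  obtain ⟨b1, b2, b3, b4, b5⟩ := hsl B hB bB
  obtain ⟨c1, c2, c3, c4, c5⟩ := hsl C hC bC
  rw [← a5, ← b5, ← c5]
  refine plReal ha hb hab a2 b2 c2 (fun _ => measureReal_nonneg) (fun _ => measureReal_nonneg)
    (fun _ => measureReal_nonneg) a3 b3 c3 a4 b4 ?_
  intro x y
  refine hE a b ha hb hab _ _ _ (measurable_prodMk_left hA) (measurable_prodMk_left hB)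
    (measurable_prodMk_left hC) (a1 x) (b1 y) (c1 _) ?_
  intro v hv w hw
  exact h (x, v) hv (y, w) hw

/-- coordinates -/
noncomputable def coord3 : EuclideanSpace ℝ (Fin 3) ≃ᵐ ℝ × ℝ × ℝ :=
  (MeasurableEquiv.toLp 2 (Fin 3 → ℝ)).symm.trans
    ((MeasurableEquiv.piFinSuccAbove (fun _ => ℝ) 0).trans
      (MeasurableEquiv.prodCongr (MeasurableEquiv.refl ℝ) (MeasurableEquiv.piFinTwo (fun _ => ℝ))))

lemma coord3_apply (x : EuclideanSpace ℝ (Fin 3)) : coord3 x = (x 0, x 1, x 2) := rfl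

lemma coord3_mp : MeasurePreserving coord3 volume volume := by
  refine MeasurePreserving.trans (EuclideanSpace.volume_preserving_symm_measurableEquiv_toLp _) ?_
  refine MeasurePreserving.trans (volume_preserving_piFinSuccAbove (fun _ : Fin 3 => ℝ) 0) ?_
  exact (MeasurePreserving.id volume).prod (volume_preserving_piFinTwo (fun _ : Fin 2 => ℝ))

lemma hasMBM_E3 : HasMBM (EuclideanSpace ℝ (Fin 3)) := by
  have h3 : HasMBM (ℝ × ℝ × ℝ) := hasMBM_prod _ (hasMBM_prod _ hasMBM_real)
  intro a b ha hb hab A B C hA hB hC bA bB bC h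
  have hm : ∀ S : Set (EuclideanSpace ℝ (Fin 3)), volume.real S = volume.real (coord3 '' S) := by
    intro S
    have := coord3_mp.measure_preimage_equiv (coord3 '' S)
    rw [Set.preimage_image_eq _ coord3.injective] at this
    simp only [Measure.real, this]
  have hbd : ∀ S : Set (EuclideanSpace ℝ (Fin 3)), Bornology.IsBounded S →
      Bornology.IsBounded (coord3 '' S) := by
    intro S hS
    obtain ⟨R, hR⟩ := hS.exists_norm_le
    refine isBounded_iff_forall_norm_le.2 ⟨R, ?_⟩
    rintro _ ⟨x, hx, rfl⟩
    rw [coord3_apply]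
    have : ∀ i, ‖x i‖ ≤ R := fun i => (PiLp.norm_apply_le x i).trans (hR x hx)
    simp only [Prod.norm_mk]
    exact max_le (this 0) (max_le (this 1) (this 2))
  rw [hm A, hm B, hm C]
  refine h3 a b ha hb hab _ _ _ (coord3.measurableSet_image.2 hA) (coord3.measurableSet_image.2 hB)
    (coord3.measurableSet_image.2 hC) (hbd A bA) (hbd B bB) (hbd C bC) ?_
  rintro _ ⟨x, hx, rfl⟩ _ ⟨y, hy, rfl⟩
  refine ⟨a • x + b • y, h x hx y hy, ?_⟩
  simp [coord3_apply]

/-- Brunn-Minkowski with a ball, first-order form. -/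
lemma brunnMinkowski_ball {A : Set (EuclideanSpace ℝ (Fin 3))} (hA : IsOpen A)
    (bA : Bornology.IsBounded A) {h : ℝ} (hh : 0 < h) :
    volume.real A + 3 * h * (π * 4 / 3) ^ (1 / 3 : ℝ) * volume.real A ^ (2 / 3 : ℝ)
      ≤ volume.real (Metric.thickening h A) := by
  have bT : Bornology.IsBounded (Metric.thickening h A) := bA.thickening
  have v0 : 0 ≤ volume.real A := measureReal_nonneg
  rcases v0.eq_or_lt with h0 | hpos
  · rw [← h0, Real.zero_rpow (by norm_num)]
    simp
  set α := volume.real A ^ (1 / 3 : ℝ) with hα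
  set c : ℝ := (π * 4 / 3) ^ (1 / 3 : ℝ) with hc
  have hcpos : 0 < c := by positivity
  have hαpos : 0 < α := by positivity
  have α3 : α ^ 3 = volume.real A := by
    rw [hα, ← Real.rpow_natCast, ← Real.rpow_mul v0]; norm_num
  have c3 : c ^ 3 = π * 4 / 3 := by
    rw [hc, ← Real.rpow_natCast, ← Real.rpow_mul (by positivity)]; norm_num
  have α2 : volume.real A ^ (2 / 3 : ℝ) = α ^ 2 := by
    rw [hα, ← Real.rpow_natCast, ← Real.rpow_mul v0]; norm_num
  set β := h * c with hβ
  have hβpos : 0 < β := by positivity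
  set s := α + β with hs
  have hspos : 0 < s := by positivity
  set a := α / s
  set b := β / s
  have ha : 0 < a := by positivity
  have hb : 0 < b := by positivity
  have hab : a + b = 1 := by
    simp only [a, b]; rw [← add_div]; exact div_self hspos.ne'
  have hsm : ∀ (r : ℝ), 0 < r → ∀ S : Set (EuclideanSpace ℝ (Fin 3)),
      volume.real (r • S) = r ^ 3 * volume.real S := by
    intro r hr S
    simp only [Measure.real, Measure.addHaar_smul, finrank_euclideanSpace, Fintype.card_fin,
      ENNReal.toReal_mul]
    rw [ENNReal.toReal_ofReal (abs_nonneg _), abs_of_pos (by positivity)]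
  have key := hasMBM_E3 a b ha hb hab (a⁻¹ • A) (b⁻¹ • Metric.ball 0 h) (Metric.thickening h A)
    (hA.measurableSet.const_smul_of_ne_zero (by positivity))
    (measurableSet_ball.const_smul_of_ne_zero (by positivity))
    Metric.isOpen_thickening.measurableSet (bA.smul₀ _) (Metric.isBounded_ball.smul₀ _) bT (by
      rintro _ ⟨x, hx, rfl⟩ _ ⟨y, hy, rfl⟩
      simp only [smul_smul, mul_inv_cancel₀ ha.ne', mul_inv_cancel₀ hb.ne', one_smul]
      rw [Metric.mem_thickening_iff]
      exact ⟨x, hx, by simpa using hy⟩)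
  have e1 : volume.real (a⁻¹ • A) = s ^ 3 := by
    rw [hsm _ (by positivity), ← α3]
    simp only [a]
    field_simp
  have e2 : volume.real (b⁻¹ • Metric.ball (0 : EuclideanSpace ℝ (Fin 3)) h) = s ^ 3 := by
    rw [hsm _ (by positivity)]
    have : volume.real (Metric.ball (0 : EuclideanSpace ℝ (Fin 3)) h) = β ^ 3 := by
      simp only [Measure.real, EuclideanSpace.volume_ball_fin_three]
      rw [ENNReal.toReal_mul, ENNReal.toReal_pow, ENNReal.toReal_ofReal hh.le,
        ENNReal.toReal_ofReal (by positivity), ← c3, hβ]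
      ring
    rw [this]
    simp only [b]
    field_simp
  rw [e1, e2, ← Real.rpow_add (by positivity), hab, Real.rpow_one] at key
  rw [α2, ← α3]
  refine le_trans ?_ key
  have : s ^ 3 - (α ^ 3 + 3 * h * c * α ^ 2) = 3 * α * β ^ 2 + β ^ 3 := by
    rw [hs, hβ]; ring
  have : 0 ≤ 3 * α * β ^ 2 + β ^ 3 := by positivity
  linarith

lemma brunnMinkowski_ball_ennreal {A : Set (EuclideanSpace ℝ (Fin 3))} (hA : IsOpen A)
    (bA : Bornology.IsBounded A) {h : ℝ} (hh : 0 < h) :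
    volume A + ENNReal.ofReal h * (ENNReal.ofReal (3 * (π * 4 / 3) ^ (1 / 3 : ℝ)) *
      volume A ^ (2 / 3 : ℝ)) ≤ volume (Metric.thickening h A) := by
  have key := brunnMinkowski_ball hA bA hh
  have fA : volume A ≠ ⊤ := bA.measure_lt_top.ne
  have fT : volume (Metric.thickening h A) ≠ ⊤ := bA.thickening.measure_lt_top.ne
  have e : volume A = ENNReal.ofReal (volume.real A) := (ENNReal.ofReal_toReal fA).symm
  have e2 : volume (Metric.thickening h A) = ENNReal.ofReal (volume.real (Metric.thickening h A)) :=
    (ENNReal.ofReal_toReal fT).symm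
  have v0 : 0 ≤ volume.real A := measureReal_nonneg
  rw [e, e2, ENNReal.ofReal_rpow_of_nonneg v0 (by norm_num), ← ENNReal.ofReal_mul (by positivity),
    ← ENNReal.ofReal_mul hh.le, ← ENNReal.ofReal_add v0 (by positivity)]
  apply ENNReal.ofReal_le_ofReal
  refine le_trans (le_of_eq ?_) key
  ring

lemma coareaBM (g : EuclideanSpace ℝ (Fin 3) → ℝ) (hg : ContDiff ℝ 1 g)
    (hc : HasCompactSupport g) :
    ∫⁻ t in Set.Ioi (0:ℝ), ENNReal.ofReal (3 * (π * 4 / 3) ^ (1 / 3 : ℝ)) *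
      volume {y | t < |g y|} ^ (2 / 3 : ℝ) ≤ ∫⁻ y, ENNReal.ofReal ‖fderiv ℝ g y‖ := by
  set K := Metric.cthickening 1 (tsupport g) with hK
  have hKc : IsCompact K := IsCompact.cthickening hc
  have hKf : volume K ≠ ⊤ := hKc.measure_lt_top.ne
  have hDc : Continuous (fderiv ℝ g) := hg.continuous_fderiv one_ne_zero
  have hgc : Continuous g := hg.continuous
  have hDu : UniformContinuous (fderiv ℝ g) :=
    (hc.fderiv ℝ).uniformContinuous_of_continuous hDc
  set L := ∫⁻ t in Set.Ioi (0:ℝ), ENNReal.ofReal (3 * (π * 4 / 3) ^ (1 / 3 : ℝ)) *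
      volume {y | t < |g y|} ^ (2 / 3 : ℝ) with hL
  have main : ∀ η : ℝ, 0 < η → L ≤ (∫⁻ y, ENNReal.ofReal ‖fderiv ℝ g y‖) +
      ENNReal.ofReal η * volume K := by
    intro η hη
    obtain ⟨d, hd, hdu⟩ := Metric.uniformContinuous_iff.1 hDu η hη
    set h := min d 1 with hh
    have hpos : 0 < h := lt_min hd one_pos
    set q : EuclideanSpace ℝ (Fin 3) → ℝ := fun y =>
      |g y| + (h * ‖fderiv ℝ g y‖ + h * η * K.indicator (fun _ => (1:ℝ)) y) with hq
    have ind0 : ∀ y, 0 ≤ K.indicator (fun _ => (1:ℝ)) y := fun y =>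
      Set.indicator_nonneg (fun _ _ => zero_le_one) y
    have q0 : ∀ y, 0 ≤ q y := by
      intro y
      have := ind0 y
      simp only [hq]
      positivity
    have indm : Measurable (K.indicator (fun _ => (1:ℝ))) :=
      measurable_const.indicator hKc.measurableSet
    have gm : Measurable (fun y => |g y|) := hgc.abs.measurable
    have Dm : Measurable (fun y => h * ‖fderiv ℝ g y‖) := (hDc.norm.measurable).const_mul h
    have qm : Measurable q := gm.add (Dm.add (indm.const_mul _))
    have mono : ∀ k : EuclideanSpace ℝ (Fin 3) → ℝ, Measurable (fun t : ℝ => volume {x | t < k x}) :=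
      fun k => Antitone.measurable
        (fun s t hst => measure_mono (fun x (hx : t < k x) => lt_of_le_of_lt hst hx))
    -- geometric inclusion
    have incl : ∀ t : ℝ, 0 < t → Metric.thickening h {y | t < |g y|} ⊆ {y | t < q y} := by
      intro t ht y hy
      obtain ⟨z, hz, hyz⟩ := Metric.mem_thickening_iff.1 hy
      have hz : t < |g z| := hz
      have hzs : z ∈ tsupport g := by
        apply subset_tsupport
        intro h0
        have h0 : g z = 0 := h0
        rw [h0, abs_zero] at hz
        linarith
      have hyK : y ∈ K := by
        apply Metric.mem_cthickening_of_dist_le y z 1 _ hzs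
        exact hyz.le.trans (min_le_right _ _)
      have mv : ‖g z - g y‖ ≤ (‖fderiv ℝ g y‖ + η) * ‖z - y‖ := by
        refine Convex.norm_image_sub_le_of_norm_fderiv_le (𝕜 := ℝ) (s := Metric.ball y h) ?_ ?_
          (convex_ball y h) (Metric.mem_ball_self hpos) ?_
        · intro x _
          exact (hg.differentiable one_ne_zero) x
        · intro x hx
          have := hdu (a := x) (b := y) (lt_of_lt_of_le hx (min_le_left _ _))
          rw [dist_eq_norm] at this
          have h2 := norm_le_norm_add_norm_sub' (fderiv ℝ g x) (fderiv ℝ g y)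
          linarith
        · rwa [Metric.mem_ball, dist_comm]
      have hzy : ‖z - y‖ ≤ h := by
        rw [← dist_eq_norm, dist_comm]; exact hyz.le
      have h3 : (‖fderiv ℝ g y‖ + η) * ‖z - y‖ ≤ (‖fderiv ℝ g y‖ + η) * h := by gcongr
      have h4 : |g z| ≤ |g y| + |g z - g y| := by
        have := abs_add_le (g y) (g z - g y)
        simpa using this
      rw [Real.norm_eq_abs] at mv
      show t < q y
      simp only [hq, Set.indicator_of_mem hyK]
      nlinarith
    have bd : ∀ t : ℝ, 0 < t → Bornology.IsBounded {y | t < |g y|} := by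
      intro t ht
      refine hc.isBounded.subset ?_
      intro z hz
      apply subset_tsupport
      intro h0
      have h0 : g z = 0 := h0
      have hz : t < |g z| := hz
      rw [h0, abs_zero] at hz
      linarith
    have step : (∫⁻ y, ENNReal.ofReal |g y|) + ENNReal.ofReal h * L ≤ ∫⁻ y, ENNReal.ofReal (q y) := by
      rw [lintegral_eq_lintegral_meas_lt volume (Eventually.of_forall q0) qm.aemeasurable,
        lintegral_eq_lintegral_meas_lt volume (Eventually.of_forall fun y => abs_nonneg (g y))
          gm.aemeasurable, hL, ← lintegral_const_mul _ (((mono _).pow_const _).const_mul _),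
          ← lintegral_add_left (mono _)]
      refine setLIntegral_mono (mono q) ?_
      intro t ht
      refine le_trans ?_ (measure_mono (incl t ht))
      exact brunnMinkowski_ball_ennreal (isOpen_lt continuous_const hgc.abs) (bd t ht) hpos
    have qint : ∫⁻ y, ENNReal.ofReal (q y) = (∫⁻ y, ENNReal.ofReal |g y|) + ENNReal.ofReal h *
        ((∫⁻ y, ENNReal.ofReal ‖fderiv ℝ g y‖) + ENNReal.ofReal η * volume K) := by
      have : ∀ y, ENNReal.ofReal (q y) = ENNReal.ofReal |g y| + (ENNReal.ofReal h *
          ENNReal.ofReal ‖fderiv ℝ g y‖ + ENNReal.ofReal h * ENNReal.ofReal η *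
            K.indicator (fun _ => 1) y) := by
        intro y
        have i0 := ind0 y
        simp only [hq]
        rw [ENNReal.ofReal_add (abs_nonneg _) (by positivity),
          ENNReal.ofReal_add (by positivity) (by positivity), ENNReal.ofReal_mul hpos.le,
          ENNReal.ofReal_mul (by positivity), ENNReal.ofReal_mul hpos.le]
        congr 3
        by_cases hy : y ∈ K <;> simp [hy]
      simp only [this]
      have m1 : Measurable (fun y => ENNReal.ofReal |g y|) := gm.ennreal_ofReal
      have m2 : Measurable (fun y => ENNReal.ofReal ‖fderiv ℝ g y‖) :=
        (hDc.norm.measurable).ennreal_ofReal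
      rw [lintegral_add_left m1, lintegral_add_left (m2.const_mul _), lintegral_const_mul _ m2,
        lintegral_const_mul _ (measurable_const.indicator hKc.measurableSet),
        lintegral_indicator hKc.measurableSet, setLIntegral_const]
      ring
    rw [qint] at step
    have fin : ∫⁻ y, ENNReal.ofReal |g y| ≠ ⊤ := by
      have := (hgc.integrable_of_hasCompactSupport (μ := volume) hc).abs
      exact (this.lintegral_lt_top).ne
    have step2 := (ENNReal.add_le_add_iff_left fin).1 step
    exact (ENNReal.mul_le_mul_iff_right (by simpa using hpos) (by simp)).1 step2
  have lim : Tendsto (fun η : ℝ => (∫⁻ y, ENNReal.ofReal ‖fderiv ℝ g y‖) +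
      ENNReal.ofReal η * volume K) (nhdsWithin 0 (Set.Ioi 0))
      (nhds ((∫⁻ y, ENNReal.ofReal ‖fderiv ℝ g y‖) + ENNReal.ofReal 0 * volume K)) := by
    refine Tendsto.mono_left ?_ nhdsWithin_le_nhds
    refine Tendsto.add tendsto_const_nhds ?_
    exact ENNReal.Tendsto.mul_const (ENNReal.continuous_ofReal.tendsto 0) (Or.inr hKf)
  have := ge_of_tendsto lim (eventually_nhdsWithin_of_forall main)
  simpa using this

lemma mollifiedEstimate (w : EuclideanSpace ℝ (Fin 3) → ℝ)
    (hwi : Integrable w) (hws : HasCompactSupport w)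
    (u : ℝ × ℝ → EuclideanSpace ℝ (Fin 3)) (hu : Continuous u)
    (N : ℝ × ℝ → EuclideanSpace ℝ (Fin 3)) (hN : Continuous N) (hNc : HasCompactSupport N)
    (H : ∀ φ : EuclideanSpace ℝ (Fin 3) → ℝ, ContDiff ℝ 1 φ → HasCompactSupport φ → ∀ v,
      ∫ y, w y * fderiv ℝ φ y v = ∫ p, φ (u p) * inner ℝ (N p) v)
    (ρ : ContDiffBump (0 : EuclideanSpace ℝ (Fin 3))) :
    ∫⁻ t in Set.Ioi (0:ℝ), ENNReal.ofReal (3 * (π * 4 / 3) ^ (1 / 3 : ℝ)) *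
      volume {y | t < |convolution (ρ.normed volume) w (ContinuousLinearMap.lsmul ℝ ℝ) volume y|}
        ^ (2 / 3 : ℝ) ≤ ∫⁻ p, ENNReal.ofReal ‖N p‖ := by
  set r := ρ.normed volume with hr
  have rc : HasCompactSupport r := ρ.hasCompactSupport_normed
  have r1 : ContDiff ℝ 1 r := ρ.contDiff_normed (n := 1)
  have r0 : ∀ x, 0 ≤ r x := fun x => ρ.nonneg_normed x
  have rcont : Continuous r := r1.continuous
  have hg : convolution r w (ContinuousLinearMap.lsmul ℝ ℝ) volume
      = convolution w r (ContinuousLinearMap.lsmul ℝ ℝ) volume := by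
    funext y
    rw [convolution_lsmul_swap, convolution_def]
    simp [mul_comm]
  rw [hg]
  set g := convolution w r (ContinuousLinearMap.lsmul ℝ ℝ) volume with hgdef
  have gc : HasCompactSupport g := hws.convolution _ rc
  have g1 : ContDiff ℝ 1 g := by
    have := rc.contDiff_convolution_right (n := 1) (ContinuousLinearMap.lsmul ℝ ℝ)
      hwi.locallyIntegrable ρ.contDiff_normed
    exact_mod_cast this
  refine (coareaBM g g1 gc).trans ?_
  have nint : ∀ y, Integrable (fun p => r (y - u p) * ‖N p‖) := by
    intro y
    refine Continuous.integrable_of_hasCompactSupport (by fun_prop) ?_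
    exact HasCompactSupport.mul_left hNc.norm
  have hD : ∀ y, ‖fderiv ℝ g y‖ ≤ ∫ p, r (y - u p) * ‖N p‖ := by
    intro y
    have hnn : 0 ≤ ∫ p, r (y - u p) * ‖N p‖ :=
      integral_nonneg fun p => mul_nonneg (r0 _) (norm_nonneg _)
    refine ContinuousLinearMap.opNorm_le_bound _ hnn ?_
    intro v
    rw [(rc.hasFDerivAt_convolution_right (ContinuousLinearMap.lsmul ℝ ℝ)
      hwi.locallyIntegrable r1 y).fderiv, convolution_precompR_apply _ hwi.locallyIntegrable
      (rc.fderiv ℝ) (r1.continuous_fderiv one_ne_zero), convolution_def]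
    have hφ1 : ContDiff ℝ 1 (fun z => r (y - z)) := r1.comp (contDiff_const.sub contDiff_id)
    have hφc : HasCompactSupport (fun z => r (y - z)) :=
      rc.comp_homeomorph (Homeomorph.subLeft y)
    have hφd : ∀ z, fderiv ℝ (fun z => r (y - z)) z v = - fderiv ℝ r (y - z) v := by
      intro z
      have h1 : HasFDerivAt (fun z => y - z)
          (-(ContinuousLinearMap.id ℝ (EuclideanSpace ℝ (Fin 3)))) z :=
        (hasFDerivAt_id z).const_sub y
      have h2 := ((r1.differentiable one_ne_zero) (y - z)).hasFDerivAt.comp z h1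
      have h3 : fderiv ℝ (fun z => r (y - z)) z = _ := h2.fderiv
      rw [h3]; simp
    have hH := H _ hφ1 hφc v
    simp only [hφd, mul_neg, integral_neg] at hH
    have e : ∫ t, (ContinuousLinearMap.lsmul ℝ ℝ) (w t) ((fderiv ℝ r (y - t)) v)
        = - ∫ p, r (y - u p) * inner ℝ (N p) v := by
      rw [← hH]; simp
    rw [e, norm_neg, ← integral_mul_const]
    refine (norm_integral_le_integral_norm _).trans ?_
    refine integral_mono_of_nonneg (Eventually.of_forall fun _ => norm_nonneg _)
      ((nint y).mul_const _) (Eventually.of_forall fun p => ?_)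
    show ‖r (y - u p) * inner ℝ (N p) v‖ ≤ r (y - u p) * ‖N p‖ * ‖v‖
    rw [norm_mul, Real.norm_of_nonneg (r0 _), mul_assoc]
    exact mul_le_mul_of_nonneg_left (norm_inner_le_norm _ _) (r0 _)
  calc ∫⁻ y, ENNReal.ofReal ‖fderiv ℝ g y‖
      ≤ ∫⁻ y, ∫⁻ p, ENNReal.ofReal (r (y - u p) * ‖N p‖) := by
        refine lintegral_mono fun y => ?_
        refine (ENNReal.ofReal_le_ofReal (hD y)).trans (le_of_eq ?_)
        exact ofReal_integral_eq_lintegral_ofReal (nint y)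
          (Eventually.of_forall fun p => mul_nonneg (r0 _) (norm_nonneg _))
    _ = ∫⁻ p, ∫⁻ y, ENNReal.ofReal (r (y - u p) * ‖N p‖) := by
        apply lintegral_lintegral_swap
        apply Measurable.aemeasurable
        apply Measurable.ennreal_ofReal
        apply Continuous.measurable
        fun_prop
    _ = ∫⁻ p, ENNReal.ofReal ‖N p‖ := by
        refine lintegral_congr fun p => ?_
        have : ∀ y, ENNReal.ofReal (r (y - u p) * ‖N p‖)
            = ENNReal.ofReal (r (y - u p)) * ENNReal.ofReal ‖N p‖ :=
          fun y => ENNReal.ofReal_mul (r0 _)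
        simp only [this]
        rw [lintegral_mul_const _ (Continuous.measurable (by fun_prop)).ennreal_ofReal,
          lintegral_sub_right_eq_self (fun y => ENNReal.ofReal (r y)),
          ← ofReal_integral_eq_lintegral_ofReal (rcont.integrable_of_hasCompactSupport rc)
            (Eventually.of_forall r0), hr, ρ.integral_normed]
        simp

lemma isoAbstract (w : EuclideanSpace ℝ (Fin 3) → ℝ) (hwm : Measurable w)
    (hwZ : ∀ y, w y = 0 ∨ 1 ≤ |w y|)
    (hwi : Integrable w) (hws : HasCompactSupport w)
    (u : ℝ × ℝ → EuclideanSpace ℝ (Fin 3)) (hu : Continuous u)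
    (N : ℝ × ℝ → EuclideanSpace ℝ (Fin 3)) (hN : Continuous N) (hNc : HasCompactSupport N)
    (H : ∀ φ : EuclideanSpace ℝ (Fin 3) → ℝ, ContDiff ℝ 1 φ → HasCompactSupport φ → ∀ v,
      ∫ y, w y * fderiv ℝ φ y v = ∫ p, φ (u p) * inner ℝ (N p) v) :
    36 * π * (∫ y, |w y|) ^ 2 ≤ (∫ p, ‖N p‖) ^ 3 := by
  set c : ℝ := 3 * (π * 4 / 3) ^ (1 / 3 : ℝ) with hc
  have hcpos : 0 < c := by positivity
  have c3 : c ^ 3 = 36 * π := by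
    rw [hc, mul_pow, ← Real.rpow_natCast ((π * 4 / 3) ^ (1 / 3 : ℝ)), ← Real.rpow_mul (by positivity)]
    norm_num; ring
  let φ : ℕ → ContDiffBump (0 : EuclideanSpace ℝ (Fin 3)) := fun n =>
    { rIn := 1 / ((n:ℝ) + 1)
      rOut := 2 * (1 / ((n:ℝ) + 1))
      rIn_pos := by positivity
      rIn_lt_rOut := by
        have : 0 < 1 / ((n:ℝ) + 1) := by positivity
        linarith }
  set g : ℕ → EuclideanSpace ℝ (Fin 3) → ℝ := fun n =>
    convolution ((φ n).normed volume) w (ContinuousLinearMap.lsmul ℝ ℝ) volume with hg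
  have hlim : ∀ᵐ y, Tendsto (fun n => g n y) atTop (nhds (w y)) := by
    refine ContDiffBump.ae_convolution_tendsto_right_of_locallyIntegrable (K := 2) ?_ ?_
      hwi.locallyIntegrable
    · have := (tendsto_one_div_add_atTop_nhds_zero_nat (𝕜 := ℝ)).const_mul 2
      rw [mul_zero] at this
      exact this
    · exact Eventually.of_forall fun n => le_rfl
  have gm : ∀ n, Measurable (g n) := by
    intro n
    apply Continuous.measurable
    have := ((φ n).hasCompactSupport_normed (μ := volume)).contDiff_convolution_left (n := 0)
      (ContinuousLinearMap.lsmul ℝ ℝ) (φ n).contDiff_normed hwi.locallyIntegrable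
    exact this.continuous
  have mono : ∀ k : EuclideanSpace ℝ (Fin 3) → ℝ, Measurable (fun t : ℝ => volume {x | t < k x}) :=
    fun k => Antitone.measurable
      (fun s t hst => measure_mono (fun x (hx : t < k x) => lt_of_le_of_lt hst hx))
  set m : ℝ → ENNReal := fun t => volume {y | t < |w y|} with hm
  have fatou1 : ∀ t, m t ≤ liminf (fun n => volume {y | t < |g n y|}) atTop := by
    intro t
    have ms : ∀ n, MeasurableSet {y | t < |g n y|} := fun n =>
      measurableSet_lt measurable_const (continuous_abs.measurable.comp (gm n))
    have e : ∀ n, volume {y | t < |g n y|} = ∫⁻ y, {y | t < |g n y|}.indicator 1 y := fun n =>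
      (lintegral_indicator_one (ms n)).symm
    simp only [e]
    refine le_trans ?_ (lintegral_liminf_le fun n => measurable_one.indicator (ms n))
    have ms' : MeasurableSet {y | t < |w y|} :=
      measurableSet_lt measurable_const (continuous_abs.measurable.comp hwm)
    simp only [hm]
    rw [← lintegral_indicator_one ms']
    refine lintegral_mono_ae ?_
    filter_upwards [hlim] with y hy
    by_cases hty : t < |w y|
    · have ev : ∀ᶠ n in atTop, t < |g n y| := (hy.abs).eventually (lt_mem_nhds hty)
      refine le_liminf_of_le (by isBoundedDefault) ?_
      filter_upwards [ev] with n hn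
      simp [hty, hn]
    · simp [hty]
  have bound : ∫⁻ t in Set.Ioi (0:ℝ), ENNReal.ofReal c * m t ^ (2 / 3 : ℝ)
      ≤ ∫⁻ p, ENNReal.ofReal ‖N p‖ := by
    calc ∫⁻ t in Set.Ioi (0:ℝ), ENNReal.ofReal c * m t ^ (2 / 3 : ℝ)
        ≤ ∫⁻ t in Set.Ioi (0:ℝ), liminf (fun n => ENNReal.ofReal c *
            volume {y | t < |g n y|} ^ (2 / 3 : ℝ)) atTop := by
          refine lintegral_mono fun t => ?_
          have h1 : Monotone (fun x : ENNReal => ENNReal.ofReal c * x ^ (2 / 3 : ℝ)) := by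
            intro x y hxy
            dsimp only
            gcongr
          have h2 : Continuous (fun x : ENNReal => ENNReal.ofReal c * x ^ (2 / 3 : ℝ)) :=
            (ENNReal.continuous_const_mul (by simp)).comp ENNReal.continuous_rpow_const
          have := h1.map_liminf_of_continuousAt (F := atTop)
            (fun n => volume {y | t < |g n y|}) h2.continuousAt
          exact (h1 (fatou1 t)).trans (le_of_eq this)
      _ ≤ liminf (fun n => ∫⁻ t in Set.Ioi (0:ℝ), ENNReal.ofReal c *
            volume {y | t < |g n y|} ^ (2 / 3 : ℝ)) atTop :=
          lintegral_liminf_le fun n => ((mono _).pow_const _).const_mul _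
      _ ≤ ∫⁻ p, ENNReal.ofReal ‖N p‖ := by
          refine liminf_le_of_le (by isBoundedDefault) ?_
          intro b hb
          obtain ⟨n, hn⟩ := hb.exists
          exact hn.trans (mollifiedEstimate w hwi hws u hu N hN hNc H (φ n))
  set M := ∫⁻ y, ENNReal.ofReal |w y| with hM
  have Mm : M = ∫⁻ t in Set.Ioi (0:ℝ), m t :=
    lintegral_eq_lintegral_meas_lt volume (Eventually.of_forall fun y => abs_nonneg (w y))
          hwm.abs.aemeasurable
  have mM : ∀ t, 0 < t → m t ≤ M := by
    intro t ht
    have h1 := mul_meas_ge_le_lintegral (μ := volume) (hwm.abs.ennreal_ofReal) 1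
    rw [one_mul] at h1
    refine le_trans (measure_mono ?_) h1
    intro y hy
    have hy : t < |w y| := hy
    rcases hwZ y with h0 | h0
    · rw [h0, abs_zero] at hy; linarith
    · show 1 ≤ ENNReal.ofReal |w y|
      rw [← ENNReal.ofReal_one]
      exact ENNReal.ofReal_le_ofReal h0
  have hMr : M = ENNReal.ofReal (∫ y, |w y|) :=
    (ofReal_integral_eq_lintegral_ofReal hwi.abs (Eventually.of_forall fun y => abs_nonneg (w y))).symm
  have hNi : Integrable (fun p => ‖N p‖) := (hN.integrable_of_hasCompactSupport hNc).norm
  have hAr : ∫⁻ p, ENNReal.ofReal ‖N p‖ = ENNReal.ofReal (∫ p, ‖N p‖) :=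
    (ofReal_integral_eq_lintegral_ofReal hNi (Eventually.of_forall fun y => norm_nonneg (N y))).symm
  have fin : ENNReal.ofReal c * M ≤ M ^ (1 / 3 : ℝ) * ∫⁻ p, ENNReal.ofReal ‖N p‖ := by
    calc ENNReal.ofReal c * M = ∫⁻ t in Set.Ioi (0:ℝ), ENNReal.ofReal c * m t := by
          rw [lintegral_const_mul _ (mono _), ← Mm]
      _ ≤ ∫⁻ t in Set.Ioi (0:ℝ), M ^ (1 / 3 : ℝ) * (ENNReal.ofReal c * m t ^ (2 / 3 : ℝ)) := by
          refine setLIntegral_mono ((((mono _).pow_const _).const_mul _).const_mul _) ?_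
          intro t ht
          have e : m t = m t ^ (1 / 3 : ℝ) * m t ^ (2 / 3 : ℝ) := by
            rw [← ENNReal.rpow_add_of_nonneg _ _ (by norm_num) (by norm_num)]; norm_num
          calc ENNReal.ofReal c * m t
              = ENNReal.ofReal c * (m t ^ (1 / 3 : ℝ) * m t ^ (2 / 3 : ℝ)) := by rw [← e]
            _ ≤ ENNReal.ofReal c * (M ^ (1 / 3 : ℝ) * m t ^ (2 / 3 : ℝ)) := by
                gcongr
                exact mM t ht
            _ = _ := by ring
      _ = M ^ (1 / 3 : ℝ) * ∫⁻ t in Set.Ioi (0:ℝ), (ENNReal.ofReal c * m t ^ (2 / 3 : ℝ)) := by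
          rw [lintegral_const_mul _ (((mono _).pow_const _).const_mul _)]
      _ ≤ _ := by gcongr
  set I := ∫ y, |w y| with hI
  set Ar := ∫ p, ‖N p‖ with hAr'
  have I0 : 0 ≤ I := integral_nonneg fun y => abs_nonneg _
  have A0 : 0 ≤ Ar := integral_nonneg fun y => norm_nonneg _
  rw [hMr, hAr, ENNReal.ofReal_rpow_of_nonneg I0 (by norm_num), ← ENNReal.ofReal_mul hcpos.le,
    ← ENNReal.ofReal_mul (by positivity), ENNReal.ofReal_le_ofReal_iff (by positivity)] at fin
  rcases I0.eq_or_lt with h0 | hpos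
  · rw [← h0]; simp; positivity
  have cube := pow_le_pow_left₀ (by positivity) fin 3
  have i3 : (I ^ (1 / 3 : ℝ)) ^ 3 = I := by
    rw [← Real.rpow_natCast, ← Real.rpow_mul I0]; norm_num
  rw [mul_pow c, mul_pow _ Ar, i3, c3] at cube
  have : I * (36 * π * I ^ 2) ≤ I * Ar ^ 3 := by
    calc I * (36 * π * I ^ 2) = 36 * π * I ^ 3 := by ring
      _ ≤ _ := cube
  exact le_of_mul_le_mul_left this hpos

lemma integral_fderiv_zero {F : ℝ × ℝ → ℝ} (hF : ContDiff ℝ 1 F) (hc : HasCompactSupport F)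
    (v : ℝ × ℝ) : ∫ p, fderiv ℝ F p v = 0 := by
  have hcd : Continuous (fun p => fderiv ℝ F p v) :=
    (hF.continuous_fderiv one_ne_zero).clm_apply continuous_const
  have hcs : HasCompactSupport (fun p => fderiv ℝ F p v) := hc.fderiv_apply ℝ v
  have := integral_mul_fderiv_eq_neg_fderiv_mul_of_integrable (𝕜 := ℝ) (μ := volume)
    (f := fun _ : ℝ × ℝ => (1:ℝ)) (g := F) (v := v) (by simp)
    (by simpa using hcd.integrable_of_hasCompactSupport hcs)
    (by simpa using hF.continuous.integrable_of_hasCompactSupport hc)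
    (fun _ _ => differentiableAt_const _) (fun x _ => hF.differentiable one_ne_zero x)
  simpa using this

lemma integrableOn_slab {G : ℝ × (ℝ × ℝ) → ℝ} (hG : Continuous G) {K : Set (ℝ × ℝ)}
    (hK : IsCompact K) (h0 : ∀ t p, p ∉ K → G (t, p) = 0) :
    IntegrableOn G (Set.Ioc (0:ℝ) 1 ×ˢ Set.univ) := by
  have h1 : IntegrableOn G (Set.Icc (0:ℝ) 1 ×ˢ K) :=
    hG.continuousOn.integrableOn_compact (isCompact_Icc.prod hK)
  refine h1.of_forall_sdiff_eq_zero (measurableSet_Ioc.prod MeasurableSet.univ) ?_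
  rintro ⟨t, p⟩ ⟨⟨ht, -⟩, hn⟩
  apply h0
  intro hp
  exact hn ⟨⟨ht.1.le, ht.2⟩, hp⟩

lemma swap_slab {G : ℝ × (ℝ × ℝ) → ℝ} (hG : Continuous G) {K : Set (ℝ × ℝ)}
    (hK : IsCompact K) (h0 : ∀ t p, p ∉ K → G (t, p) = 0) :
    ∫ p, ∫ t in (0:ℝ)..1, G (t, p) = ∫ t in (0:ℝ)..1, ∫ p, G (t, p) := by
  simp only [intervalIntegral.integral_of_le zero_le_one]
  rw [← integral_integral_swap]
  have := integrableOn_slab hG hK h0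
  rw [IntegrableOn, Measure.volume_eq_prod, ← Measure.prod_restrict, Measure.restrict_univ] at this
  exact this

section stokes
variable {u : ℝ × ℝ → Fin 3 → ℝ}

lemma contDiff_pX (hu : ContDiff ℝ 2 u) : ContDiff ℝ 1 (pderivX u) :=
  (hu.fderiv_right (m := 1) (by norm_num)).clm_apply contDiff_const

lemma contDiff_pY (hu : ContDiff ℝ 2 u) : ContDiff ℝ 1 (pderivY u) :=
  (hu.fderiv_right (m := 1) (by norm_num)).clm_apply contDiff_const

lemma mixed (hu : ContDiff ℝ 2 u) (p : ℝ × ℝ) :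
    fderiv ℝ (pderivX u) p (0, 1) = fderiv ℝ (pderivY u) p (1, 0) := by
  have hd : DifferentiableAt ℝ (fderiv ℝ u) p :=
    ((hu.fderiv_right (m := 1) (by norm_num)).differentiable one_ne_zero) p
  have h1 : fderiv ℝ (pderivX u) p (0, 1) = fderiv ℝ (fderiv ℝ u) p (0, 1) (1, 0) := by
    have := (hd.hasFDerivAt.clm_apply (hasFDerivAt_const ((1:ℝ), (0:ℝ)) p)).fderiv
    have h2 : fderiv ℝ (pderivX u) p = _ := this
    rw [h2]; simp
  have h1' : fderiv ℝ (pderivY u) p (1, 0) = fderiv ℝ (fderiv ℝ u) p (1, 0) (0, 1) := by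
    have := (hd.hasFDerivAt.clm_apply (hasFDerivAt_const ((0:ℝ), (1:ℝ)) p)).fderiv
    have h2 : fderiv ℝ (pderivY u) p = _ := this
    rw [h2]; simp
  rw [h1, h1']
  have := (hu.contDiffAt (x := p)).isSymmSndFDerivAt (by simp)
  exact this _ _

lemma stokes_t (hu : ContDiff ℝ 2 u) (hc : HasCompactSupport u) {φ : (Fin 3 → ℝ) → ℝ}
    (hφ : ContDiff ℝ 1 φ) (t : ℝ) (j k : Fin 3) :
    ∫ p, (t * fderiv ℝ φ (t • u p) (pderivY u p) * (u p j * pderivX u p k - u p k * pderivX u p j)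
      - t * fderiv ℝ φ (t • u p) (pderivX u p) * (u p j * pderivY u p k - u p k * pderivY u p j)
      - 2 * φ (t • u p) * (pderivX u p j * pderivY u p k - pderivX u p k * pderivY u p j)) = 0 := by
  have hX := contDiff_pX hu
  have hY := contDiff_pY hu
  have hu1 : ContDiff ℝ 1 u := hu.of_le (by norm_num)
  have cj : ∀ (f : ℝ × ℝ → Fin 3 → ℝ), ContDiff ℝ 1 f → ∀ l, ContDiff ℝ 1 (fun p => f p l) :=
    fun f hf l => contDiff_pi.1 hf l
  have hφt : ContDiff ℝ 1 (fun p => φ (t • u p)) := hφ.comp (hu1.const_smul t)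
  set F1 : ℝ × ℝ → ℝ := fun p => φ (t • u p) * (u p j * pderivX u p k - u p k * pderivX u p j)
  set F2 : ℝ × ℝ → ℝ := fun p => φ (t • u p) * (u p j * pderivY u p k - u p k * pderivY u p j)
  have c1 : ContDiff ℝ 1 F1 := hφt.mul (((cj _ hu1 j).mul (cj _ hX k)).sub
    ((cj _ hu1 k).mul (cj _ hX j)))
  have c2 : ContDiff ℝ 1 F2 := hφt.mul (((cj _ hu1 j).mul (cj _ hY k)).sub
    ((cj _ hu1 k).mul (cj _ hY j)))
  have s1 : HasCompactSupport F1 := hc.mono (fun p hp h0 => hp (by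
    have h0 : u p = 0 := h0
    simp [F1, h0]))
  have s2 : HasCompactSupport F2 := hc.mono (fun p hp h0 => hp (by
    have h0 : u p = 0 := h0
    simp [F2, h0]))
  have i1 := integral_fderiv_zero c1 s1 (0, 1)
  have i2 := integral_fderiv_zero c2 s2 (1, 0)
  have n1 : Integrable (fun p => fderiv ℝ F1 p (0, 1)) :=
    ((c1.continuous_fderiv one_ne_zero).clm_apply continuous_const).integrable_of_hasCompactSupport
      (s1.fderiv_apply ℝ _)
  have n2 : Integrable (fun p => fderiv ℝ F2 p (1, 0)) :=
    ((c2.continuous_fderiv one_ne_zero).clm_apply continuous_const).integrable_of_hasCompactSupport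
      (s2.fderiv_apply ℝ _)
  have i3 := integral_sub n1 n2
  rw [i1, i2, sub_zero] at i3
  rw [← i3]
  refine integral_congr_ae (Eventually.of_forall fun p => ?_)
  have du : HasFDerivAt u (fderiv ℝ u p) p := (hu1.differentiable one_ne_zero p).hasFDerivAt
  have dX : HasFDerivAt (pderivX u) (fderiv ℝ (pderivX u) p) p :=
    (hX.differentiable one_ne_zero p).hasFDerivAt
  have dY : HasFDerivAt (pderivY u) (fderiv ℝ (pderivY u) p) p :=
    (hY.differentiable one_ne_zero p).hasFDerivAt
  have comp : ∀ (f : ℝ × ℝ → Fin 3 → ℝ) (f' : ℝ × ℝ →L[ℝ] Fin 3 → ℝ), HasFDerivAt f f' p → ∀ l,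
      HasFDerivAt (fun p => f p l) ((ContinuousLinearMap.proj l).comp f') p :=
    fun f f' hf l => hasFDerivAt_pi'.1 hf l
  have dφ : HasFDerivAt (fun p => φ (t • u p))
      ((fderiv ℝ φ (t • u p)).comp (t • fderiv ℝ u p)) p :=
    ((hφ.differentiable one_ne_zero (t • u p)).hasFDerivAt).comp p (du.const_smul t)
  have d1 : HasFDerivAt F1 _ p := dφ.mul ((((comp _ _ du j).mul (comp _ _ dX k))).sub
    ((comp _ _ du k).mul (comp _ _ dX j)))
  have d2 : HasFDerivAt F2 _ p := dφ.mul ((((comp _ _ du j).mul (comp _ _ dY k))).sub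
    ((comp _ _ du k).mul (comp _ _ dY j)))
  have mx := mixed hu p
  have e1 : fderiv ℝ u p (1, 0) = pderivX u p := rfl
  have e2 : fderiv ℝ u p (0, 1) = pderivY u p := rfl
  show _ = fderiv ℝ F1 p (0, 1) - fderiv ℝ F2 p (1, 0)
  rw [d1.fderiv, d2.fderiv]
  simp only [ContinuousLinearMap.add_apply, ContinuousLinearMap.sub_apply,
    ContinuousLinearMap.smul_apply, ContinuousLinearMap.comp_apply, ContinuousLinearMap.proj_apply,
    smul_eq_mul, e1, e2, mx, map_smul]
  ring

lemma cross_lin (L : (Fin 3 → ℝ) →L[ℝ] ℝ) (v : Fin 3 → ℝ) :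
    L v = L (Pi.single 0 1) * v 0 + L (Pi.single 1 1) * v 1 + L (Pi.single 2 1) * v 2 := by
  have h : v = v 0 • Pi.single 0 1 + v 1 • Pi.single 1 1 + v 2 • Pi.single 2 1 := by
    ext i; fin_cases i <;> simp
  conv_lhs => rw [h, map_add, map_add, map_smul, map_smul, map_smul]
  simp only [smul_eq_mul]
  ring

lemma support_cross {p : ℝ × ℝ} (hp : p ∉ tsupport u) : u p = 0 ∧ pderivX u p = 0 ∧ pderivY u p = 0 := by
  have h1 : fderiv ℝ u p = 0 := by
    by_contra h
    exact hp (support_fderiv_subset ℝ h)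
  refine ⟨image_eq_zero_of_notMem_tsupport hp, ?_, ?_⟩
  · simp [pderivX, h1]
  · simp [pderivY, h1]

lemma stokes_t_vec (hu : ContDiff ℝ 2 u) (hc : HasCompactSupport u) {φ : (Fin 3 → ℝ) → ℝ}
    (hφ : ContDiff ℝ 1 φ) (t : ℝ) (i : Fin 3) :
    ∫ p, (fderiv ℝ φ (t • u p) (u p) * t ^ 2 + φ (t • u p) * (2 * t)) *
      crossProduct (pderivX u p) (pderivY u p) i
    = ∫ p, fderiv ℝ φ (t • u p) (Pi.single i 1) *
      (t ^ 2 * dot3 (u p) (crossProduct (pderivX u p) (pderivY u p))) := by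
  have hX := (contDiff_pX hu).continuous
  have hY := (contDiff_pY hu).continuous
  have hu0 := hu.continuous
  have hφ0 := hφ.continuous
  have hφ1 := hφ.continuous_fderiv one_ne_zero
  have hcr : Continuous (fun p => crossProduct (pderivX u p) (pderivY u p)) := by
    simp only [cross_apply]
    fun_prop
  have hcrs : HasCompactSupport (fun p => crossProduct (pderivX u p) (pderivY u p)) :=
    HasCompactSupport.intro hc (fun p hp => by
      obtain ⟨_, h2, h3⟩ := support_cross hp
      simp [h2])
  have n1 : Integrable (fun p => (fderiv ℝ φ (t • u p) (u p) * t ^ 2 + φ (t • u p) * (2 * t)) *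
      crossProduct (pderivX u p) (pderivY u p) i) := by
    refine Continuous.integrable_of_hasCompactSupport (by fun_prop) ?_
    refine HasCompactSupport.intro hc (fun p hp => by
      obtain ⟨_, h2, h3⟩ := support_cross hp
      simp [h2])
  have n2 : Integrable (fun p => fderiv ℝ φ (t • u p) (Pi.single i 1) *
      (t ^ 2 * dot3 (u p) (crossProduct (pderivX u p) (pderivY u p)))) := by
    refine Continuous.integrable_of_hasCompactSupport (by unfold dot3; fun_prop) ?_
    refine HasCompactSupport.intro hc (fun p hp => by
      obtain ⟨_, h2, h3⟩ := support_cross hp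
      simp [h2, dot3])
  have key : ∫ p, (fderiv ℝ φ (t • u p) (Pi.single i 1) *
      (t ^ 2 * dot3 (u p) (crossProduct (pderivX u p) (pderivY u p))) -
      (fderiv ℝ φ (t • u p) (u p) * t ^ 2 + φ (t • u p) * (2 * t)) *
      crossProduct (pderivX u p) (pderivY u p) i) = 0 := by
    have h := stokes_t hu hc hφ t (i + 1) (i + 2)
    have h' := congrArg (fun x => t * x) h
    simp only [← integral_const_mul, mul_zero] at h'
    rw [← h']
    refine integral_congr_ae (Eventually.of_forall fun p => ?_)
    simp only
    rw [cross_lin (fderiv ℝ φ (t • u p)) (u p), cross_lin (fderiv ℝ φ (t • u p)) (pderivX u p),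
      cross_lin (fderiv ℝ φ (t • u p)) (pderivY u p)]
    fin_cases i <;> simp [dot3, Fin.sum_univ_three, cross_apply] <;> ring
  rw [integral_sub n2 n1] at key
  linarith

lemma stokes (hu : ContDiff ℝ 2 u) (hc : HasCompactSupport u) {φ : (Fin 3 → ℝ) → ℝ}
    (hφ : ContDiff ℝ 1 φ) (i : Fin 3) :
    ∫ p, φ (u p) * crossProduct (pderivX u p) (pderivY u p) i
    = ∫ t in (0:ℝ)..1, ∫ p, fderiv ℝ φ (t • u p) (Pi.single i 1) *
      (t ^ 2 * dot3 (u p) (crossProduct (pderivX u p) (pderivY u p))) := by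
  have hX := (contDiff_pX hu).continuous
  have hY := (contDiff_pY hu).continuous
  have hu0 := hu.continuous
  have hφ0 := hφ.continuous
  have hφ1 := hφ.continuous_fderiv one_ne_zero
  have hcr : Continuous (fun p => crossProduct (pderivX u p) (pderivY u p)) := by
    simp only [cross_apply]
    fun_prop
  simp only [← stokes_t_vec hu hc hφ]
  rw [← swap_slab (G := fun q => (fderiv ℝ φ (q.1 • u q.2) (u q.2) * q.1 ^ 2 +
      φ (q.1 • u q.2) * (2 * q.1)) * crossProduct (pderivX u q.2) (pderivY u q.2) i)
      ?_ hc ?_]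
  · refine integral_congr_ae (Eventually.of_forall fun p => ?_)
    simp only
    rw [intervalIntegral.integral_mul_const]
    congr 1
    have : ∀ t ∈ Set.uIcc (0:ℝ) 1, HasDerivAt (fun t : ℝ => φ (t • u p) * t ^ 2)
        (fderiv ℝ φ (t • u p) (u p) * t ^ 2 + φ (t • u p) * (2 * t)) t := by
      intro t _
      have h1 : HasDerivAt (fun t : ℝ => t • u p) ((1:ℝ) • u p) t := (hasDerivAt_id t).smul_const (u p)
      have h2 := ((hφ.differentiable one_ne_zero (t • u p)).hasFDerivAt).comp_hasDerivAt t h1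
      have h3 := h2.mul (hasDerivAt_pow 2 t)
      have h4 : HasDerivAt (fun t : ℝ => φ (t • u p) * t ^ 2) _ t := h3
      convert h4 using 1
      simp
    rw [intervalIntegral.integral_eq_sub_of_hasDerivAt this
      (Continuous.intervalIntegrable (by fun_prop) _ _)]
    simp
  · fun_prop
  · intro t p hp
    obtain ⟨_, h2, h3⟩ := support_cross hp
    simp [h2]

end stokes

section degree
variable {E : Type*} [NormedAddCommGroup E] [NormedSpace ℝ E] [FiniteDimensional ℝ E]
  [MeasureSpace E] [BorelSpace E] [(volume : Measure E).IsAddHaarMeasure]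

lemma exists_inj_partition {U : E → E} {U' : E → E →L[ℝ] E}
    {S : Set E} (hd : ∀ x ∈ S, HasFDerivWithinAt U (U' x) S x)
    (hdet : ∀ x ∈ S, (U' x).det ≠ 0) :
    ∃ t : ℕ → Set E, Pairwise (Function.onFun Disjoint t) ∧ (∀ n, MeasurableSet (t n)) ∧
      S ⊆ ⋃ n, t n ∧ ∀ n, Set.InjOn U (S ∩ t n) := by
  classical
  rcases S.eq_empty_or_nonempty with rfl | hne
  · refine ⟨fun _ => ∅, fun _ _ _ => by simp [Function.onFun], fun _ => MeasurableSet.empty,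
      by simp, by simp⟩
  rcases subsingleton_or_nontrivial E with hs | hs
  · refine ⟨fun n => if n = 0 then Set.univ else ∅, ?_, ?_, ?_, ?_⟩
    · intro a b hab
      by_cases ha : a = 0
      · have : b ≠ 0 := fun h => hab (ha.trans h.symm)
        simp [Function.onFun, this]
      · simp [Function.onFun, ha]
    · intro n
      by_cases ha : n = 0 <;> simp [ha]
    · intro x _
      exact Set.mem_iUnion.2 ⟨0, by simp⟩
    · intro n x _ y _ _
      exact Subsingleton.elim _ _
  let r : (E →L[ℝ] E) → NNReal := fun A =>
    if h : A.det ≠ 0 then ‖((A.toContinuousLinearEquivOfDetNeZero h).symm : E →L[ℝ] E)‖₊⁻¹ / 2 else 1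
  have hpos : ∀ A (h : (A : E →L[ℝ] E).det ≠ 0),
      0 < ‖((A.toContinuousLinearEquivOfDetNeZero h).symm : E →L[ℝ] E)‖₊⁻¹ := by
    intro A h
    exact inv_pos.2 (ContinuousLinearEquiv.nnnorm_symm_pos _)
  have hr : ∀ A, r A ≠ 0 := by
    intro A
    by_cases h : A.det ≠ 0
    · simp only [r, dif_pos h]
      exact (half_pos (hpos A h)).ne'
    · simp only [r, dif_neg h]
      exact one_ne_zero
  obtain ⟨t, A, h1, h2, h3, h4, h5⟩ :=
    exists_partition_approximatesLinearOn_of_hasFDerivWithinAt U S U' hd r hr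
  refine ⟨t, h1, h2, h3, fun n => ?_⟩
  obtain ⟨y, hy, hA⟩ := h5 hne n
  have h : (A n).det ≠ 0 := by rw [hA]; exact hdet y hy
  have h6 := h4 n
  have h7 : ApproximatesLinearOn U (((A n).toContinuousLinearEquivOfDetNeZero h : E ≃L[ℝ] E) : E →L[ℝ] E)
      (S ∩ t n) (r (A n)) := h6
  refine h7.injOn (Or.inr ?_)
  simp only [r, dif_pos h]
  exact half_lt_self_iff.2 (hpos _ h)

lemma areaCount {U : E → E} {U' : E → E →L[ℝ] E}
    {S : Set E} (hS : MeasurableSet S) (hU : Measurable U)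
    (hd : ∀ x ∈ S, HasFDerivWithinAt U (U' x) S x)
    (hdet : ∀ x ∈ S, (U' x).det ≠ 0) :
    ∃ k : E → ENNReal, Measurable k ∧ (∀ y, k y = ⊤ ∨ ∃ n : ℕ, k y = n) ∧
      (∀ y ∉ U '' S, k y = 0) ∧
      volume.withDensity k =
        ((volume.restrict S).withDensity (fun x => ENNReal.ofReal |(U' x).det|)).map U := by
  classical
  obtain ⟨t, h1, h2, h3, h4⟩ := exists_inj_partition hd hdet
  have hdn : ∀ n, ∀ x ∈ S ∩ t n, HasFDerivWithinAt U (U' x) (S ∩ t n) x := fun n x hx =>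
    (hd x hx.1).mono Set.inter_subset_left
  have hm : ∀ n, MeasurableSet (U '' (S ∩ t n)) := fun n =>
    measurable_image_of_fderivWithin (hS.inter (h2 n)) (hdn n) (h4 n)
  refine ⟨fun y => ∑' n, (U '' (S ∩ t n)).indicator (fun _ => (1 : ENNReal)) y, ?_, ?_, ?_, ?_⟩
  · exact Measurable.ennreal_tsum fun n => measurable_const.indicator (hm n)
  · intro y
    have e : ∑' n, (U '' (S ∩ t n)).indicator (fun _ => (1 : ENNReal)) y
        = ∑' n : {n | y ∈ U '' (S ∩ t n)}, (1 : ENNReal) := by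
      rw [tsum_subtype {n | y ∈ U '' (S ∩ t n)} (fun _ => (1 : ENNReal))]
      rfl
    beta_reduce
    rw [e, ENNReal.tsum_set_one]
    rcases Set.finite_or_infinite {n | y ∈ U '' (S ∩ t n)} with hf | hf
    · right
      refine ⟨hf.toFinset.card, ?_⟩
      rw [hf.encard_eq_coe_toFinset_card]; rfl
    · left
      rw [hf.encard_eq]; rfl
  · intro y hy
    refine ENNReal.tsum_eq_zero.2 fun n => Set.indicator_of_notMem ?_ _
    rintro ⟨x, hx, rfl⟩
    exact hy ⟨x, hx.1, rfl⟩
  · ext B hB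
    rw [withDensity_apply _ hB, Measure.map_apply hU hB, withDensity_apply _ (hU hB),
      Measure.restrict_restrict (hU hB)]
    rw [lintegral_tsum fun n => (measurable_const.indicator (hm n)).aemeasurable]
    have e : U ⁻¹' B ∩ S = ⋃ n, (S ∩ t n) ∩ U ⁻¹' B := by
      ext x
      simp only [Set.mem_inter_iff, Set.mem_iUnion]
      constructor
      · rintro ⟨hb, hs⟩
        obtain ⟨n, hn⟩ := Set.mem_iUnion.1 (h3 hs)
        exact ⟨n, ⟨hs, hn⟩, hb⟩
      · rintro ⟨n, ⟨hs, hn⟩, hb⟩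
        exact ⟨hb, hs⟩
    rw [e, lintegral_iUnion (fun n => (hS.inter (h2 n)).inter (hU hB))]
    · refine tsum_congr fun n => ?_
      rw [lintegral_abs_det_fderiv_eq_addHaar_image volume ((hS.inter (h2 n)).inter (hU hB))
        (fun x hx => (hdn n x hx.1).mono Set.inter_subset_left)
        ((h4 n).mono Set.inter_subset_left), Set.image_inter_preimage,
        lintegral_indicator_const (hm n), Measure.restrict_apply (hm n), one_mul]
    · intro a b hab
      exact (h1 hab).mono (fun x hx => hx.1.2) (fun x hx => hx.1.2)

/-- integral version -/
lemma areaCountIntegral {U : E → E} {U' : E → E →L[ℝ] E}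
    {S : Set E} (hS : MeasurableSet S) (hU : Measurable U) (hU' : Measurable fun x => (U' x).det)
    (hd : ∀ x ∈ S, HasFDerivWithinAt U (U' x) S x)
    (hdet : ∀ x ∈ S, (U' x).det ≠ 0) (hi : IntegrableOn (fun x => (U' x).det) S) :
    ∃ k : E → ℝ, Measurable k ∧ (∀ y, ∃ n : ℕ, k y = n) ∧
      (∀ y ∉ U '' S, k y = 0) ∧
      ∀ φ : E → ℝ, Continuous φ → IntegrableOn (fun x => |(U' x).det| * φ (U x)) S →
        Integrable (fun y => k y * φ y) ∧
          ∫ y, k y * φ y = ∫ x in S, |(U' x).det| * φ (U x) := by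
  obtain ⟨k, hk, hkn, hk0, hkm⟩ := areaCount hS hU hd hdet
  have hmd : Measurable (fun x => ENNReal.ofReal |(U' x).det|) := by fun_prop
  have hfin : ∀ᵐ y, k y < ⊤ := by
    refine ae_lt_top hk ?_
    have : ∫⁻ y, k y = (volume.withDensity k) Set.univ := by
      rw [withDensity_apply _ MeasurableSet.univ, Measure.restrict_univ]
    rw [this, hkm, Measure.map_apply hU MeasurableSet.univ, Set.preimage_univ,
      withDensity_apply _ MeasurableSet.univ, Measure.restrict_univ]
    have := hi.2
    rw [HasFiniteIntegral] at this
    refine ne_of_lt (lt_of_le_of_lt (le_of_eq ?_) this)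
    refine lintegral_congr fun x => ?_
    rw [← ofReal_norm, Real.norm_eq_abs]
  refine ⟨fun y => (k y).toReal, hk.ennreal_toReal, ?_, ?_, ?_⟩
  · intro y
    rcases hkn y with h | ⟨n, h⟩
    · exact ⟨0, by simp [h]⟩
    · exact ⟨n, by simp [h]⟩
  · intro y hy
    simp [hk0 y hy]
  · intro φ hφ hI
    constructor
    · have h1 : Integrable φ (volume.withDensity k) := by
        rw [hkm, integrable_map_measure hφ.aestronglyMeasurable hU.aemeasurable,
          integrable_withDensity_iff_integrable_smul₀' hmd.aemeasurable (by simp)]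
        refine hI.congr (Eventually.of_forall fun x => ?_)
        simp
      rw [integrable_withDensity_iff_integrable_smul₀' hk.aemeasurable hfin] at h1
      exact h1
    · have h1 := integral_withDensity_eq_integral_toReal_smul hk hfin φ
      simp only [smul_eq_mul] at h1
      rw [← h1, hkm, integral_map hU.aemeasurable hφ.aestronglyMeasurable,
        integral_withDensity_eq_integral_toReal_smul hmd (by simp)]
      refine integral_congr_ae (Eventually.of_forall fun x => ?_)
      simp

/-- signed version -/
lemma signedCount {U : E → E} {U' : E → E →L[ℝ] E}
    {T : Set E} (hT : MeasurableSet T) (hU : Measurable U) (hU' : Measurable fun x => (U' x).det)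
    (hd : ∀ x, HasFDerivAt U (U' x) x) (hi : IntegrableOn (fun x => (U' x).det) T) :
    ∃ w : E → ℝ, Measurable w ∧ (∀ y, w y = 0 ∨ 1 ≤ |w y|) ∧
      (∀ y ∉ U '' (T ∩ {x | (U' x).det ≠ 0}), w y = 0) ∧
      ∀ φ : E → ℝ, Continuous φ → IntegrableOn (fun x => (U' x).det * φ (U x)) T →
        Integrable (fun y => w y * φ y) ∧
          ∫ y, w y * φ y = ∫ x in T, (U' x).det * φ (U x) := by
  have mP : MeasurableSet {x | 0 < (U' x).det} := measurableSet_lt measurable_const hU'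
  have mN : MeasurableSet {x | (U' x).det < 0} := measurableSet_lt hU' measurable_const
  obtain ⟨k, hk, hkn, hk0, hkI⟩ := areaCountIntegral (S := T ∩ {x | 0 < (U' x).det})
    (hT.inter mP) hU hU' (fun x _ => (hd x).hasFDerivWithinAt)
    (fun x hx => ne_of_gt hx.2) (hi.mono_set Set.inter_subset_left)
  obtain ⟨l, hl, hln, hl0, hlI⟩ := areaCountIntegral (S := T ∩ {x | (U' x).det < 0})
    (hT.inter mN) hU hU' (fun x _ => (hd x).hasFDerivWithinAt)
    (fun x hx => ne_of_lt hx.2) (hi.mono_set Set.inter_subset_left)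
  refine ⟨fun y => k y - l y, hk.sub hl, ?_, ?_, ?_⟩
  · intro y
    obtain ⟨a, ha⟩ := hkn y
    obtain ⟨b, hb⟩ := hln y
    simp only [ha, hb]
    by_cases h : (a : ℤ) - b = 0
    · left; exact_mod_cast h
    · right; exact_mod_cast Int.one_le_abs h
  · intro y hy
    have h1 : k y = 0 := hk0 y fun ⟨x, hx, e⟩ => hy ⟨x, ⟨hx.1, ne_of_gt hx.2⟩, e⟩
    have h2 : l y = 0 := hl0 y fun ⟨x, hx, e⟩ => hy ⟨x, ⟨hx.1, ne_of_lt hx.2⟩, e⟩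
    simp [h1, h2]
  · intro φ hφ hI
    have eP : Set.EqOn (fun x => |(U' x).det| * φ (U x)) (fun x => (U' x).det * φ (U x))
        (T ∩ {x | 0 < (U' x).det}) := by
      intro x hx
      have : 0 < (U' x).det := hx.2
      simp only [abs_of_pos this]
    have eN : Set.EqOn (fun x => |(U' x).det| * φ (U x)) (fun x => -((U' x).det * φ (U x)))
        (T ∩ {x | (U' x).det < 0}) := by
      intro x hx
      have : (U' x).det < 0 := hx.2
      simp only [abs_of_neg this, neg_mul]
    have IP := (hI.mono_set Set.inter_subset_left).congr_fun eP.symm (hT.inter mP)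
    have IN := (hI.mono_set Set.inter_subset_left).neg.congr_fun eN.symm (hT.inter mN)
    obtain ⟨k1, k2⟩ := hkI φ hφ IP
    obtain ⟨l1, l2⟩ := hlI φ hφ IN
    simp only [sub_mul]
    refine ⟨k1.sub l1, ?_⟩
    rw [integral_sub k1 l1, k2, l2, setIntegral_congr_fun (hT.inter mP) eP,
      setIntegral_congr_fun (hT.inter mN) eN, integral_neg, sub_neg_eq_add]
    have hdis : Disjoint (T ∩ {x | 0 < (U' x).det}) (T ∩ {x | (U' x).det < 0}) := by
      rw [Set.disjoint_left]
      rintro x ⟨_, h1⟩ ⟨_, h2⟩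
      have h3 : 0 < (U' x).det := h1
      have h4 : (U' x).det < 0 := h2
      exact lt_asymm h3 h4
    rw [← setIntegral_union hdis (hT.inter mN) (hI.mono_set Set.inter_subset_left)
      (hI.mono_set Set.inter_subset_left)]
    rw [← Set.inter_union_distrib_left]
    refine setIntegral_eq_of_subset_of_forall_sdiff_eq_zero hT Set.inter_subset_left ?_ |>.symm
    rintro x ⟨hx, hn⟩
    have : (U' x).det = 0 := by
      by_contra h
      rcases lt_or_gt_of_ne h with h | h
      · exact hn ⟨hx, Or.inr h⟩
      · exact hn ⟨hx, Or.inl h⟩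
    simp [this]

end degree

noncomputable def coordPi3 : (Fin 3 → ℝ) ≃ᵐ ℝ × ℝ × ℝ :=
  (MeasurableEquiv.piFinSuccAbove (fun _ => ℝ) 0).trans
      (MeasurableEquiv.prodCongr (MeasurableEquiv.refl ℝ) (MeasurableEquiv.piFinTwo (fun _ => ℝ)))

lemma coordPi3_apply (x : Fin 3 → ℝ) : coordPi3 x = (x 0, x 1, x 2) := rfl

lemma coordPi3_mp : MeasurePreserving coordPi3 volume volume := by
  refine MeasurePreserving.trans (volume_preserving_piFinSuccAbove (fun _ : Fin 3 => ℝ) 0) ?_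
  exact (MeasurePreserving.id volume).prod (volume_preserving_piFinTwo (fun _ : Fin 2 => ℝ))

section cone
variable {u : ℝ × ℝ → Fin 3 → ℝ}

/-- The projection to the last two coordinates. -/
noncomputable def projYZ : (Fin 3 → ℝ) →L[ℝ] ℝ × ℝ :=
  (ContinuousLinearMap.proj (R := ℝ) (φ := fun _ : Fin 3 => ℝ) 1).prod
    (ContinuousLinearMap.proj (R := ℝ) (φ := fun _ : Fin 3 => ℝ) 2)

lemma projYZ_apply (q : Fin 3 → ℝ) : projYZ q = (q 1, q 2) := rfl

/-- The derivative of the cone map. -/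
noncomputable def coneDeriv (u : ℝ × ℝ → Fin 3 → ℝ) (q : Fin 3 → ℝ) : (Fin 3 → ℝ) →L[ℝ] (Fin 3 → ℝ) :=
  q 0 • (fderiv ℝ u (projYZ q)).comp projYZ +
    (ContinuousLinearMap.proj (R := ℝ) (φ := fun _ : Fin 3 => ℝ) 0).smulRight (u (projYZ q))

lemma hasFDerivAt_cone (hu : ContDiff ℝ 1 u) (q : Fin 3 → ℝ) :
    HasFDerivAt (fun q : Fin 3 → ℝ => q 0 • u (projYZ q)) (coneDeriv u q) q := by
  have h1 : HasFDerivAt (fun q : Fin 3 → ℝ => q 0)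
    (ContinuousLinearMap.proj (R := ℝ) (φ := fun _ : Fin 3 => ℝ) 0) q := 
    (ContinuousLinearMap.proj (R := ℝ) (φ := fun _ : Fin 3 => ℝ) 0).hasFDerivAt
  have h2 : HasFDerivAt (fun q : Fin 3 → ℝ => u (projYZ q))
      ((fderiv ℝ u (projYZ q)).comp projYZ) q :=
    ((hu.differentiable one_ne_zero (projYZ q)).hasFDerivAt).comp q projYZ.hasFDerivAt
  exact h1.smul h2

lemma coneDeriv_det (q : Fin 3 → ℝ) : (coneDeriv u q).det = q 0 ^ 2 *
    dot3 (u (projYZ q)) (crossProduct (pderivX u (projYZ q)) (pderivY u (projYZ q))) := by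
  have e0 : coneDeriv u q (Pi.single 0 1) = u (projYZ q) := by
    have : projYZ (Pi.single 0 1) = 0 := by simp [projYZ_apply]
    simp [coneDeriv, this]
  have e1 : coneDeriv u q (Pi.single 1 1) = q 0 • pderivX u (projYZ q) := by
    have : projYZ (Pi.single 1 1) = (1, 0) := by simp [projYZ_apply]
    simp [coneDeriv, this, pderivX]
  have e2 : coneDeriv u q (Pi.single 2 1) = q 0 • pderivY u (projYZ q) := by
    have : projYZ (Pi.single 2 1) = (0, 1) := by simp [projYZ_apply]
    simp [coneDeriv, this, pderivY]
  rw [ContinuousLinearMap.det, ← LinearMap.det_toMatrix', Matrix.det_fin_three]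
  have hM : ∀ i j, LinearMap.toMatrix' (coneDeriv u q : (Fin 3 → ℝ) →ₗ[ℝ] (Fin 3 → ℝ)) i j =
      coneDeriv u q (Pi.single j 1) i := by
    intro i j
    rw [LinearMap.toMatrix'_apply]
    congr 2
  simp only [hM, e0, e1, e2, Pi.smul_apply, smul_eq_mul,
    dot3, Fin.sum_univ_three, cross_apply, Matrix.cons_val]
  ring

lemma coneDegree (hu : ContDiff ℝ 2 u) (hc : HasCompactSupport u) :
    ∃ w : (Fin 3 → ℝ) → ℝ, Measurable w ∧ (∀ y, w y = 0 ∨ 1 ≤ |w y|) ∧ HasCompactSupport w ∧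
      ∀ φ : (Fin 3 → ℝ) → ℝ, Continuous φ → Integrable (fun y => w y * φ y) ∧
        ∫ y, w y * φ y = ∫ t in (0:ℝ)..1, ∫ p, φ (t • u p) *
          (t ^ 2 * dot3 (u p) (crossProduct (pderivX u p) (pderivY u p))) := by
  have hX := (contDiff_pX hu).continuous
  have hY := (contDiff_pY hu).continuous
  have hu0 := hu.continuous
  have hcr : Continuous (fun p => crossProduct (pderivX u p) (pderivY u p)) := by
    simp only [cross_apply]
    fun_prop
  have hdc : Continuous (fun p => dot3 (u p) (crossProduct (pderivX u p) (pderivY u p))) := by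
    unfold dot3; fun_prop
  set T : Set (Fin 3 → ℝ) := coordPi3 ⁻¹' (Set.Ioc (0:ℝ) 1 ×ˢ Set.univ) with hTdef
  have hT : MeasurableSet T := coordPi3.measurable (measurableSet_Ioc.prod MeasurableSet.univ)
  have hsl : ∀ φ : (Fin 3 → ℝ) → ℝ, Continuous φ → 
      IntegrableOn (fun q : ℝ × (ℝ × ℝ) => φ (q.1 • u q.2) *
        (q.1 ^ 2 * dot3 (u q.2) (crossProduct (pderivX u q.2) (pderivY u q.2))))
        (Set.Ioc (0:ℝ) 1 ×ˢ Set.univ) := by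
    intro φ hφ
    refine integrableOn_slab (K := tsupport u)
      ((hφ.comp (continuous_fst.smul (hu0.comp continuous_snd))).mul
        ((continuous_fst.pow 2).mul (hdc.comp continuous_snd))) hc ?_
    intro t p hp
    obtain ⟨h1, h2, h3⟩ := support_cross hp
    simp [h2, dot3]
  have hpt : ∀ φ : (Fin 3 → ℝ) → ℝ,
      (fun x : Fin 3 → ℝ => (coneDeriv u x).det * φ (x 0 • u (projYZ x))) =
      (fun q : ℝ × (ℝ × ℝ) => φ (q.1 • u q.2) *
        (q.1 ^ 2 * dot3 (u q.2) (crossProduct (pderivX u q.2) (pderivY u q.2)))) ∘ coordPi3 := by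
    intro φ
    ext x
    simp only [coneDeriv_det, Function.comp, coordPi3_apply, projYZ_apply]
    ring
  have hI : ∀ φ : (Fin 3 → ℝ) → ℝ, Continuous φ → 
      IntegrableOn (fun x => (coneDeriv u x).det * φ (x 0 • u (projYZ x))) T := by
    intro φ hφ
    rw [hpt φ, hTdef, coordPi3_mp.integrableOn_comp_preimage coordPi3.measurableEmbedding]
    exact hsl φ hφ
  have hUc : Continuous (fun q : Fin 3 → ℝ => q 0 • u (projYZ q)) := by fun_prop
  have hdetc : Continuous (fun x => (coneDeriv u x).det) := by
    simp only [coneDeriv_det]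
    exact ((continuous_apply 0).pow 2).mul (hdc.comp projYZ.continuous)
  obtain ⟨w, w1, w2, w3, w4⟩ := signedCount (U := fun q : Fin 3 → ℝ => q 0 • u (projYZ q))
    (U' := coneDeriv u) hT hUc.measurable hdetc.measurable
    (hasFDerivAt_cone (hu.of_le (by norm_num)))
    (by simpa using hI (fun _ => 1) continuous_const)
  refine ⟨w, w1, w2, ?_, ?_⟩
  · have hKc : IsCompact ((fun q : ℝ × (ℝ × ℝ) => q.1 • u q.2) '' (Set.Icc (0:ℝ) 1 ×ˢ tsupport u)) :=
      (isCompact_Icc.prod hc).image (by fun_prop)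
    refine HasCompactSupport.intro hKc fun y hy => w3 y ?_
    rintro ⟨x, ⟨hx1, hx2⟩, rfl⟩
    apply hy
    refine ⟨(x 0, projYZ x), ⟨⟨hx1.1.1.le, hx1.1.2⟩, ?_⟩, rfl⟩
    by_contra hp
    obtain ⟨h1, h2, h3⟩ := support_cross hp
    apply hx2
    rw [coneDeriv_det, h1]
    simp [dot3]
  · intro φ hφ
    obtain ⟨a, b⟩ := w4 φ hφ (hI φ hφ)
    refine ⟨a, ?_⟩
    rw [b, hpt φ]
    have := coordPi3_mp.setIntegral_preimage_emb coordPi3.measurableEmbedding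
      (fun q : ℝ × (ℝ × ℝ) => φ (q.1 • u q.2) *
        (q.1 ^ 2 * dot3 (u q.2) (crossProduct (pderivX u q.2) (pderivY u q.2))))
      (Set.Ioc (0:ℝ) 1 ×ˢ Set.univ)
    rw [Function.comp_def, this, Measure.volume_eq_prod, setIntegral_prod _ (hsl φ hφ), Measure.restrict_univ,
      intervalIntegral.integral_of_le zero_le_one]

end cone

section final
variable {u : ℝ × ℝ → Fin 3 → ℝ}

lemma isoperimetric (hu : ContDiff ℝ 2 u) (hc : HasCompactSupport u) :
    4 * π * (∫ p, dot3 (u p) (crossProduct (pderivX u p) (pderivY u p))) ^ 2 ≤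
      (∫ p, ‖WithLp.toLp 2 (crossProduct (pderivX u p) (pderivY u p))‖) ^ 3 := by
  have hX := (contDiff_pX hu).continuous
  have hY := (contDiff_pY hu).continuous
  have hu0 := hu.continuous
  have hcr : Continuous (fun p => crossProduct (pderivX u p) (pderivY u p)) := by
    simp only [cross_apply]
    fun_prop
  obtain ⟨w, w1, w2, w3, w4⟩ := coneDegree hu hc
  have mp := EuclideanSpace.volume_preserving_symm_measurableEquiv_toLp (Fin 3)
  set e : EuclideanSpace ℝ (Fin 3) ≃ᵐ (Fin 3 → ℝ) := (MeasurableEquiv.toLp 2 (Fin 3 → ℝ)).symm with he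
  have hec : Continuous (e : EuclideanSpace ℝ (Fin 3) → (Fin 3 → ℝ)) :=
    PiLp.continuous_ofLp 2 (fun _ : Fin 3 => ℝ)
  let L : (Fin 3 → ℝ) →L[ℝ] EuclideanSpace ℝ (Fin 3) :=
    ((EuclideanSpace.equiv (Fin 3) ℝ).symm : (Fin 3 → ℝ) →L[ℝ] EuclideanSpace ℝ (Fin 3))
  have hLe : ∀ x, L (e x) = x := fun x => rfl
  have tr : ∀ f : EuclideanSpace ℝ (Fin 3) → ℝ, ∀ g : (Fin 3 → ℝ) → ℝ, (∀ x, f x = g (e x)) →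
      ∫ x, f x = ∫ y, g y := by
    intro f g h
    rw [← mp.integral_comp e.measurableEmbedding g]
    exact integral_congr_ae (Eventually.of_forall h)
  have hwi : Integrable w := by simpa using (w4 (fun _ => 1) continuous_const).1
  have key := isoAbstract (fun x => w (e x)) (w1.comp e.measurable) (fun y => w2 _)
    ((mp.integrable_comp_emb e.measurableEmbedding).2 hwi)
    (by
      have hK : IsCompact (L '' tsupport w) := w3.isCompact.image L.continuous
      refine HasCompactSupport.intro hK fun x hx => ?_
      by_contra h
      exact hx ⟨e x, subset_tsupport w h, rfl⟩)
    (fun p => L (u p)) (L.continuous.comp hu0)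
    (fun p => L (crossProduct (pderivX u p) (pderivY u p))) (L.continuous.comp hcr)
    (HasCompactSupport.intro hc (fun p hp => by
      obtain ⟨_, h2, h3⟩ := support_cross hp
      simp [h2]))
    (by
      intro φ hφ hφc v
      have hψ : ContDiff ℝ 1 (fun y => φ (L y)) := hφ.comp L.contDiff
      have hψd : ∀ y a, fderiv ℝ (fun y => φ (L y)) y a = fderiv ℝ φ (L y) (L a) := by
        intro y a
        have := ((hφ.differentiable one_ne_zero (L y)).hasFDerivAt.comp y L.hasFDerivAt).fderiv
        have h2 : fderiv ℝ (fun y => φ (L y)) y = _ := this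
        rw [h2]; rfl
      have hψ1 : Continuous (fderiv ℝ (fun y => φ (L y))) := hψ.continuous_fderiv one_ne_zero
      rw [tr _ (fun y => w y * fderiv ℝ (fun y => φ (L y)) y (e v)) (fun x => by rw [hψd, hLe, hLe])]
      have hs : ∀ y, w y * fderiv ℝ (fun y => φ (L y)) y (e v) =
          ∑ i, v i * (w y * fderiv ℝ (fun y => φ (L y)) y (Pi.single i 1)) := by
        intro y
        rw [cross_lin, Fin.sum_univ_three]
        show w y * (_ * v 0 + _ * v 1 + _ * v 2) = _
        ring
      have hs2 : ∀ p, φ (L (u p)) * inner ℝ (L (crossProduct (pderivX u p) (pderivY u p))) v =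
          ∑ i, v i * (φ (L (u p)) * crossProduct (pderivX u p) (pderivY u p) i) := by
        intro p
        rw [PiLp.inner_apply, Finset.mul_sum]
        refine Finset.sum_congr rfl fun i _ => ?_
        show _ * (v i * crossProduct (pderivX u p) (pderivY u p) i) = _
        ring
      simp only [hs, hs2]
      rw [integral_finsetSum, integral_finsetSum]
      · refine Finset.sum_congr rfl fun i _ => ?_
        rw [integral_const_mul, integral_const_mul,
          (w4 (fun y => fderiv ℝ (fun y => φ (L y)) y (Pi.single i 1)) (by fun_prop)).2,
          ← stokes hu hc hψ i]
      · intro i _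
        refine (Continuous.integrable_of_hasCompactSupport ?_ ?_).const_mul _
        · have := hψ.continuous.comp hu0
          exact this.mul ((continuous_apply i).comp hcr)
        · exact HasCompactSupport.intro hc (fun p hp => by
            obtain ⟨_, h2, h3⟩ := support_cross hp
            simp [h2])
      · intro i _
        exact (w4 (fun y => fderiv ℝ (fun y => φ (L y)) y (Pi.single i 1)) (by fun_prop)).1.const_mul _)
  rw [tr _ (fun y => |w y|) (fun x => rfl)] at key
  have hV : ∫ p, dot3 (u p) (crossProduct (pderivX u p) (pderivY u p)) = 3 * ∫ y, w y := by
    have := (w4 (fun _ => 1) continuous_const).2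
    simp only [mul_one, one_mul, integral_const_mul] at this
    rw [this, intervalIntegral.integral_mul_const, integral_pow]
    norm_num
    ring
  have habs : |∫ y, w y| ≤ ∫ y, |w y| := abs_integral_le_integral_abs
  have hsq : (∫ y, w y) ^ 2 ≤ (∫ y, |w y|) ^ 2 := by
    rw [← sq_abs (∫ y, w y)]
    exact pow_le_pow_left₀ (abs_nonneg _) habs 2
  calc _ = 36 * π * (∫ y, w y) ^ 2 := by rw [hV]; ring
    _ ≤ 36 * π * (∫ y, |w y|) ^ 2 := mul_le_mul_of_nonneg_left hsq (by positivity)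
    _ ≤ _ := key

lemma norm_cross_le (a b : Fin 3 → ℝ) :
    ‖WithLp.toLp 2 (crossProduct a b)‖ ≤ (dot3 a a + dot3 b b) / 2 := by
  have h0 : 0 ≤ (dot3 a a + dot3 b b) / 2 := by
    have h1 : 0 ≤ dot3 a a := Finset.sum_nonneg fun i _ => mul_self_nonneg _
    have h2 : 0 ≤ dot3 b b := Finset.sum_nonneg fun i _ => mul_self_nonneg _
    positivity
  rw [EuclideanSpace.norm_eq]
  refine Real.sqrt_le_iff.2 ⟨h0, ?_⟩
  simp only [Fin.sum_univ_three, Real.norm_eq_abs, sq_abs, dot3, cross_apply, Matrix.cons_val]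
  nlinarith [sq_nonneg (a 0 * b 0 + a 1 * b 1 + a 2 * b 2),
    sq_nonneg (a 0 * a 0 + a 1 * a 1 + a 2 * a 2 - (b 0 * b 0 + b 1 * b 1 + b 2 * b 2))]

lemma vol_sq_le (Ω : Set (ℝ × ℝ)) (hu : IsAdmissible Ω u) :
    32 * π * vol Ω u ^ 2 ≤ dirEnergy Ω u ^ 3 := by
  obtain ⟨hs, hc, hsub⟩ := hu
  have hu2 : ContDiff ℝ 2 u := by exact_mod_cast contDiff_infty.1 hs 2
  have hX := (contDiff_pX hu2).continuous
  have hY := (contDiff_pY hu2).continuous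
  have hcr : Continuous (fun p => crossProduct (pderivX u p) (pderivY u p)) := by
    simp only [cross_apply]
    fun_prop
  have h1 := isoperimetric hu2 hc
  have eV : vol Ω u = ∫ p, dot3 (u p) (crossProduct (pderivX u p) (pderivY u p)) := by
    refine setIntegral_eq_integral_of_forall_compl_eq_zero fun p hp => ?_
    obtain ⟨h1, h2, h3⟩ := support_cross (fun h => hp (hsub h))
    simp [h2, dot3]
  have eE : dirEnergy Ω u =
      ∫ p, (dot3 (pderivX u p) (pderivX u p) + dot3 (pderivY u p) (pderivY u p)) := by
    refine setIntegral_eq_integral_of_forall_compl_eq_zero fun p hp => ?_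
    obtain ⟨h1, h2, h3⟩ := support_cross (fun h => hp (hsub h))
    simp [h2, h3, dot3]
  have hle : ∫ p, ‖WithLp.toLp 2 (crossProduct (pderivX u p) (pderivY u p))‖ ≤ dirEnergy Ω u / 2 := by
    rw [eE, ← integral_div]
    refine integral_mono ?_ ?_ fun p => norm_cross_le _ _
    · refine Continuous.integrable_of_hasCompactSupport ?_ ?_
      · exact ((PiLp.continuous_toLp 2 (fun _ : Fin 3 => ℝ)).comp hcr).norm
      · exact HasCompactSupport.intro hc (fun p hp => by
            obtain ⟨_, h2, h3⟩ := support_cross hp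
            simp [h2])
    · refine Continuous.integrable_of_hasCompactSupport (by unfold dot3; fun_prop) ?_
      exact HasCompactSupport.intro hc (fun p hp => by
            obtain ⟨_, h2, h3⟩ := support_cross hp
            simp [h2, h3, dot3])
  have h0 : 0 ≤ ∫ p, ‖WithLp.toLp 2 (crossProduct (pderivX u p) (pderivY u p))‖ :=
    integral_nonneg fun _ => norm_nonneg _
  have h3 := pow_le_pow_left₀ h0 hle 3
  rw [eV]
  nlinarith

lemma Dfun_pos (Ω : Set (ℝ × ℝ)) {H : ℝ} (hH : 0 < H) {δ : ℝ} (hδ : 0 < δ)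
    (hu : IsAdmissible Ω u) (h0 : 0 < dnorm Ω u) (h1 : dnorm Ω u < rPW H δ) :
    0 < Dfun Ω H δ u := by
  have hV := vol_sq_le Ω hu
  unfold dnorm at h0 h1
  have hE : 0 < dirEnergy Ω u := Real.sqrt_pos.1 h0
  unfold rPW at h1
  unfold Dfun
  set E := dirEnergy Ω u
  set V := vol Ω u
  have h2 : E < 8 * π * δ ^ 2 / H ^ 2 := by
    have h3 := pow_lt_pow_left₀ h1 h0.le two_ne_zero
    rw [Real.sq_sqrt hE.le, div_pow, mul_pow, mul_pow, Real.sq_sqrt (by positivity)] at h3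
    calc E < _ := h3
      _ = _ := by ring
  have h3 : E * H ^ 2 < 8 * π * δ ^ 2 := (lt_div_iff₀ (by positivity)).1 h2
  have h4 : (2 * H * V) ^ 2 < (δ * E) ^ 2 := by
    have hp := Real.pi_pos
    have a : 8 * π * (2 * H * V) ^ 2 ≤ H ^ 2 * E ^ 3 := by
      nlinarith [mul_le_mul_of_nonneg_left hV (sq_nonneg H)]
    have b : H ^ 2 * E ^ 3 < 8 * π * (δ * E) ^ 2 := by
      nlinarith [mul_lt_mul_of_pos_right h3 (by positivity : 0 < E ^ 2)]
    have c := lt_of_le_of_lt a b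
    exact lt_of_mul_lt_mul_left c (by positivity)
  have h5 := abs_lt_of_sq_lt_sq h4 (by positivity)
  have := (abs_lt.1 h5).1
  linarith

end final

end helpers

/-- If `0 < ‖u‖ < r(δ)` then `D_δ(u) > 0`; in particular, if `0 < ‖u‖ < r(1)`
then `D(u) > 0`. -/
theorem positivity_in_small_ball (Ω : Set (ℝ × ℝ)) (hΩ : IsOpen Ω)
    (hΩb : Bornology.IsBounded Ω) (H : ℝ) (hH : 0 < H) (δ : ℝ) (hδ : 0 < δ)
    (u : ℝ × ℝ → Fin 3 → ℝ) (hu : IsAdmissible Ω u) :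
    (0 < dnorm Ω u → dnorm Ω u < rPW H δ → 0 < Dfun Ω H δ u) ∧
    (0 < dnorm Ω u → dnorm Ω u < rPW H 1 → 0 < Dfun Ω H 1 u) := by
  exact ⟨Dfun_pos Ω hH hδ hu, Dfun_pos Ω hH one_pos hu⟩
end

section
/- Let δ > 0 and let u be an admissible map. If D_δ(u) = 0, then either ‖u‖ ≥ r(δ) or ‖u‖ = 0. In particular, if D(u) = 0 then ‖u‖ ≥ r(1) = 2√(2π)/H or ‖u‖ = 0. -/
open MeasureTheory Real Filter

open scoped ENNReal Pointwise ContDiff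



theorem bm1_compact (K L : Set ℝ) (hK : IsCompact K) (hL : IsCompact L) (hKn : K.Nonempty)
    (hLn : L.Nonempty) (C : Set ℝ) (h : ∀ x ∈ K, ∀ y ∈ L, x + y ∈ C) :
    volume K + volume L ≤ volume C := by
  obtain ⟨a, ha, hamax⟩ := hK.exists_isGreatest hKn
  obtain ⟨b, hb, hbmin⟩ := hL.exists_isLeast hLn
  have h1 : volume ((fun x => x + b) '' K) = volume K := by
    rw [Set.image_add_right]; simp
  have h2 : volume ((fun x => a + x) '' L) = volume L := by
    rw [Set.image_add_left]; simp
  have hd : AEDisjoint volume ((fun x => x + b) '' K) ((fun x => a + x) '' L) := by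
    refine measure_mono_null (t := {a + b}) ?_ (by simp)
    rintro z ⟨⟨x, hx, rfl⟩, ⟨y, hy, hxy⟩⟩
    have h3 := hamax hx
    have h4 := hbmin hy
    simp only at hxy
    simp only [Set.mem_singleton_iff]
    linarith
  rw [← h1, ← h2, ← measure_union₀ _ hd]
  · apply measure_mono
    rintro z (⟨x, hx, rfl⟩ | ⟨y, hy, rfl⟩)
    · exact h x hx b hb
    · exact h a ha y hy
  · exact ((hL.image (by fun_prop)).measurableSet).nullMeasurableSet

theorem bm1 (A B : Set ℝ) (hA : MeasurableSet A) (hB : MeasurableSet B) (hAn : A.Nonempty)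
    (hBn : B.Nonempty) (C : Set ℝ) (h : ∀ x ∈ A, ∀ y ∈ B, x + y ∈ C) :
    volume A + volume B ≤ volume C := by
  have key : ∀ K ⊆ A, IsCompact K → ∀ L ⊆ B, IsCompact L → volume K + volume L ≤ volume C := by
    intro K hKA hK L hLB hL
    obtain ⟨a, ha⟩ := hAn
    obtain ⟨b, hb⟩ := hBn
    calc volume K + volume L ≤ volume (insert a K) + volume (insert b L) := by
          gcongr <;> exact Set.subset_insert _ _
      _ ≤ volume C := by
          refine bm1_compact _ _ (hK.insert a) (hL.insert b) ⟨a, by simp⟩ ⟨b, by simp⟩ C ?_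
          intro x hx y hy
          refine h x ?_ y ?_
          · rcases hx with rfl | hx; exacts [ha, hKA hx]
          · rcases hy with rfl | hy; exacts [hb, hLB hy]
  rw [hA.measure_eq_iSup_isCompact, hB.measure_eq_iSup_isCompact]
  simp only [iSup_and']
  have : ∀ (s : Set ℝ) , (∃ K, K ⊆ s ∧ IsCompact K) := fun s => ⟨∅, by simp, by simp⟩
  refine ENNReal.biSup_add_biSup_le' (p := fun K => K ⊆ A ∧ IsCompact K)
    (q := fun K => K ⊆ B ∧ IsCompact K) (this A) (this B) ?_
  intro K hK L hL
  exact key K hK.1 hK.2 L hL.1 hL.2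

/-- real version with sup 1 -/
theorem pl1_norm (t : ℝ) (ht0 : 0 < t) (ht1 : t < 1) (f g h : ℝ → ℝ) (hf : Measurable f)
    (hg : Measurable g) (hh : Measurable h) (hf0 : ∀ x, 0 ≤ f x) (hg0 : ∀ x, 0 ≤ g x)
    (hh0 : ∀ x, 0 ≤ h x)
    (hf1 : ∀ x, f x ≤ 1) (hg1 : ∀ x, g x ≤ 1)
    (hfs : ∀ s < 1, ∃ x, s < f x) (hgs : ∀ s < 1, ∃ x, s < g x)
    (H : ∀ x y s, 0 < s → s < f x → s < g y → s < h ((1 - t) * x + t * y)) :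
    ENNReal.ofReal (1 - t) * (∫⁻ x, ENNReal.ofReal (f x)) +
      ENNReal.ofReal t * (∫⁻ x, ENNReal.ofReal (g x)) ≤ ∫⁻ x, ENNReal.ofReal (h x) := by
  rw [lintegral_eq_lintegral_meas_lt _ (ae_of_all _ hf0) hf.aemeasurable,
    lintegral_eq_lintegral_meas_lt _ (ae_of_all _ hg0) hg.aemeasurable,
    lintegral_eq_lintegral_meas_lt _ (ae_of_all _ hh0) hh.aemeasurable]
  have m : ∀ k : ℝ → ℝ, Measurable (fun s => volume {a | s < k a}) := fun k =>
    Antitone.measurable (fun s s' hs => measure_mono (fun a ha => lt_of_le_of_lt hs ha))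
  rw [← lintegral_const_mul _ (m f), ← lintegral_const_mul _ (m g), ← lintegral_add_left ((m f).const_mul _)]
  refine setLIntegral_mono (m h) ?_
  intro s hs
  by_cases hs1 : s < 1
  · have e : ∀ (c : ℝ) (hc : 0 < c) (S : Set ℝ), ENNReal.ofReal c * volume S = volume (c • S) := by
      intro c hc S
      rw [Measure.addHaar_smul]; simp [abs_of_pos hc]
    rw [e _ (by linarith), e _ ht0]
    refine bm1 _ _ ?_ ?_ ?_ ?_ _ ?_
    · exact (measurableSet_lt measurable_const hf).const_smul₀ _
    · exact (measurableSet_lt measurable_const hg).const_smul₀ _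
    · exact Set.Nonempty.smul_set (hfs s hs1)
    · exact Set.Nonempty.smul_set (hgs s hs1)
    · rintro _ ⟨x, hx, rfl⟩ _ ⟨y, hy, rfl⟩
      exact H x y s hs hx hy
  · have e1 : {a | s < f a} = ∅ := by
      ext a; simp; linarith [hf1 a]
    have e2 : {a | s < g a} = ∅ := by
      ext a; simp; linarith [hg1 a]
    simp [e1, e2]

theorem amgm_enn (t : ℝ) (ht0 : 0 < t) (ht1 : t < 1) (X Y : ℝ≥0∞) :
    X ^ (1 - t) * Y ^ t ≤ ENNReal.ofReal (1 - t) * X + ENNReal.ofReal t * Y := by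
  have ht1' : 0 < 1 - t := by linarith
  by_cases hX : X = ⊤
  · rw [hX, ENNReal.mul_top (by simpa using ht1)]; simp
  by_cases hY : Y = ⊤
  · rw [hY, ENNReal.mul_top (by simpa using ht0)]; simp
  have h := Real.geom_mean_le_arith_mean2_weighted ht1'.le ht0.le (X.toReal_nonneg) (Y.toReal_nonneg)
    (by ring)
  rw [← ENNReal.ofReal_toReal hX, ← ENNReal.ofReal_toReal hY,
    ENNReal.ofReal_rpow_of_nonneg X.toReal_nonneg ht1'.le,
    ENNReal.ofReal_rpow_of_nonneg Y.toReal_nonneg ht0.le,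
    ← ENNReal.ofReal_mul (by positivity), ← ENNReal.ofReal_mul (by positivity),
    ← ENNReal.ofReal_mul (by positivity), ← ENNReal.ofReal_add (by positivity) (by positivity)]
  exact ENNReal.ofReal_le_ofReal h

/-- bounded version -/
theorem pl1_bdd (t : ℝ) (ht0 : 0 < t) (ht1 : t < 1) (f g h : ℝ → ℝ≥0∞) (hf : Measurable f)
    (hg : Measurable g) (hh : Measurable h)
    (M : ℝ≥0∞) (hM : M ≠ ⊤) (hfM : ∀ x, f x ≤ M) (hgM : ∀ x, g x ≤ M)
    (H : ∀ x y, f x ^ (1 - t) * g y ^ t ≤ h ((1 - t) * x + t * y)) :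
    (∫⁻ x, f x) ^ (1 - t) * (∫⁻ x, g x) ^ t ≤ ∫⁻ x, h x := by
  have ht1' : 0 < 1 - t := by linarith
  set a := ⨆ x, f x with ha
  set b := ⨆ x, g x with hb
  have haT : a ≠ ⊤ := ne_top_of_le_ne_top hM (iSup_le hfM)
  have hbT : b ≠ ⊤ := ne_top_of_le_ne_top hM (iSup_le hgM)
  have hfa : ∀ x, f x ≤ a := le_iSup f
  have hgb : ∀ x, g x ≤ b := le_iSup g
  by_cases ha0 : a = 0
  · have : ∀ x, f x = 0 := fun x => le_antisymm (ha0 ▸ hfa x) bot_le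
    simp [this, ENNReal.zero_rpow_of_pos ht1']
  by_cases hb0 : b = 0
  · have : ∀ x, g x = 0 := fun x => le_antisymm (hb0 ▸ hgb x) bot_le
    simp [this, ENNReal.zero_rpow_of_pos ht0]
  set c := a ^ (1 - t) * b ^ t with hc
  have hcT : c ≠ ⊤ := ENNReal.mul_ne_top (ENNReal.rpow_ne_top_of_nonneg ht1'.le haT)
    (ENNReal.rpow_ne_top_of_nonneg ht0.le hbT)
  have hc0 : c ≠ 0 := by
    refine mul_ne_zero ?_ ?_
    · simp [ENNReal.rpow_eq_zero_iff, ha0, haT]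
    · simp [ENNReal.rpow_eq_zero_iff, hb0, hbT]
  have hfT : ∀ x, f x / a ≤ 1 := fun x => ENNReal.div_le_of_le_mul (by simpa using hfa x)
  have hgT : ∀ x, g x / b ≤ 1 := fun x => ENNReal.div_le_of_le_mul (by simpa using hgb x)
  have key := pl1_norm t ht0 ht1 (fun x => (f x / a).toReal) (fun x => (g x / b).toReal)
    (fun x => (min (h x / c) 1).toReal)
    (hf.div_const a).ennreal_toReal (hg.div_const b).ennreal_toReal
    ((hh.div_const c).min measurable_const).ennreal_toReal
    (fun _ => ENNReal.toReal_nonneg) (fun _ => ENNReal.toReal_nonneg)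
    (fun _ => ENNReal.toReal_nonneg)
    (fun x => ENNReal.toReal_le_of_le_ofReal (by simp) (by simpa using hfT x))
    (fun x => ENNReal.toReal_le_of_le_ofReal (by simp) (by simpa using hgT x))
    ?_ ?_ ?_
  · have e1 : ∀ x, ENNReal.ofReal (f x / a).toReal = f x / a := fun x =>
      ENNReal.ofReal_toReal (ne_top_of_le_ne_top ENNReal.one_ne_top (hfT x))
    have e2 : ∀ x, ENNReal.ofReal (g x / b).toReal = g x / b := fun x =>
      ENNReal.ofReal_toReal (ne_top_of_le_ne_top ENNReal.one_ne_top (hgT x))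
    have e3 : ∀ x, ENNReal.ofReal (min (h x / c) 1).toReal ≤ h x / c := fun x => by
      rw [ENNReal.ofReal_toReal (ne_top_of_le_ne_top ENNReal.one_ne_top (min_le_right _ _))]
      exact min_le_left _ _
    simp only [e1, e2] at key
    have key2 := key.trans (lintegral_mono e3)
    simp only [div_eq_mul_inv] at key2
    rw [lintegral_mul_const _ hf, lintegral_mul_const _ hg, lintegral_mul_const _ hh] at key2
    have key3 := (amgm_enn t ht0 ht1 _ _).trans key2
    rw [ENNReal.mul_rpow_of_nonneg _ _ ht1'.le, ENNReal.mul_rpow_of_nonneg _ _ ht0.le,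
      ENNReal.inv_rpow, ENNReal.inv_rpow, mul_mul_mul_comm, ← ENNReal.mul_inv, ← hc,
      ← div_eq_mul_inv, ← div_eq_mul_inv, ENNReal.div_le_iff hc0 hcT,
      ENNReal.div_mul_cancel hc0 hcT] at key3
    · exact key3
    · left; simp [ENNReal.rpow_eq_zero_iff, ha0, haT]
    · left; exact ENNReal.rpow_ne_top_of_nonneg ht1'.le haT
  · intro s hs
    by_contra! hcon
    have : a ≤ ENNReal.ofReal s * a := by
      refine iSup_le fun x => ?_
      rw [← ENNReal.div_le_iff ha0 haT]
      rw [← ENNReal.ofReal_toReal (ne_top_of_le_ne_top ENNReal.one_ne_top (hfT x))]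
      exact ENNReal.ofReal_le_ofReal (hcon x)
    rw [← ENNReal.div_le_iff ha0 haT, ENNReal.div_self ha0 haT, ENNReal.one_le_ofReal] at this
    linarith
  · intro s hs
    by_contra! hcon
    have : b ≤ ENNReal.ofReal s * b := by
      refine iSup_le fun x => ?_
      rw [← ENNReal.div_le_iff hb0 hbT]
      rw [← ENNReal.ofReal_toReal (ne_top_of_le_ne_top ENNReal.one_ne_top (hgT x))]
      exact ENNReal.ofReal_le_ofReal (hcon x)
    rw [← ENNReal.div_le_iff hb0 hbT, ENNReal.div_self hb0 hbT, ENNReal.one_le_ofReal] at this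
    linarith
  · intro x y s hs hsf hsg
    have hfT' := ne_top_of_le_ne_top ENNReal.one_ne_top (hfT x)
    have hgT' := ne_top_of_le_ne_top ENNReal.one_ne_top (hgT y)
    rw [← ENNReal.ofReal_lt_iff_lt_toReal hs.le hfT'] at hsf
    rw [← ENNReal.ofReal_lt_iff_lt_toReal hs.le hgT'] at hsg
    rw [← ENNReal.ofReal_lt_iff_lt_toReal hs.le
      (ne_top_of_le_ne_top ENNReal.one_ne_top (min_le_right _ _))]
    refine lt_min ?_ (hsf.trans_le (hfT x))
    have h1 : (f x / a) ^ (1 - t) * (g y / b) ^ t ≤ h ((1 - t) * x + t * y) / c := by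
      rw [ENNReal.div_rpow_of_nonneg _ _ ht1'.le, ENNReal.div_rpow_of_nonneg _ _ ht0.le,
        div_eq_mul_inv, div_eq_mul_inv, mul_mul_mul_comm, ← ENNReal.mul_inv, ← hc, ← div_eq_mul_inv]
      · exact ENNReal.div_le_div_right (H x y) _
      · left; simp [ENNReal.rpow_eq_zero_iff, ha0, haT]
      · left; exact ENNReal.rpow_ne_top_of_nonneg ht1'.le haT
    refine lt_of_lt_of_le ?_ h1
    calc ENNReal.ofReal s = ENNReal.ofReal s ^ (1 - t) * ENNReal.ofReal s ^ t := by
          rw [← ENNReal.rpow_add _ _ (by simpa using hs) (by simp)]; simp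
      _ < _ := ENNReal.mul_lt_mul (ENNReal.rpow_lt_rpow hsf ht1') (ENNReal.rpow_lt_rpow hsg ht0)

/-- Prékopa–Leindler property of a measure space. -/
def PLProp (X : Type) [MeasurableSpace X] [AddCommGroup X] [Module ℝ X] (μ : Measure X) : Prop :=
  ∀ (t : ℝ), 0 < t → t < 1 → ∀ f g h : X → ℝ≥0∞, Measurable f → Measurable g → Measurable h →
    (∀ x y, f x ^ (1 - t) * g y ^ t ≤ h ((1 - t) • x + t • y)) →
    (∫⁻ x, f x ∂μ) ^ (1 - t) * (∫⁻ x, g x ∂μ) ^ t ≤ ∫⁻ x, h x ∂μ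

theorem pl_real : PLProp ℝ volume := by
  intro t ht0 ht1 f g h hf hg hh H
  have ht1' : 0 < 1 - t := by linarith
  have lim : ∀ k : ℝ → ℝ≥0∞, Measurable k →
      Tendsto (fun n : ℕ => ∫⁻ x, min (k x) n) atTop (nhds (∫⁻ x, k x)) := by
    intro k hk
    refine lintegral_tendsto_of_tendsto_of_monotone
      (fun n => (hk.min measurable_const).aemeasurable) ?_ ?_
    · refine ae_of_all _ fun x n m hnm => ?_
      exact min_le_min_left _ (by exact_mod_cast hnm)
    · refine ae_of_all _ fun x => ?_
      have := (tendsto_const_nhds (x := k x)).min ENNReal.tendsto_nat_nhds_top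
      simpa using this
  have b : ∀ n : ℕ, (∫⁻ x, min (f x) n) ^ (1 - t) * (∫⁻ x, min (g x) n) ^ t ≤ ∫⁻ x, h x := by
    intro n
    refine pl1_bdd t ht0 ht1 _ _ h (hf.min measurable_const) (hg.min measurable_const) hh n
      (by simp) (fun x => min_le_right _ _) (fun x => min_le_right _ _) ?_
    intro x y
    refine le_trans ?_ (H x y)
    gcongr <;> exact min_le_left _ _
  have b2 : ∀ m n : ℕ, (∫⁻ x, min (f x) m) ^ (1 - t) * (∫⁻ x, min (g x) n) ^ t ≤ ∫⁻ x, h x := by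
    intro m n
    refine le_trans ?_ (b (max m n))
    gcongr <;> simp
  have b3 : ∀ m : ℕ, (∫⁻ x, min (f x) m) ^ (1 - t) * (∫⁻ x, g x) ^ t ≤ ∫⁻ x, h x := by
    intro m
    by_cases hm : (∫⁻ x, min (f x) m) ^ (1 - t) = ⊤
    · by_cases hg0 : (∫⁻ x, g x) = 0
      · simp [hg0, ENNReal.zero_rpow_of_pos ht0]
      obtain ⟨n, hn⟩ := ((lim g hg).eventually_ne hg0).exists
      have := b2 m n
      rw [hm, ENNReal.top_mul (by simp [ENNReal.rpow_eq_zero_iff, hn, ht0.not_gt])] at this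
      simp [top_le_iff.1 this]
    refine le_of_tendsto (ENNReal.Tendsto.const_mul (((lim g hg).ennrpow_const t)) (Or.inr hm))
      (Eventually.of_forall fun n => b2 m n)
  by_cases hm : (∫⁻ x, g x) ^ t = ⊤
  · by_cases hf0 : (∫⁻ x, f x) = 0
    · simp [hf0, ENNReal.zero_rpow_of_pos ht1']
    obtain ⟨n, hn⟩ := ((lim f hf).eventually_ne hf0).exists
    have := b3 n
    rw [hm, ENNReal.mul_top (by simp [ENNReal.rpow_eq_zero_iff, hn, ht1'.not_gt])] at this
    simp [top_le_iff.1 this]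
  refine le_of_tendsto (ENNReal.Tendsto.mul_const (((lim f hf).ennrpow_const (1 - t))) (Or.inr hm))
      (Eventually.of_forall fun n => b3 n)

theorem pl_prod (X Y : Type) [MeasurableSpace X] [AddCommGroup X] [Module ℝ X] 
    [MeasurableSpace Y] [AddCommGroup Y] [Module ℝ Y] (μ : Measure X) (ν : Measure Y)
    [SFinite μ] [SFinite ν] (hX : PLProp X μ) (hY : PLProp Y ν) : PLProp (X × Y) (μ.prod ν) := by
  intro t ht0 ht1 f g h hf hg hh H
  rw [lintegral_prod _ hf.aemeasurable, lintegral_prod _ hg.aemeasurable,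
    lintegral_prod _ hh.aemeasurable]
  refine hX t ht0 ht1 _ _ _ hf.lintegral_prod_right' hg.lintegral_prod_right'
    hh.lintegral_prod_right' ?_
  intro x y
  refine hY t ht0 ht1 _ _ _ (hf.comp measurable_prodMk_left) (hg.comp measurable_prodMk_left)
    (hh.comp measurable_prodMk_left) ?_
  intro x' y'
  exact H (x, x') (y, y')

abbrev P3 := ℝ × (ℝ × ℝ)

instance haarR2 : (volume : Measure (ℝ × ℝ)).IsAddHaarMeasure :=
  inferInstanceAs ((volume : Measure ℝ).prod (volume : Measure ℝ)).IsAddHaarMeasure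

instance haarP3 : (volume : Measure P3).IsAddHaarMeasure :=
  inferInstanceAs ((volume : Measure ℝ).prod (volume : Measure (ℝ × ℝ))).IsAddHaarMeasure

theorem pl_P3 : PLProp P3 volume :=
  pl_prod _ _ _ _ pl_real (pl_prod _ _ _ _ pl_real pl_real)

/-- Brunn-Minkowski in 3D -/
theorem bm3 (A B C : Set P3) (hA : MeasurableSet A) (hB : MeasurableSet B) (hC : MeasurableSet C)
    (a b : ℝ) (ha : 0 < a) (hb : 0 < b) (hAa : volume A = ENNReal.ofReal (a ^ 3))
    (hBb : volume B = ENNReal.ofReal (b ^ 3)) (h : ∀ x ∈ A, ∀ y ∈ B, x + y ∈ C) :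
    ENNReal.ofReal ((a + b) ^ 3) ≤ volume C := by
  have hfr : Module.finrank ℝ P3 = 3 := by simp
  have hsc : ∀ (c : ℝ) (hc : 0 < c) (S : Set P3), volume (c • S) = ENNReal.ofReal (c ^ 3) * volume S := by
    intro c hc S
    rw [Measure.addHaar_smul, hfr, abs_of_pos (by positivity)]
  set t := b / (a + b) with ht
  have hab : 0 < a + b := by positivity
  have ht0 : 0 < t := by positivity
  have ht1 : t < 1 := by rw [ht, div_lt_one hab]; linarith
  have ht1' : 1 - t = a / (a + b) := by rw [ht]; field_simp; ring
  have hmA := hA.const_smul₀ a⁻¹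
  have hmB := hB.const_smul₀ b⁻¹
  have hmC := hC.const_smul₀ (a + b)⁻¹
  have key := pl_P3 t ht0 ht1 ((a⁻¹ • A).indicator 1) ((b⁻¹ • B).indicator 1)
    (((a + b)⁻¹ • C).indicator 1) (measurable_one.indicator hmA) (measurable_one.indicator hmB)
    (measurable_one.indicator hmC) ?_
  · rw [lintegral_indicator_one hmA, lintegral_indicator_one hmB, lintegral_indicator_one hmC,
      hsc _ (by positivity), hsc _ (by positivity), hsc _ (by positivity), hAa, hBb,
      ← ENNReal.ofReal_mul (by positivity), ← ENNReal.ofReal_mul (by positivity),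
      ← mul_pow, ← mul_pow, inv_mul_cancel₀ ha.ne', inv_mul_cancel₀ hb.ne'] at key
    simp only [one_pow, ENNReal.ofReal_one, ENNReal.one_rpow, mul_one] at key
    calc ENNReal.ofReal ((a + b) ^ 3) = ENNReal.ofReal ((a + b) ^ 3) * 1 := by simp
      _ ≤ ENNReal.ofReal ((a + b) ^ 3) * (ENNReal.ofReal ((a + b)⁻¹ ^ 3) * volume C) := by gcongr
      _ = volume C := by
        rw [← mul_assoc, ← ENNReal.ofReal_mul (by positivity), ← mul_pow, mul_inv_cancel₀ hab.ne']
        simp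
  · intro x y
    by_cases hx : x ∈ a⁻¹ • A
    · by_cases hy : y ∈ b⁻¹ • B
      · have : (1 - t) • x + t • y ∈ (a + b)⁻¹ • C := by
          obtain ⟨x', hx', rfl⟩ := hx
          obtain ⟨y', hy', rfl⟩ := hy
          refine ⟨x' + y', h _ hx' _ hy', ?_⟩
          simp only [smul_smul, smul_add]
          rw [ht1', ht]
          congr 2 <;> field_simp
        simp [hx, hy, this]
      · simp [hy, ENNReal.zero_rpow_of_pos ht0]
    · simp [hx, ENNReal.zero_rpow_of_pos (show 0 < 1 - t by linarith)]


/-- squared Euclidean norm -/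
def qn (z : P3) : ℝ := z.1 ^ 2 + z.2.1 ^ 2 + z.2.2 ^ 2

theorem qn_cont : Continuous qn := by unfold qn; fun_prop

theorem vol_ball_one : volume {z : P3 | qn z < 1} = ENNReal.ofReal (4 * π / 3) := by
  have m1 := EuclideanSpace.volume_preserving_symm_measurableEquiv_toLp (Fin 3)
  have m2 := volume_preserving_piFinSuccAbove (fun _ : Fin 3 => ℝ) 0
  have m3 := (MeasurePreserving.id (volume : Measure ℝ)).prod (volume_preserving_finTwoArrow ℝ)
  have m : MeasurePreserving (fun x : EuclideanSpace ℝ (Fin 3) => ((x 0, (x 1, x 2)) : P3)) volume volume :=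
    m3.comp (m2.comp m1)
  rw [← m.measure_preimage (measurableSet_lt qn_cont.measurable measurable_const).nullMeasurableSet]
  have : (fun x : EuclideanSpace ℝ (Fin 3) => ((x 0, (x 1, x 2)) : P3)) ⁻¹' {z : P3 | qn z < 1}
      = Metric.ball 0 1 := by
    ext x
    simp [EuclideanSpace.norm_eq, Fin.sum_univ_three, qn]
    rw [Real.sqrt_lt' one_pos]; simp
  rw [this, InnerProductSpace.volume_ball_of_dim_odd (k := 1) (by simp)]
  simp [Nat.doubleFactorial]
  congr 1; ring

noncomputable def bet : ℝ := (4 * π / 3) ^ (1 / 3 : ℝ)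

theorem bet_pos : 0 < bet := by unfold bet; positivity

theorem bet_cube : bet ^ 3 = 4 * π / 3 := by
  unfold bet
  rw [← Real.rpow_natCast, ← Real.rpow_mul (by positivity)]; norm_num

theorem vol_ball (h : ℝ) (hh : 0 < h) :
    volume {z : P3 | qn z < h ^ 2} = ENNReal.ofReal ((h * bet) ^ 3) := by
  have : {z : P3 | qn z < h ^ 2} = h • {z : P3 | qn z < 1} := by
    ext z
    rw [Set.mem_smul_set_iff_inv_smul_mem₀ hh.ne']
    simp only [Set.mem_ofPred_eq, qn, Prod.smul_fst, Prod.smul_snd, smul_eq_mul]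
    rw [show (h⁻¹ * z.1) ^ 2 + (h⁻¹ * z.2.1) ^ 2 + (h⁻¹ * z.2.2) ^ 2 =
      (z.1 ^ 2 + z.2.1 ^ 2 + z.2.2 ^ 2) / h ^ 2 by field_simp]
    rw [div_lt_one (by positivity)]
  rw [this, Measure.addHaar_smul, vol_ball_one, ← ENNReal.ofReal_mul (by positivity)]
  simp [abs_of_pos hh]
  rw [mul_pow, bet_cube]

theorem norm_lt_of_qn (z : P3) (h : ℝ) (hh : 0 < h) (hz : qn z < h ^ 2) : ‖z‖ < h := by
  unfold qn at hz
  simp only [Prod.norm_def, Real.norm_eq_abs, max_lt_iff]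
  refine ⟨abs_lt_of_sq_lt_sq ?_ hh.le, abs_lt_of_sq_lt_sq ?_ hh.le, abs_lt_of_sq_lt_sq ?_ hh.le⟩ <;>
  nlinarith [sq_nonneg z.1, sq_nonneg z.2.1, sq_nonneg z.2.2]

theorem level_one (f g : P3 → ℝ) (hfd : Differentiable ℝ f) (hfi : Integrable f)
    (hg : Continuous g) (hgc : HasCompactSupport g) (hg0 : ∀ z, 0 ≤ g z)
    (hfg : ∀ z v, |fderiv ℝ f z v| ≤ √(qn v) * g z) (κ : ℝ) (hκ : 0 < κ) :
    ENNReal.ofReal (3 * bet) * (∫⁻ s in Set.Ioi (0:ℝ), volume {z | s < |f z|} ^ (2 / 3 : ℝ)) ≤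
      (∫⁻ z, ENNReal.ofReal (g z)) +
        ENNReal.ofReal κ * volume (Metric.cthickening 1 (tsupport g)) := by
  set K := Metric.cthickening 1 (tsupport g) with hK
  have hKm : MeasurableSet K := Metric.isClosed_cthickening.measurableSet
  obtain ⟨d, hd0, hd⟩ := Metric.uniformContinuous_iff.1 (hgc.uniformContinuous_of_continuous hg) κ hκ
  set h := min d 1 with hhd
  have hh : 0 < h := lt_min hd0 one_pos
  have hh1 : h ≤ 1 := min_le_right _ _
  set F : P3 → ℝ := fun x => |f x| + h * (g x + κ * K.indicator 1 x) with hF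
  have gbd : ∀ x y, ‖y‖ < h → g (x - y) ≤ g x + κ * K.indicator 1 x := by
    intro x y hy
    by_cases hx : x ∈ K
    · have : dist (x - y) x < d := by
        simp; exact hy.trans_le (min_le_left _ _)
      have h2 := hd this
      rw [Real.dist_eq] at h2
      simp [hx]
      linarith [(abs_lt.1 h2).2]
    · have : g (x - y) = 0 := by
        by_contra hne
        apply hx
        refine Metric.mem_cthickening_of_dist_le x (x - y) 1 _ (subset_tsupport _ hne) ?_
        simp; linarith
      simp [this, hx, hg0 x]
  have claim : ∀ x y, qn y < h ^ 2 → |f x| ≤ F (x + y) := by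
    intro x y hy
    have hyn := norm_lt_of_qn y h hh hy
    have hsq : √(qn y) ≤ h := by
      rw [Real.sqrt_le_left hh.le]; exact hy.le
    have mv : ‖f ((x + y) - (1:ℝ) • y) - f ((x + y) - (0:ℝ) • y)‖ ≤
        h * (g (x + y) + κ * K.indicator 1 (x + y)) := by
      refine norm_image_sub_le_of_norm_deriv_le_segment_01'
        (f := fun s : ℝ => f ((x + y) - s • y))
        (f' := fun s => fderiv ℝ f ((x + y) - s • y) (-y)) ?_ ?_
      · intro s _
        refine HasDerivAt.hasDerivWithinAt ?_
        refine (hfd _).hasFDerivAt.comp_hasDerivAt s ?_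
        have := ((hasDerivAt_id s).smul_const y).const_sub (x + y)
        simpa using this
      · intro s hs
        have h1 := hfg ((x + y) - s • y) (-y)
        have h2 : qn (-y) = qn y := by simp [qn]
        rw [h2] at h1
        have h3 := gbd (x + y) (s • y) (by
          rw [norm_smul, Real.norm_eq_abs, abs_of_nonneg hs.1]
          nlinarith [norm_nonneg y, hs.2])
        rw [Real.norm_eq_abs]
        refine h1.trans (mul_le_mul hsq h3 (hg0 _) hh.le)
    simp only [one_smul, zero_smul, sub_zero, add_sub_cancel_right, Real.norm_eq_abs] at mv
    have := abs_sub_abs_le_abs_sub (f x) (f (x + y))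
    simp only [hF]
    linarith
  have hFm : Measurable F := by
    have h1 : Measurable (K.indicator (1 : P3 → ℝ)) := measurable_one.indicator hKm
    have h2 := hfd.continuous.measurable
    have h3 := hg.measurable
    exact (h2.abs).add ((h3.add (h1.const_mul κ)).const_mul h)
  have hI0 : ∀ x, 0 ≤ K.indicator (1 : P3 → ℝ) x := fun x => Set.indicator_nonneg (by simp) x
  have hF0 : ∀ x, 0 ≤ F x := fun x => by
    have h1 := hI0 x
    have h2 := hg0 x
    simp only [hF]; positivity
  have hfm : Measurable (fun z => |f z|) := hfd.continuous.measurable.abs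
  have lev : ∀ s, 0 < s → volume {z | s < |f z|} +
      ENNReal.ofReal (3 * (h * bet)) * volume {z | s < |f z|} ^ (2 / 3 : ℝ) ≤ volume {z | s < F z} := by
    intro s hs
    have hfin : volume {z | s < |f z|} < ⊤ := hfi.measure_norm_gt_lt_top hs
    by_cases h0 : volume {z | s < |f z|} = 0
    · simp [h0]
    set m := (volume {z | s < |f z|}).toReal with hm
    have hmp : 0 < m := ENNReal.toReal_pos h0 hfin.ne
    have hmv : volume {z | s < |f z|} = ENNReal.ofReal m := (ENNReal.ofReal_toReal hfin.ne).symm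
    set a := m ^ (1 / 3 : ℝ) with ha
    have hap : 0 < a := by positivity
    have ha3 : a ^ 3 = m := by
      rw [ha, ← Real.rpow_natCast, ← Real.rpow_mul hmp.le]; norm_num
    have ha2 : m ^ (2 / 3 : ℝ) = a ^ 2 := by
      rw [ha, ← Real.rpow_natCast, ← Real.rpow_mul hmp.le]; norm_num
    have hb : 0 < h * bet := mul_pos hh bet_pos
    have key := bm3 {z | s < |f z|} {z | qn z < h ^ 2} {z | s < F z}
      (measurableSet_lt measurable_const hfm) (measurableSet_lt qn_cont.measurable measurable_const)
      (measurableSet_lt measurable_const hFm) a (h * bet) hap hb (by rw [hmv, ha3])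
      (vol_ball h hh) (fun x hx y hy => lt_of_lt_of_le hx (claim x y hy))
    refine le_trans ?_ key
    rw [hmv, ENNReal.ofReal_rpow_of_pos hmp, ha2, ← ENNReal.ofReal_mul (by positivity),
      ← ENNReal.ofReal_add hmp.le (by positivity)]
    apply ENNReal.ofReal_le_ofReal
    rw [← ha3]
    nlinarith [mul_pos hap (mul_pos hb hb), pow_pos hb 3]
  have m : ∀ k : P3 → ℝ, Measurable (fun s => volume {a | s < k a}) := fun k =>
    Antitone.measurable (fun s s' hs => measure_mono (fun a ha => lt_of_le_of_lt hs ha))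
  have int : (∫⁻ z, ENNReal.ofReal |f z|) + ENNReal.ofReal (3 * (h * bet)) *
      (∫⁻ s in Set.Ioi (0:ℝ), volume {z | s < |f z|} ^ (2 / 3 : ℝ)) ≤
      ∫⁻ z, ENNReal.ofReal (F z) := by
    rw [lintegral_eq_lintegral_meas_lt _ (ae_of_all _ fun z => abs_nonneg (f z)) hfm.aemeasurable,
      lintegral_eq_lintegral_meas_lt _ (ae_of_all _ hF0) hFm.aemeasurable,
      ← lintegral_const_mul _ ((m _).pow_const _), ← lintegral_add_left (m _)]
    exact setLIntegral_mono (m _) lev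
  have Feq : ∫⁻ z, ENNReal.ofReal (F z) = (∫⁻ z, ENNReal.ofReal |f z|) +
      ENNReal.ofReal h * ((∫⁻ z, ENNReal.ofReal (g z)) + ENNReal.ofReal κ * volume K) := by
    have : ∀ z, ENNReal.ofReal (F z) = ENNReal.ofReal |f z| +
        ENNReal.ofReal h * (ENNReal.ofReal (g z) + ENNReal.ofReal κ * K.indicator 1 z) := by
      intro z
      have h1 := hI0 z
      have h2 := hg0 z
      simp only [hF]
      rw [ENNReal.ofReal_add (abs_nonneg _) (by positivity), ENNReal.ofReal_mul hh.le,
        ENNReal.ofReal_add h2 (by positivity), ENNReal.ofReal_mul hκ.le]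
      congr 4
      by_cases hz : z ∈ K <;> simp [hz]
    simp only [this]
    have hm1 : Measurable fun z => ENNReal.ofReal (g z) := hg.measurable.ennreal_ofReal
    have hm2 : Measurable fun z => K.indicator (1 : P3 → ℝ≥0∞) z := measurable_one.indicator hKm
    rw [lintegral_add_left hfm.ennreal_ofReal,
      lintegral_const_mul _ (show Measurable fun z => ENNReal.ofReal (g z) +
        ENNReal.ofReal κ * K.indicator 1 z from hm1.add (hm2.const_mul _)), lintegral_add_left hm1,
      lintegral_const_mul _ hm2, lintegral_indicator_one hKm]
  rw [Feq] at int
  have hfin : (∫⁻ z, ENNReal.ofReal |f z|) ≠ ⊤ := by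
    have := hfi.norm.lintegral_lt_top
    simpa using this.ne
  rw [ENNReal.add_le_add_iff_left hfin, show 3 * (h * bet) = h * (3 * bet) by ring,
    ENNReal.ofReal_mul hh.le, mul_assoc,
    ENNReal.mul_le_mul_iff_right (by simpa using hh) (by simp)] at int
  exact int

theorem level_ineq (f g : P3 → ℝ) (hfd : Differentiable ℝ f) (hfi : Integrable f)
    (hg : Continuous g) (hgc : HasCompactSupport g) (hg0 : ∀ z, 0 ≤ g z)
    (hfg : ∀ z v, |fderiv ℝ f z v| ≤ √(qn v) * g z) :
    ENNReal.ofReal (3 * bet) * (∫⁻ s in Set.Ioi (0:ℝ), volume {z | s < |f z|} ^ (2 / 3 : ℝ)) ≤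
      ∫⁻ z, ENNReal.ofReal (g z) := by
  have hK : volume (Metric.cthickening 1 (tsupport g)) ≠ ⊤ :=
    (IsCompact.cthickening hgc).measure_lt_top.ne
  set M := (volume (Metric.cthickening 1 (tsupport g))).toReal with hM
  have hM0 : 0 ≤ M := ENNReal.toReal_nonneg
  refine ENNReal.le_of_forall_pos_le_add fun ε hε _ => ?_
  have hε' : (0:ℝ) < ε := hε
  refine (level_one f g hfd hfi hg hgc hg0 hfg (ε / (M + 1)) (by positivity)).trans ?_
  gcongr
  rw [← ENNReal.ofReal_toReal hK, ← hM, ← ENNReal.ofReal_mul (by positivity),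
    ← ENNReal.ofReal_coe_nnreal]
  apply ENNReal.ofReal_le_ofReal
  rw [div_mul_eq_mul_div, div_le_iff₀ (by positivity)]
  nlinarith


theorem w_ineq (w : P3 → ℝ) (hwm : Measurable w) (hw : Integrable w)
    (hw1 : ∀ᵐ z, w z ≠ 0 → 1 ≤ |w z|)
    (f : ℕ → P3 → ℝ) (hfm : ∀ n, Measurable (f n)) (A : ℝ) (hA : 0 ≤ A)
    (hf : ∀ n, ENNReal.ofReal (3 * bet) *
      (∫⁻ s in Set.Ioi (0:ℝ), volume {z | s < |f n z|} ^ (2 / 3 : ℝ)) ≤ ENNReal.ofReal A)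
    (hlim : ∀ᵐ z, Tendsto (fun n => f n z) atTop (nhds (w z))) :
    36 * π * (∫ z, |w z|) ^ 2 ≤ A ^ 3 := by
  have m : ∀ k : P3 → ℝ, Measurable (fun s => volume {a | s < k a}) := fun k =>
    Antitone.measurable (fun s s' hs => measure_mono (fun a ha => lt_of_le_of_lt hs ha))
  -- Fatou
  have fat1 : ∀ s : ℝ, volume {z | s < |w z|} ≤ liminf (fun n => volume {z | s < |f n z|}) atTop := by
    intro s
    have hms : ∀ n, MeasurableSet {z | s < |f n z|} := fun n =>
      measurableSet_lt measurable_const (hfm n).abs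
    have hmw : MeasurableSet {z | s < |w z|} := measurableSet_lt measurable_const hwm.abs
    rw [← lintegral_indicator_one hmw]
    simp only [← lintegral_indicator_one (hms _)]
    refine le_trans (lintegral_mono_ae ?_) (lintegral_liminf_le fun n => measurable_one.indicator (hms n))
    filter_upwards [hlim] with z hz
    by_cases hs : s < |w z|
    · refine le_liminf_of_le (by isBoundedDefault) ?_
      filter_upwards [hz.abs.eventually_const_lt hs] with n hn
      simp [hs, hn]
    · simp [hs]
  have fat2 : ENNReal.ofReal (3 * bet) * (∫⁻ s in Set.Ioi (0:ℝ), volume {z | s < |w z|} ^ (2 / 3 : ℝ))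
      ≤ ENNReal.ofReal A := by
    have h1 : ∀ s : ℝ, volume {z | s < |w z|} ^ (2 / 3 : ℝ) ≤
        liminf (fun n => volume {z | s < |f n z|} ^ (2 / 3 : ℝ)) atTop := by
      intro s
      have := (ENNReal.orderIsoRpow (2 / 3) (by norm_num)).liminf_apply (f := atTop)
        (u := fun n => volume {z | s < |f n z|})
      simp only [ENNReal.orderIsoRpow_apply] at this
      rw [← this]
      exact ENNReal.rpow_le_rpow (fat1 s) (by norm_num)
    have h2 := (lintegral_mono (μ := volume.restrict (Set.Ioi (0:ℝ))) h1).trans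
      (lintegral_liminf_le fun n => (m fun z => |f n z|).pow_const (2 / 3 : ℝ))
    have hb : ENNReal.ofReal (3 * bet) ≠ 0 := by simpa using bet_pos
    rw [mul_comm, ← ENNReal.le_div_iff_mul_le (Or.inl hb) (Or.inl ENNReal.ofReal_ne_top)]
    refine h2.trans ?_
    refine liminf_le_of_le (by isBoundedDefault) ?_
    intro b hb'
    obtain ⟨n, hn⟩ := hb'.exists
    refine hn.trans ?_
    rw [ENNReal.le_div_iff_mul_le (Or.inl hb) (Or.inl ENNReal.ofReal_ne_top), mul_comm]
    exact hf n
  set I := ∫ z, |w z| with hI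
  have hI0 : 0 ≤ I := integral_nonneg fun z => abs_nonneg _
  rcases hI0.eq_or_lt with hI0 | hIp
  · rw [← hI0]; simp; positivity
  have hIl : ENNReal.ofReal I = ∫⁻ z, ENNReal.ofReal |w z| :=
    ofReal_integral_eq_lintegral_ofReal hw.norm (ae_of_all _ fun z => abs_nonneg _)
  have hmu : ∀ s : ℝ, 0 < s → volume {z | s < |w z|} ≤ ENNReal.ofReal I := by
    intro s hs
    have hmw : MeasurableSet {z | s < |w z|} := measurableSet_lt measurable_const hwm.abs
    rw [hIl, ← lintegral_indicator_one hmw]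
    refine lintegral_mono_ae ?_
    filter_upwards [hw1] with z hz
    by_cases hs' : s < |w z|
    · have : w z ≠ 0 := by intro h; simp [h] at hs'; linarith
      simpa [hs'] using hz this
    · simp [hs']
  have hlow : ENNReal.ofReal (I ^ (2 / 3 : ℝ)) ≤
      ∫⁻ s in Set.Ioi (0:ℝ), volume {z | s < |w z|} ^ (2 / 3 : ℝ) := by
    have hc : ENNReal.ofReal (I ^ (2 / 3 : ℝ)) = ENNReal.ofReal (I ^ (-(1 / 3) : ℝ)) * ENNReal.ofReal I := by
      rw [← ENNReal.ofReal_mul (by positivity)]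
      congr 1
      nth_rewrite 3 [← Real.rpow_one I]
      rw [← Real.rpow_add hIp]; norm_num
    rw [hc, hIl, lintegral_eq_lintegral_meas_lt _ (ae_of_all _ fun z => abs_nonneg (w z))
      hwm.abs.aemeasurable, ← lintegral_const_mul _ (m _)]
    refine setLIntegral_mono ((m _).pow_const _) fun s hs => ?_
    have h1 := hmu s hs
    set μ := volume {z | s < |w z|}
    by_cases h0 : μ = 0
    · simp [h0]
    have hT : μ ≠ ⊤ := ne_top_of_le_ne_top (by simp) h1
    have h2 : μ = μ ^ (1 / 3 : ℝ) * μ ^ (2 / 3 : ℝ) := by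
      rw [← ENNReal.rpow_add _ _ h0 hT]; norm_num
    calc ENNReal.ofReal (I ^ (-(1 / 3) : ℝ)) * μ
        = ENNReal.ofReal (I ^ (-(1 / 3) : ℝ)) * μ ^ (1 / 3 : ℝ) * μ ^ (2 / 3 : ℝ) := by
          nth_rewrite 1 [h2]; rw [mul_assoc]
      _ ≤ ENNReal.ofReal (I ^ (-(1 / 3) : ℝ)) * (ENNReal.ofReal I) ^ (1 / 3 : ℝ) * μ ^ (2 / 3 : ℝ) := by
          gcongr
      _ = μ ^ (2 / 3 : ℝ) := by
          rw [ENNReal.ofReal_rpow_of_pos hIp, ← ENNReal.ofReal_mul (by positivity),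
            ← Real.rpow_add hIp]
          simp
  have fin : ENNReal.ofReal (3 * bet) * ENNReal.ofReal (I ^ (2 / 3 : ℝ)) ≤ ENNReal.ofReal A :=
    le_trans (by gcongr) fat2
  have hb := bet_pos
  rw [← ENNReal.ofReal_mul (by positivity), ENNReal.ofReal_le_ofReal_iff hA] at fin
  have := pow_le_pow_left₀ (by positivity) fin 3
  rw [mul_pow, mul_pow, bet_cube, ← Real.rpow_natCast (I ^ (2 / 3 : ℝ)), ← Real.rpow_mul hIp.le] at this
  norm_num at this
  linarith


theorem tsum_ind_nat (S : ℕ → Set P3) (z : P3)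
    (h : ∑' n, (S n).indicator (1 : P3 → ℝ≥0∞) z ≠ ⊤) :
    ∃ k : ℕ, ∑' n, (S n).indicator (1 : P3 → ℝ≥0∞) z = k := by
  have hfin := ENNReal.finite_const_le_of_tsum_ne_top h one_ne_zero
  rw [tsum_eq_sum (s := hfin.toFinset)]
  · refine ⟨∑ n ∈ hfin.toFinset, 1, ?_⟩
    push_cast
    refine Finset.sum_congr rfl fun n hn => ?_
    have : 1 ≤ (S n).indicator (1 : P3 → ℝ≥0∞) z := by simpa using hn
    by_cases hz : z ∈ S n
    · simp [hz]
    · simp [hz] at this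
  · intro n hn
    by_contra hne
    apply hn
    have hz : z ∈ S n := Set.mem_of_indicator_ne_zero hne
    simp [hz]

theorem area_pos (C : P3 → P3) (C' : P3 → P3 →L[ℝ] P3) (S : Set P3) (hS : MeasurableSet S)
    (hder : ∀ x, HasFDerivAt C (C' x) x) (hdet : ∀ x ∈ S, (C' x).det ≠ 0) (hCm : Measurable C)
    (hC'm : Measurable fun x => (C' x).det) :
    ∃ N : P3 → ℝ≥0∞, Measurable N ∧ (∀ z, N z ≠ ⊤ → ∃ k : ℕ, N z = k) ∧
      Measure.map C ((volume.restrict S).withDensity (fun x => ENNReal.ofReal |(C' x).det|)) =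
        volume.withDensity N := by
  have hder' : ∀ x ∈ S, HasFDerivWithinAt C (C' x) S x := fun x _ => (hder x).hasFDerivWithinAt
  -- the radius function
  let r : (P3 →L[ℝ] P3) → NNReal := fun A =>
    if h : A.det ≠ 0 then ‖((A.toContinuousLinearEquivOfDetNeZero h).symm : P3 →L[ℝ] P3)‖₊⁻¹ / 2 else 1
  have hN : ∀ A : P3 →L[ℝ] P3, ∀ h : A.det ≠ 0,
      0 < ‖((A.toContinuousLinearEquivOfDetNeZero h).symm : P3 →L[ℝ] P3)‖₊ := by
    intro A h
    exact (A.toContinuousLinearEquivOfDetNeZero h).nnnorm_symm_pos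
  have hr : ∀ A, r A ≠ 0 := by
    intro A
    by_cases h : A.det ≠ 0
    · simp only [r, dif_pos h]
      have := hN A h
      positivity
    · simp only [r, dif_neg h]; exact one_ne_zero
  obtain ⟨t, A, hdis, htm, hcov, happ, hA⟩ :=
    exists_partition_approximatesLinearOn_of_hasFDerivWithinAt C S C' hder' r hr
  have hinj : ∀ n, Set.InjOn C (S ∩ t n) := by
    intro n
    by_cases hSn : S.Nonempty
    · obtain ⟨y, hy, hAy⟩ := hA hSn n
      have h : (A n).det ≠ 0 := by rw [hAy]; exact hdet y hy
      have h1 := happ n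
      have h2 : r (A n) = ‖(((A n).toContinuousLinearEquivOfDetNeZero h).symm : P3 →L[ℝ] P3)‖₊⁻¹ / 2 := by
        simp only [r, dif_pos h]
      rw [h2] at h1
      have h3 : ApproximatesLinearOn C
          (((A n).toContinuousLinearEquivOfDetNeZero h : P3 ≃L[ℝ] P3) : P3 →L[ℝ] P3) (S ∩ t n)
          (‖(((A n).toContinuousLinearEquivOfDetNeZero h).symm : P3 →L[ℝ] P3)‖₊⁻¹ / 2) := h1
      refine h3.injOn (Or.inr ?_)
      have := inv_pos.2 (hN _ h)
      convert NNReal.half_lt_self this.ne' 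
    · rw [Set.not_nonempty_iff_eq_empty.1 hSn]; simp
  have hSm : ∀ n, MeasurableSet (S ∩ t n) := fun n => hS.inter (htm n)
  have himm : ∀ n, MeasurableSet (C '' (S ∩ t n)) := fun n =>
    measurable_image_of_fderivWithin (hSm n) (fun x _ => (hder x).hasFDerivWithinAt) (hinj n)
  have hNm : Measurable fun z => ∑' n, (C '' (S ∩ t n)).indicator (1 : P3 → ℝ≥0∞) z :=
    Measurable.tsum fun n => measurable_one.indicator (himm n)
  refine ⟨fun z => ∑' n, (C '' (S ∩ t n)).indicator 1 z, hNm,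
    fun z => tsum_ind_nat _ z, ?_⟩
  have hSU : S = ⋃ n, S ∩ t n := by
    rw [← Set.inter_iUnion]; exact (Set.inter_eq_left.2 hcov).symm
  ext B hB
  rw [Measure.map_apply hCm hB, withDensity_apply _ (hCm hB), withDensity_apply _ hB,
    Measure.restrict_restrict (hCm hB), lintegral_tsum
      (fun n => (measurable_one.indicator (himm n)).aemeasurable)]
  nth_rewrite 1 [hSU]
  rw [Set.inter_iUnion, lintegral_iUnion (fun n => (hCm hB).inter (hSm n)) ?_]
  · congr 1
    ext n
    rw [lintegral_indicator_one (himm n), Measure.restrict_apply (himm n)]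
    have h1 : C '' (S ∩ t n) ∩ B = C '' (C ⁻¹' B ∩ (S ∩ t n)) := by
      rw [Set.inter_comm (C ⁻¹' B), Set.image_inter_preimage]
    rw [h1]
    refine (lintegral_abs_det_fderiv_eq_addHaar_image volume ((hCm hB).inter (hSm n))
      (fun x _ => (hder x).hasFDerivWithinAt) ((hinj n).mono Set.inter_subset_right))
  · intro i j hij
    exact (hdis hij).mono (fun x hx => hx.2.2) (fun x hx => hx.2.2)

theorem area_one (C : P3 → P3) (C' : P3 → P3 →L[ℝ] P3) (S : Set P3) (hS : MeasurableSet S)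
    (hder : ∀ x, HasFDerivAt C (C' x) x) (hdet : ∀ x ∈ S, (C' x).det ≠ 0) (hCm : Measurable C)
    (hC'm : Measurable fun x => (C' x).det) (hdetI : IntegrableOn (fun x => (C' x).det) S) :
    ∃ w : P3 → ℝ, Measurable w ∧ Integrable w ∧ (∀ z, ∃ k : ℕ, w z = k) ∧
      ∀ φ : P3 → ℝ, Measurable φ → ∫ x in S, |(C' x).det| * φ (C x) = ∫ z, w z * φ z := by
  obtain ⟨N, hNm, hNk, hmap⟩ := area_pos C C' S hS hder hdet hCm hC'm
  have hNfin : ∫⁻ z, N z ≠ ⊤ := by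
    have := congrArg (fun μ => μ Set.univ) hmap
    rw [Measure.map_apply hCm .univ, withDensity_apply _ (hCm .univ), withDensity_apply _ .univ] at this
    simp only [Set.preimage_univ, Measure.restrict_univ] at this
    rw [← this]
    have h2 := hdetI.norm.lintegral_lt_top
    simpa using h2.ne
  have hNae : ∀ᵐ z, N z < ⊤ := ae_lt_top hNm hNfin
  refine ⟨fun z => (N z).toReal, hNm.ennreal_toReal, integrable_toReal_of_lintegral_ne_top
    hNm.aemeasurable hNfin, ?_, ?_⟩
  · intro z
    by_cases h : N z = ⊤
    · exact ⟨0, by simp [h]⟩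
    · obtain ⟨k, hk⟩ := hNk z h
      exact ⟨k, by simp [hk]⟩
  · intro φ hφ
    have h1 : ∫ z, φ z ∂(volume.withDensity N) = ∫ z, (N z).toReal * φ z := by
      rw [integral_withDensity_eq_integral_toReal_smul hNm hNae]; rfl
    rw [← h1, ← hmap, integral_map hCm.aemeasurable hφ.aestronglyMeasurable,
      integral_withDensity_eq_integral_toReal_smul (by fun_prop) (by simp)]
    simp

theorem area_signed (C : P3 → P3) (C' : P3 → P3 →L[ℝ] P3) (D : Set P3) (hD : MeasurableSet D)
    (hder : ∀ x, HasFDerivAt C (C' x) x) (hCm : Measurable C)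
    (hC'm : Measurable fun x => (C' x).det) (hdetI : IntegrableOn (fun x => (C' x).det) D) :
    ∃ w : P3 → ℝ, Measurable w ∧ Integrable w ∧ (∀ z, w z ≠ 0 → 1 ≤ |w z|) ∧
      ∀ φ : P3 → ℝ, Measurable φ → (∃ M, ∀ z, |φ z| ≤ M) →
        ∫ x in D, (C' x).det * φ (C x) = ∫ z, w z * φ z := by
  have hp : MeasurableSet {x | 0 < (C' x).det} := measurableSet_lt measurable_const hC'm
  have hn : MeasurableSet {x | (C' x).det < 0} := measurableSet_lt hC'm measurable_const
  obtain ⟨w₁, m₁, i₁, k₁, h₁⟩ := area_one C C' (D ∩ {x | 0 < (C' x).det}) (hD.inter hp)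
    hder (fun x hx => (ne_of_gt hx.2)) hCm hC'm (hdetI.mono_set Set.inter_subset_left)
  obtain ⟨w₂, m₂, i₂, k₂, h₂⟩ := area_one C C' (D ∩ {x | (C' x).det < 0}) (hD.inter hn)
    hder (fun x hx => (ne_of_lt hx.2)) hCm hC'm (hdetI.mono_set Set.inter_subset_left)
  refine ⟨fun z => w₁ z - w₂ z, m₁.sub m₂, i₁.sub i₂, ?_, ?_⟩
  · intro z hz
    obtain ⟨k, hk⟩ := k₁ z
    obtain ⟨l, hl⟩ := k₂ z
    simp only [hk, hl] at hz ⊢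
    have : ((k:ℤ) - l) ≠ 0 := by intro h; apply hz; exact_mod_cast h
    have := Int.one_le_abs this
    exact_mod_cast this
  · rintro φ hφ ⟨M, hM⟩
    have b1 : ∀ v : P3 → ℝ, Integrable v → Integrable fun z => v z * φ z := fun v hv =>
      hv.mul_bdd (c := M) hφ.aestronglyMeasurable (ae_of_all _ hM)
    have e : (fun z => (w₁ z - w₂ z) * φ z) = fun z => w₁ z * φ z - w₂ z * φ z := by
      ext z; ring
    rw [e, integral_sub (b1 _ i₁) (b1 _ i₂), ← h₁ φ hφ, ← h₂ φ hφ]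
    have hI : IntegrableOn (fun x => |(C' x).det| * φ (C x)) D :=
      Integrable.mul_bdd (c := M) hdetI.norm (hφ.comp hCm).aestronglyMeasurable
        (ae_of_all _ fun x => hM _)
    rw [← setIntegral_indicator hp, ← setIntegral_indicator hn,
      ← integral_sub (hI.indicator hp) (hI.indicator hn)]
    congr 1
    ext x
    rcases lt_trichotomy (C' x).det 0 with h | h | h
    · have h' := h.le.not_gt
      simp [Set.indicator, h, h', abs_of_neg h]
    · simp [Set.indicator, h]
    · have h' := h.le.not_gt
      simp [Set.indicator, h, h', abs_of_pos h]


noncomputable def dX (f : ℝ × ℝ → ℝ) (p : ℝ × ℝ) : ℝ := fderiv ℝ f p (1, 0)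
noncomputable def dY (f : ℝ × ℝ → ℝ) (p : ℝ × ℝ) : ℝ := fderiv ℝ f p (0, 1)

theorem dX_smooth {f : ℝ × ℝ → ℝ} (hf : ContDiff ℝ ∞ f) : ContDiff ℝ ∞ (dX f) := by
  unfold dX
  exact (hf.fderiv_right (m := ∞) (by simp)).clm_apply contDiff_const

theorem dY_smooth {f : ℝ × ℝ → ℝ} (hf : ContDiff ℝ ∞ f) : ContDiff ℝ ∞ (dY f) := by
  unfold dY
  exact (hf.fderiv_right (m := ∞) (by simp)).clm_apply contDiff_const

theorem dXdY {f : ℝ × ℝ → ℝ} (hf : ContDiff ℝ ∞ f) (p : ℝ × ℝ) : dX (dY f) p = dY (dX f) p := by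
  have hs := (hf.contDiffAt (x := p)).isSymmSndFDerivAt (by
    simp only [minSmoothness_of_isRCLikeNormedField]
    exact WithTop.coe_le_coe.2 le_top)
  have hd : DifferentiableAt ℝ (fderiv ℝ f) p :=
    ((hf.fderiv_right (m := ∞) (by simp)).differentiable (by simp)) p
  have h1 : ∀ v w, fderiv ℝ (fun q => fderiv ℝ f q v) p w = fderiv ℝ (fderiv ℝ f) p w v := by
    intro v w
    rw [fderiv_clm_apply hd (by fun_prop)]
    simp
  change fderiv ℝ (fun q => fderiv ℝ f q (0,1)) p (1,0) = fderiv ℝ (fun q => fderiv ℝ f q (1,0)) p (0,1)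
  rw [h1, h1]
  exact hs _ _

theorem dX_zero {f : ℝ × ℝ → ℝ} {K : Set (ℝ × ℝ)} (hK : IsClosed K) (h : ∀ p ∉ K, f p = 0) :
    ∀ p ∉ K, dX f p = 0 := by
  intro p hp
  have : f =ᶠ[nhds p] fun _ => 0 := by
    filter_upwards [hK.isOpen_compl.mem_nhds hp] with q hq using h q hq
  simp [dX, this.fderiv_eq]

theorem dY_zero {f : ℝ × ℝ → ℝ} {K : Set (ℝ × ℝ)} (hK : IsClosed K) (h : ∀ p ∉ K, f p = 0) :
    ∀ p ∉ K, dY f p = 0 := by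
  intro p hp
  have : f =ᶠ[nhds p] fun _ => 0 := by
    filter_upwards [hK.isOpen_compl.mem_nhds hp] with q hq using h q hq
  simp [dY, this.fderiv_eq]

theorem int_of_zero {f : ℝ × ℝ → ℝ} (hf : Continuous f) {K : Set (ℝ × ℝ)} (hK : IsCompact K)
    (h : ∀ p ∉ K, f p = 0) : Integrable f :=
  hf.integrable_of_hasCompactSupport (HasCompactSupport.intro hK h)

theorem int_fderiv_zero {f : ℝ × ℝ → ℝ} (hf : ContDiff ℝ ∞ f) {K : Set (ℝ × ℝ)} (hK : IsCompact K)
    (h : ∀ p ∉ K, f p = 0) (v : ℝ × ℝ) : ∫ p, fderiv ℝ f p v = 0 := by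
  have hc : HasCompactSupport f := HasCompactSupport.intro hK h
  have h1 : Integrable (fun p => fderiv ℝ f p v) := by
    refine Continuous.integrable_of_hasCompactSupport ?_ ?_
    · exact ((hf.fderiv_right (m := ∞) (by simp)).clm_apply contDiff_const).continuous
    · exact hc.fderiv_apply ℝ v
  have := integral_mul_fderiv_eq_neg_fderiv_mul_of_integrable (𝕜 := ℝ) (μ := (volume : Measure (ℝ × ℝ)))
    (f := fun _ => (1:ℝ)) (g := f) (v := v)
    (by simp) (by simpa using h1) (by simpa using int_of_zero hf.continuous hK h)
    (fun x _ => by fun_prop) (fun x _ => hf.differentiable (by simp) x)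
  simpa using this

theorem intD {H : P3 → ℝ} (hH : Continuous H) {K : Set (ℝ × ℝ)} (hK : IsCompact K)
    (h : ∀ s p, p ∉ K → H (s, p) = 0) :
    IntegrableOn H (Set.Ioc (0:ℝ) 1 ×ˢ (Set.univ : Set (ℝ × ℝ))) := by
  have h1 : IntegrableOn H (Set.Icc (0:ℝ) 1 ×ˢ K) :=
    hH.continuousOn.integrableOn_compact (isCompact_Icc.prod hK)
  have h2 : IntegrableOn H (Set.Icc (0:ℝ) 1 ×ˢ (Set.univ : Set (ℝ × ℝ))) := by
    refine IntegrableOn.of_forall_sdiff_eq_zero h1 (measurableSet_Icc.prod .univ) ?_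
    rintro ⟨s, p⟩ ⟨hs, hn⟩
    refine h s p fun hp => hn ⟨hs.1, hp⟩
  exact h2.mono_set (Set.prod_mono Set.Ioc_subset_Icc_self le_rfl)

section
variable (a b c : ℝ × ℝ → ℝ)

noncomputable def J1 (p : ℝ × ℝ) : ℝ := dX b p * dY c p - dX c p * dY b p
noncomputable def J2 (p : ℝ × ℝ) : ℝ := dX c p * dY a p - dX a p * dY c p
noncomputable def J3 (p : ℝ × ℝ) : ℝ := dX a p * dY b p - dX b p * dY a p
def cone (x : P3) : P3 := (x.1 * a x.2, (x.1 * b x.2, x.1 * c x.2))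
noncomputable def coneJ (x : P3) : ℝ :=
  x.1 ^ 2 * (a x.2 * J1 b c x.2 + b x.2 * J2 a c x.2 + c x.2 * J3 a b x.2)

theorem lin3 (L : P3 →L[ℝ] ℝ) (x y z : ℝ) :
    L (x, (y, z)) = x * L (1, (0, 0)) + y * L (0, (1, 0)) + z * L (0, (0, 1)) := by
  have : ((x, (y, z)) : P3) = x • (1, (0, 0)) + y • (0, (1, 0)) + z • (0, (0, 1)) := by simp
  rw [this]; simp only [map_add, map_smul, smul_eq_mul]

/-- pointwise divergence identity -/
theorem stokes_pt {a b c : ℝ × ℝ → ℝ} (ha : ContDiff ℝ ∞ a) (hb : ContDiff ℝ ∞ b) (hc : ContDiff ℝ ∞ c)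
    {φ : P3 → ℝ} (hφ : ContDiff ℝ ∞ φ) (v : P3) (s : ℝ) (p : ℝ × ℝ) :
    coneJ a b c (s, p) * fderiv ℝ φ (cone a b c (s, p)) v =
      (2 * s * φ (cone a b c (s, p)) +
          s ^ 2 * fderiv ℝ φ (cone a b c (s, p)) (a p, (b p, c p))) *
        (v.1 * J1 b c p + v.2.1 * J2 a c p + v.2.2 * J3 a b p) +
      s * (dX (fun q => φ (cone a b c (s, q)) *
          (a q * (v.2.1 * dY c q - v.2.2 * dY b q) + b q * (v.2.2 * dY a q - v.1 * dY c q)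
            + c q * (v.1 * dY b q - v.2.1 * dY a q))) p +
        dY (fun q => φ (cone a b c (s, q)) *
          (a q * (dX b q * v.2.2 - dX c q * v.2.1) + b q * (dX c q * v.1 - dX a q * v.2.2)
            + c q * (dX a q * v.2.1 - dX b q * v.1))) p) := by
  have da := (ha.differentiable (by simp)) p
  have db := (hb.differentiable (by simp)) p
  have dc := (hc.differentiable (by simp)) p
  have dax := ((dX_smooth ha).differentiable (by simp)) p
  have dbx := ((dX_smooth hb).differentiable (by simp)) p
  have dcx := ((dX_smooth hc).differentiable (by simp)) p
  have day := ((dY_smooth ha).differentiable (by simp)) p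
  have dby := ((dY_smooth hb).differentiable (by simp)) p
  have dcy := ((dY_smooth hc).differentiable (by simp)) p
  have sa := dXdY ha p
  have sb := dXdY hb p
  have sc := dXdY hc p
  have dφ := (hφ.differentiable (by simp)) (cone a b c (s, p))
  have hcone : HasFDerivAt (fun q => cone a b c (s, q))
      ((s • fderiv ℝ a p).prod ((s • fderiv ℝ b p).prod (s • fderiv ℝ c p))) p := by
    unfold cone
    exact (da.hasFDerivAt.const_mul s).prodMk
      ((db.hasFDerivAt.const_mul s).prodMk (dc.hasFDerivAt.const_mul s))
  have hψ := dφ.hasFDerivAt.comp p hcone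
  have h1 : ∀ w : ℝ × ℝ, fderiv ℝ (fun q => φ (cone a b c (s, q))) p w =
      fderiv ℝ φ (cone a b c (s, p)) (s * fderiv ℝ a p w, (s * fderiv ℝ b p w, s * fderiv ℝ c p w)) := by
    intro w
    have : fderiv ℝ (fun q => φ (cone a b c (s, q))) p = _ := hψ.fderiv
    rw [this]; rfl
  have dψ : DifferentiableAt ℝ (fun q => φ (cone a b c (s, q))) p := hψ.differentiableAt
  have ex : dX (fun q => φ (cone a b c (s, q)) *
          (a q * (v.2.1 * dY c q - v.2.2 * dY b q) + b q * (v.2.2 * dY a q - v.1 * dY c q)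
            + c q * (v.1 * dY b q - v.2.1 * dY a q))) p = 
      dX (fun q => φ (cone a b c (s, q))) p * (a p * (v.2.1 * dY c p - v.2.2 * dY b p) + b p * (v.2.2 * dY a p - v.1 * dY c p)
            + c p * (v.1 * dY b p - v.2.1 * dY a p)) + 
      φ (cone a b c (s, p)) * (dX a p * (v.2.1 * dY c p - v.2.2 * dY b p) + dX b p * (v.2.2 * dY a p - v.1 * dY c p)
            + dX c p * (v.1 * dY b p - v.2.1 * dY a p)
          + a p * (v.2.1 * dX (dY c) p - v.2.2 * dX (dY b) p) + b p * (v.2.2 * dX (dY a) p - v.1 * dX (dY c) p)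
            + c p * (v.1 * dX (dY b) p - v.2.1 * dX (dY a) p)) := by
    have := (dψ.hasFDerivAt.mul (((da.hasFDerivAt.mul ((dcy.hasFDerivAt.const_mul v.2.1).sub (dby.hasFDerivAt.const_mul v.2.2))).add
      (db.hasFDerivAt.mul ((day.hasFDerivAt.const_mul v.2.2).sub (dcy.hasFDerivAt.const_mul v.1)))).add
      (dc.hasFDerivAt.mul ((dby.hasFDerivAt.const_mul v.1).sub (day.hasFDerivAt.const_mul v.2.1))))).fderiv
    have := congrArg (fun L => L (1, 0)) this
    refine Eq.trans this ?_
    simp only [dX, _root_.add_apply, _root_.sub_apply, _root_.smul_apply, smul_eq_mul, Pi.add_apply, Pi.sub_apply, Pi.mul_apply]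
    ring
  have ey : dY (fun q => φ (cone a b c (s, q)) *
          (a q * (dX b q * v.2.2 - dX c q * v.2.1) + b q * (dX c q * v.1 - dX a q * v.2.2)
            + c q * (dX a q * v.2.1 - dX b q * v.1))) p =
      dY (fun q => φ (cone a b c (s, q))) p * (a p * (dX b p * v.2.2 - dX c p * v.2.1) + b p * (dX c p * v.1 - dX a p * v.2.2)
            + c p * (dX a p * v.2.1 - dX b p * v.1)) +
      φ (cone a b c (s, p)) * (dY a p * (dX b p * v.2.2 - dX c p * v.2.1) + dY b p * (dX c p * v.1 - dX a p * v.2.2)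
            + dY c p * (dX a p * v.2.1 - dX b p * v.1) 
          + a p * (dY (dX b) p * v.2.2 - dY (dX c) p * v.2.1) + b p * (dY (dX c) p * v.1 - dY (dX a) p * v.2.2)
            + c p * (dY (dX a) p * v.2.1 - dY (dX b) p * v.1)) := by
    have := (dψ.hasFDerivAt.mul (((da.hasFDerivAt.mul ((dbx.hasFDerivAt.mul_const v.2.2).sub (dcx.hasFDerivAt.mul_const v.2.1))).add
      (db.hasFDerivAt.mul ((dcx.hasFDerivAt.mul_const v.1).sub (dax.hasFDerivAt.mul_const v.2.2)))).add
      (dc.hasFDerivAt.mul ((dax.hasFDerivAt.mul_const v.2.1).sub (dbx.hasFDerivAt.mul_const v.1))))).fderiv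
    have := congrArg (fun L => L (0, 1)) this
    refine Eq.trans this ?_
    simp only [dY, _root_.add_apply, _root_.sub_apply, _root_.smul_apply, smul_eq_mul, Pi.add_apply, Pi.sub_apply, Pi.mul_apply]
    ring
  rw [ex, ey, sa, sb, sc]
  have e1 : dX (fun q => φ (cone a b c (s, q))) p = fderiv ℝ φ (cone a b c (s, p)) (s * dX a p, (s * dX b p, s * dX c p)) := h1 _
  have e2 : dY (fun q => φ (cone a b c (s, q))) p = fderiv ℝ φ (cone a b c (s, p)) (s * dY a p, (s * dY b p, s * dY c p)) := h1 _
  have e3 : fderiv ℝ φ (cone a b c (s, p)) v = fderiv ℝ φ (cone a b c (s, p)) (v.1, (v.2.1, v.2.2)) := rfl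
  rw [e1, e2, e3, lin3 _ v.1, lin3 _ (s * dX a p), lin3 _ (s * dY a p), lin3 _ (a p)]
  simp only [coneJ, J1, J2, J3]
  ring
end


theorem J1_cont {b c : ℝ × ℝ → ℝ} (hb : ContDiff ℝ ∞ b) (hc : ContDiff ℝ ∞ c) : Continuous (J1 b c) := by
  have := (dX_smooth hb).continuous
  have := (dX_smooth hc).continuous
  have := (dY_smooth hb).continuous
  have := (dY_smooth hc).continuous
  unfold J1; fun_prop
theorem J2_cont {b c : ℝ × ℝ → ℝ} (hb : ContDiff ℝ ∞ b) (hc : ContDiff ℝ ∞ c) : Continuous (J2 b c) := by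
  have := (dX_smooth hb).continuous
  have := (dX_smooth hc).continuous
  have := (dY_smooth hb).continuous
  have := (dY_smooth hc).continuous
  unfold J2; fun_prop
theorem J3_cont {b c : ℝ × ℝ → ℝ} (hb : ContDiff ℝ ∞ b) (hc : ContDiff ℝ ∞ c) : Continuous (J3 b c) := by
  have := (dX_smooth hb).continuous
  have := (dX_smooth hc).continuous
  have := (dY_smooth hb).continuous
  have := (dY_smooth hc).continuous
  unfold J3; fun_prop

theorem cone_cont {a b c : ℝ × ℝ → ℝ} (ha : Continuous a) (hb : Continuous b) (hc : Continuous c) :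
    Continuous (cone a b c) := by unfold cone; fun_prop

theorem coneJ_cont {a b c : ℝ × ℝ → ℝ} (ha : ContDiff ℝ ∞ a) (hb : ContDiff ℝ ∞ b) (hc : ContDiff ℝ ∞ c) :
    Continuous (coneJ a b c) := by
  have := J1_cont hb hc
  have := J2_cont ha hc
  have := J3_cont ha hb
  have := ha.continuous
  have := hb.continuous
  have := hc.continuous
  unfold coneJ; fun_prop

/-- Fubini on the slab in both orders -/
theorem slab_int {H : P3 → ℝ} (hH : Continuous H) {K : Set (ℝ × ℝ)} (hK : IsCompact K)
    (h : ∀ s p, p ∉ K → H (s, p) = 0) :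
    (∫ x in Set.Ioc (0:ℝ) 1 ×ˢ (Set.univ : Set (ℝ × ℝ)), H x) = ∫ s in Set.Ioc (0:ℝ) 1, ∫ p, H (s, p) := by
  have h1 := intD hH hK h
  have := setIntegral_prod (μ := (volume : Measure ℝ)) (ν := (volume : Measure (ℝ × ℝ))) H h1
  rw [Measure.restrict_univ] at this
  exact this

theorem slab_int' {H : P3 → ℝ} (hH : Continuous H) {K : Set (ℝ × ℝ)} (hK : IsCompact K)
    (h : ∀ s p, p ∉ K → H (s, p) = 0) :
    (∫ x in Set.Ioc (0:ℝ) 1 ×ˢ (Set.univ : Set (ℝ × ℝ)), H x) = ∫ p, ∫ s in Set.Ioc (0:ℝ) 1, H (s, p) := by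
  rw [slab_int hH hK h]
  refine integral_integral_swap (f := fun s p => H (s, p)) ?_
  have h1 := intD hH hK h
  have e : (volume.restrict (Set.Ioc (0:ℝ) 1)).prod (volume : Measure (ℝ × ℝ)) =
      (volume : Measure P3).restrict (Set.Ioc (0:ℝ) 1 ×ˢ (Set.univ : Set (ℝ × ℝ))) := by
    change _ = (volume.prod volume).restrict _
    rw [← Measure.prod_restrict, Measure.restrict_univ]
  rw [e]; exact h1

theorem stokes_s3 {a b c : ℝ × ℝ → ℝ} (ha : ContDiff ℝ ∞ a) (hb : ContDiff ℝ ∞ b) (hc : ContDiff ℝ ∞ c)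
    {K : Set (ℝ × ℝ)} (hK : IsCompact K) (ha0 : ∀ p ∉ K, a p = 0) (hb0 : ∀ p ∉ K, b p = 0)
    (hc0 : ∀ p ∉ K, c p = 0)
    {φ : P3 → ℝ} (hφ : ContDiff ℝ ∞ φ) (v : P3) :
    (∫ x in Set.Ioc (0:ℝ) 1 ×ˢ (Set.univ : Set (ℝ × ℝ)),
      coneJ a b c x * fderiv ℝ φ (cone a b c x) v) =
    ∫ p, φ (a p, (b p, c p)) * (v.1 * J1 b c p + v.2.1 * J2 a c p + v.2.2 * J3 a b p) := by
  have hax0 := dX_zero hK.isClosed ha0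
  have hbx0 := dX_zero hK.isClosed hb0
  have hcx0 := dX_zero hK.isClosed hc0
  have hay0 := dY_zero hK.isClosed ha0
  have hby0 := dY_zero hK.isClosed hb0
  have hcy0 := dY_zero hK.isClosed hc0
  have sax := dX_smooth ha
  have sbx := dX_smooth hb
  have scx := dX_smooth hc
  have say := dY_smooth ha
  have sby := dY_smooth hb
  have scy := dY_smooth hc
  have j1 := J1_cont hb hc
  have j2 := J2_cont ha hc
  have j3 := J3_cont ha hb
  have ca := ha.continuous
  have cb := hb.continuous
  have cc := hc.continuous
  have hcone := cone_cont ca cb cc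
  have hJ := coneJ_cont ha hb hc
  have cφ := hφ.continuous
  have cdφ : Continuous (fderiv ℝ φ) := (hφ.fderiv_right (m := ∞) (by simp)).continuous
  have H1c : Continuous (fun x : P3 => coneJ a b c x * fderiv ℝ φ (cone a b c x) v) :=
    hJ.mul ((cdφ.comp hcone).clm_apply continuous_const)
  set H2 : P3 → ℝ := fun x => (2 * x.1 * φ (cone a b c x) +
          x.1 ^ 2 * fderiv ℝ φ (cone a b c x) (a x.2, (b x.2, c x.2))) *
        (v.1 * J1 b c x.2 + v.2.1 * J2 a c x.2 + v.2.2 * J3 a b x.2) with hH2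
  have H2c : Continuous H2 := by
    have h1 : Continuous (fun x : P3 => fderiv ℝ φ (cone a b c x) (a x.2, (b x.2, c x.2))) :=
      (cdφ.comp hcone).clm_apply (by fun_prop)
    have h2 : Continuous (fun x : P3 => φ (cone a b c x)) := cφ.comp hcone
    rw [hH2]; fun_prop
  have H1z : ∀ s p, p ∉ K → (fun x : P3 => coneJ a b c x * fderiv ℝ φ (cone a b c x) v) (s, p) = 0 := by
    intro s p hp
    simp [coneJ, ha0 p hp, hb0 p hp, hc0 p hp]
  have H2z : ∀ s p, p ∉ K → H2 (s, p) = 0 := by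
    intro s p hp
    simp [hH2, J1, J2, J3, hax0 p hp, hbx0 p hp, hcx0 p hp]
  have key : (∫ x in Set.Ioc (0:ℝ) 1 ×ˢ (Set.univ : Set (ℝ × ℝ)),
      (coneJ a b c x * fderiv ℝ φ (cone a b c x) v - H2 x)) = 0 := by
    rw [slab_int (H := fun x => coneJ a b c x * fderiv ℝ φ (cone a b c x) v - H2 x)
      (H1c.sub H2c) hK (fun s p hp => by
      have := H1z s p hp
      simp only at this
      rw [this, H2z s p hp, sub_zero])]
    refine integral_eq_zero_of_ae (ae_of_all _ fun s => ?_)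
    simp only [Pi.zero_apply]
    have cs : ContDiff ℝ ∞ (fun q : ℝ × ℝ => φ (cone a b c (s, q))) := by
      unfold cone
      exact hφ.comp (by fun_prop)
    have g1 : ContDiff ℝ ∞ (fun q => φ (cone a b c (s, q)) *
          (a q * (v.2.1 * dY c q - v.2.2 * dY b q) + b q * (v.2.2 * dY a q - v.1 * dY c q)
            + c q * (v.1 * dY b q - v.2.1 * dY a q))) := cs.mul (by fun_prop)
    have g2 : ContDiff ℝ ∞ (fun q => φ (cone a b c (s, q)) *
          (a q * (dX b q * v.2.2 - dX c q * v.2.1) + b q * (dX c q * v.1 - dX a q * v.2.2)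
            + c q * (dX a q * v.2.1 - dX b q * v.1))) := cs.mul (by fun_prop)
    have z1 := int_fderiv_zero g1 hK (fun p hp => by simp [ha0 p hp, hb0 p hp, hc0 p hp]) (1, 0)
    have z2 := int_fderiv_zero g2 hK (fun p hp => by simp [ha0 p hp, hb0 p hp, hc0 p hp]) (0, 1)
    have i1 := int_of_zero (dX_smooth g1).continuous hK
      (dX_zero hK.isClosed (fun p hp => by simp [ha0 p hp, hb0 p hp, hc0 p hp]))
    have i2 := int_of_zero (dY_smooth g2).continuous hK
      (dY_zero hK.isClosed (fun p hp => by simp [ha0 p hp, hb0 p hp, hc0 p hp]))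
    have : ∀ p, coneJ a b c (s, p) * fderiv ℝ φ (cone a b c (s, p)) v - H2 (s, p) = 
      s * (dX (fun q => φ (cone a b c (s, q)) *
          (a q * (v.2.1 * dY c q - v.2.2 * dY b q) + b q * (v.2.2 * dY a q - v.1 * dY c q)
            + c q * (v.1 * dY b q - v.2.1 * dY a q))) p +
        dY (fun q => φ (cone a b c (s, q)) *
          (a q * (dX b q * v.2.2 - dX c q * v.2.1) + b q * (dX c q * v.1 - dX a q * v.2.2)
            + c q * (dX a q * v.2.1 - dX b q * v.1))) p) := by
      intro p
      rw [stokes_pt ha hb hc hφ v s p]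
      simp only [hH2]
      ring
    simp_rw [this]
    rw [integral_const_mul, integral_add i1 i2]
    have z1' : ∫ p, dX (fun q => φ (cone a b c (s, q)) *
          (a q * (v.2.1 * dY c q - v.2.2 * dY b q) + b q * (v.2.2 * dY a q - v.1 * dY c q)
            + c q * (v.1 * dY b q - v.2.1 * dY a q))) p = 0 := z1
    have z2' : ∫ p, dY (fun q => φ (cone a b c (s, q)) *
          (a q * (dX b q * v.2.2 - dX c q * v.2.1) + b q * (dX c q * v.1 - dX a q * v.2.2)
            + c q * (dX a q * v.2.1 - dX b q * v.1))) p = 0 := z2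
    rw [z1', z2']; simp
  rw [integral_sub (intD H1c hK H1z) (intD H2c hK H2z), sub_eq_zero] at key
  rw [key, slab_int' H2c hK H2z]
  refine integral_congr_ae (ae_of_all _ fun p => ?_)
  simp only
  rw [← intervalIntegral.integral_of_le zero_le_one]
  have hd : ∀ s ∈ Set.uIcc (0:ℝ) 1, HasDerivAt (fun s : ℝ => s ^ 2 * φ (cone a b c (s, p)) *
      (v.1 * J1 b c p + v.2.1 * J2 a c p + v.2.2 * J3 a b p)) (H2 (s, p)) s := by
    intro s _
    have d1 : HasDerivAt (fun s : ℝ => cone a b c (s, p)) (a p, (b p, c p)) s := by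
      unfold cone
      exact (hasDerivAt_mul_const (a p)).prodMk
        ((hasDerivAt_mul_const (b p)).prodMk (hasDerivAt_mul_const (c p)))
    have d2 : HasDerivAt (fun s : ℝ => φ (cone a b c (s, p)))
        (fderiv ℝ φ (cone a b c (s, p)) (a p, (b p, c p))) s :=
      ((hφ.differentiable (by simp)) (cone a b c (s, p))).hasFDerivAt.comp_hasDerivAt s d1
    have d3 := ((hasDerivAt_pow 2 s).mul d2).mul_const
      (v.1 * J1 b c p + v.2.1 * J2 a c p + v.2.2 * J3 a b p)
    refine d3.congr_deriv ?_
    simp only [hH2]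
    norm_num
  rw [intervalIntegral.integral_eq_sub_of_hasDerivAt hd
    ((H2c.comp (by fun_prop : Continuous fun s : ℝ => ((s, p) : P3))).intervalIntegrable _ _)]
  simp [cone]

/-- total integral of the cone Jacobian -/
theorem coneJ_total {a b c : ℝ × ℝ → ℝ} (ha : ContDiff ℝ ∞ a) (hb : ContDiff ℝ ∞ b) (hc : ContDiff ℝ ∞ c)
    {K : Set (ℝ × ℝ)} (hK : IsCompact K) (ha0 : ∀ p ∉ K, a p = 0) (hb0 : ∀ p ∉ K, b p = 0)
    (hc0 : ∀ p ∉ K, c p = 0) :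
    (∫ x in Set.Ioc (0:ℝ) 1 ×ˢ (Set.univ : Set (ℝ × ℝ)), coneJ a b c x) =
      (∫ p, (a p * J1 b c p + b p * J2 a c p + c p * J3 a b p)) / 3 := by
  rw [slab_int (coneJ_cont ha hb hc) hK (fun s p hp => by simp [coneJ, ha0 p hp, hb0 p hp, hc0 p hp])]
  simp only [coneJ]
  simp_rw [integral_const_mul]
  rw [integral_mul_const, ← intervalIntegral.integral_of_le zero_le_one, integral_pow]
  norm_num
  ring

noncomputable def coneD (a b c : ℝ × ℝ → ℝ) (x : P3) : P3 →L[ℝ] P3 :=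
  (x.1 • (fderiv ℝ a x.2).comp (ContinuousLinearMap.snd ℝ ℝ (ℝ × ℝ)) + a x.2 • ContinuousLinearMap.fst ℝ ℝ (ℝ × ℝ)).prod
  ((x.1 • (fderiv ℝ b x.2).comp (ContinuousLinearMap.snd ℝ ℝ (ℝ × ℝ)) + b x.2 • ContinuousLinearMap.fst ℝ ℝ (ℝ × ℝ)).prod
  (x.1 • (fderiv ℝ c x.2).comp (ContinuousLinearMap.snd ℝ ℝ (ℝ × ℝ)) + c x.2 • ContinuousLinearMap.fst ℝ ℝ (ℝ × ℝ)))

theorem cone_hasFDeriv {a b c : ℝ × ℝ → ℝ} (ha : ContDiff ℝ ∞ a) (hb : ContDiff ℝ ∞ b)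
    (hc : ContDiff ℝ ∞ c) (x : P3) : HasFDerivAt (cone a b c) (coneD a b c x) x := by
  have h : ∀ {a : ℝ × ℝ → ℝ}, ContDiff ℝ ∞ a → HasFDerivAt (fun x : P3 => x.1 * a x.2)
      (x.1 • (fderiv ℝ a x.2).comp (ContinuousLinearMap.snd ℝ ℝ (ℝ × ℝ)) + a x.2 • ContinuousLinearMap.fst ℝ ℝ (ℝ × ℝ)) x := by
    intro a ha
    exact (hasFDerivAt_fst (𝕜 := ℝ) (p := x)).mul
      (((ha.differentiable (by simp)) x.2).hasFDerivAt.comp x (hasFDerivAt_snd (𝕜 := ℝ) (p := x)))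
  unfold cone coneD
  exact (h ha).prodMk ((h hb).prodMk (h hc))

noncomputable def P3equiv : P3 ≃ₗ[ℝ] (Fin 3 → ℝ) where
  toFun x := ![x.1, x.2.1, x.2.2]
  invFun f := (f 0, (f 1, f 2))
  map_add' x y := by ext i; fin_cases i <;> simp
  map_smul' r x := by ext i; fin_cases i <;> simp
  left_inv x := by simp
  right_inv f := by ext i; fin_cases i <;> simp

theorem coneD_det (a b c : ℝ × ℝ → ℝ) (x : P3) : (coneD a b c x).det = coneJ a b c x := by
  rw [ContinuousLinearMap.det, ← LinearMap.det_toMatrix (Module.Basis.ofEquivFun P3equiv), Matrix.det_fin_three]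
  have h0 : ∀ L : ℝ × ℝ →L[ℝ] ℝ, L (0, 0) = 0 := fun L => L.map_zero
  simp [h0, LinearMap.toMatrix_apply, P3equiv, coneD, coneJ, J1, J2, J3, dX, dY, Module.Basis.ofEquivFun_repr_apply]
  ring


theorem cs3 (v w : P3) : |v.1 * w.1 + v.2.1 * w.2.1 + v.2.2 * w.2.2| ≤ √(qn v) * √(qn w) := by
  rw [← Real.sqrt_mul (by unfold qn; positivity)]
  refine Real.abs_le_sqrt ?_
  unfold qn
  nlinarith [sq_nonneg (v.1 * w.2.1 - v.2.1 * w.1), sq_nonneg (v.1 * w.2.2 - v.2.2 * w.1),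
    sq_nonneg (v.2.1 * w.2.2 - v.2.2 * w.2.1)]

theorem moll_fderiv {η w : P3 → ℝ} (hη : ContDiff ℝ ∞ η) (hηc : HasCompactSupport η) (hw : Integrable w)
    (z : P3) : ∃ L : P3 →L[ℝ] ℝ, HasFDerivAt (convolution η w (ContinuousLinearMap.lsmul ℝ ℝ) volume) L z ∧
      ∀ v, L v = ∫ t, w t * fderiv ℝ η (z - t) v := by
  refine ⟨_, hηc.hasFDerivAt_convolution_left (ContinuousLinearMap.lsmul ℝ ℝ)
    (hη.of_le (by exact WithTop.coe_le_coe.2 le_top)) hw.locallyIntegrable z, fun v => ?_⟩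
  have hcd : Continuous (fderiv ℝ η) := (hη.fderiv_right (m := ∞) (by simp)).continuous
  have hex := (hηc.fderiv ℝ).convolutionExists_left
    ((ContinuousLinearMap.lsmul ℝ ℝ : ℝ →L[ℝ] ℝ →L[ℝ] ℝ).precompL P3) hcd hw.locallyIntegrable z
  rw [convolution, ContinuousLinearMap.integral_apply hex]
  rw [← integral_sub_left_eq_self (fun t => w t * fderiv ℝ η (z - t) v) volume z]
  refine integral_congr_ae (ae_of_all _ fun t => ?_)
  simp [ContinuousLinearMap.precompL_apply, mul_comm]

theorem moll_bound {a b c : ℝ × ℝ → ℝ} (ha : ContDiff ℝ ∞ a) (hb : ContDiff ℝ ∞ b) (hc : ContDiff ℝ ∞ c)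
    {K : Set (ℝ × ℝ)} (hK : IsCompact K) (ha0 : ∀ p ∉ K, a p = 0) (hb0 : ∀ p ∉ K, b p = 0)
    (hc0 : ∀ p ∉ K, c p = 0) {w : P3 → ℝ} (hw : Integrable w)
    (hwa : ∀ φ : P3 → ℝ, Measurable φ → (∃ M, ∀ z, |φ z| ≤ M) →
      (∫ x in Set.Ioc (0:ℝ) 1 ×ˢ (Set.univ : Set (ℝ × ℝ)), coneJ a b c x * φ (cone a b c x)) = ∫ z, w z * φ z)
    {η : P3 → ℝ} (hη : ContDiff ℝ ∞ η) (hηc : HasCompactSupport η) (hη0 : ∀ z, 0 ≤ η z) (hη1 : ∫ z, η z = 1) :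
    ENNReal.ofReal (3 * bet) * (∫⁻ s in Set.Ioi (0:ℝ),
      volume {z | s < |convolution η w (ContinuousLinearMap.lsmul ℝ ℝ) volume z|} ^ (2/3:ℝ)) ≤
      ENNReal.ofReal (∫ p, √(qn (J1 b c p, (J2 a c p, J3 a b p)))) := by
  set j : ℝ × ℝ → ℝ := fun p => √(qn (J1 b c p, (J2 a c p, J3 a b p))) with hj
  set U : ℝ × ℝ → P3 := fun p => (a p, (b p, c p)) with hU
  have j1 := J1_cont hb hc
  have j2 := J2_cont ha hc
  have j3 := J3_cont ha hb
  have hax0 := dX_zero hK.isClosed ha0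
  have hbx0 := dX_zero hK.isClosed hb0
  have hcx0 := dX_zero hK.isClosed hc0
  have jc : Continuous j := by
    have := qn_cont
    rw [hj]; fun_prop
  have j0 : ∀ p, 0 ≤ j p := fun p => Real.sqrt_nonneg _
  have jz : ∀ p ∉ K, j p = 0 := by
    intro p hp
    simp [hj, qn, J1, J2, J3, hax0 p hp, hbx0 p hp, hcx0 p hp]
  have ji : Integrable j := int_of_zero jc hK jz
  have ηcont := hη.continuous
  have Uc : Continuous U := by
    have := ha.continuous
    have := hb.continuous
    have := hc.continuous
    rw [hU]; fun_prop
  obtain ⟨M, hM⟩ := hηc.exists_bound_of_continuous ηcont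
  have hgi : ∀ z, Integrable (fun p => η (z - U p) * j p) := by
    intro z
    refine int_of_zero (by fun_prop) hK (fun p hp => by simp [jz p hp])
  set g : P3 → ℝ := fun z => ∫ p, η (z - U p) * j p with hg
  have gc : Continuous g := by
    refine continuous_of_dominated (bound := fun p => M * j p) ?_ ?_ (ji.const_mul M) ?_
    · exact fun z => (hgi z).aestronglyMeasurable
    · intro z
      refine ae_of_all _ fun p => ?_
      rw [norm_mul, Real.norm_of_nonneg (j0 p)]
      exact mul_le_mul_of_nonneg_right (hM _) (j0 p)
    · exact ae_of_all _ fun p => by fun_prop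
  have g0 : ∀ z, 0 ≤ g z := fun z => integral_nonneg fun p => mul_nonneg (hη0 _) (j0 p)
  have gcs : HasCompactSupport g := by
    refine HasCompactSupport.intro (hηc.isCompact.add (hK.image Uc)) ?_
    intro z hz
    refine integral_eq_zero_of_ae (ae_of_all _ fun p => ?_)
    by_cases hp : p ∈ K
    · have : η (z - U p) = 0 := by
        by_contra hne
        exact hz ⟨z - U p, subset_tsupport _ hne, U p, ⟨p, hp, rfl⟩, by simp⟩
      simp [this]
    · simp [jz p hp]
  set f := convolution η w (ContinuousLinearMap.lsmul ℝ ℝ) volume with hf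
  have fd : Differentiable ℝ f := fun z =>
    let ⟨L, hL, _⟩ := moll_fderiv hη hηc hw z
    hL.differentiableAt
  have fi : Integrable f :=
    Integrable.integrable_convolution _ (ηcont.integrable_of_hasCompactSupport hηc) hw
  have fg : ∀ z v, |fderiv ℝ f z v| ≤ √(qn v) * g z := by
    intro z v
    obtain ⟨L, hL, hLv⟩ := moll_fderiv hη hηc hw z
    rw [hL.fderiv, hLv]
    have hcd : Continuous (fun y => fderiv ℝ η y v) :=
      ((hη.fderiv_right (m := ∞) (by simp)).clm_apply contDiff_const).continuous
    obtain ⟨M', hM'⟩ := (hηc.fderiv_apply ℝ v).exists_bound_of_continuous hcd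
    rw [← hwa (fun t => fderiv ℝ η (z - t) v) (by fun_prop) ⟨M', fun t => hM' _⟩]
    have hφ : ContDiff ℝ ∞ (fun t => η (z - t)) := hη.comp (by fun_prop)
    have st := stokes_s3 ha hb hc hK ha0 hb0 hc0 hφ v
    have hd : ∀ t, fderiv ℝ (fun t => η (z - t)) t v = - fderiv ℝ η (z - t) v := by
      intro t
      have h1 : HasFDerivAt (fun t : P3 => z - t) (-ContinuousLinearMap.id ℝ P3) t :=
        (hasFDerivAt_id t).const_sub z
      have h2 : HasFDerivAt (fun t => η (z - t)) _ t :=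
        ((hη.differentiable (by simp)) (z - t)).hasFDerivAt.comp t h1
      rw [h2.fderiv]; simp
    simp_rw [hd, mul_neg] at st
    rw [integral_neg] at st
    rw [← abs_neg, st]
    calc _ ≤ ∫ p, |η (z - (a p, b p, c p)) * (v.1 * J1 b c p + v.2.1 * J2 a c p + v.2.2 * J3 a b p)| :=
          abs_integral_le_integral_abs
      _ ≤ ∫ p, √(qn v) * (η (z - U p) * j p) := by
          refine integral_mono_of_nonneg (ae_of_all _ fun p => abs_nonneg _) ((hgi z).const_mul _)
            (ae_of_all _ fun p => ?_)
          simp only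
          rw [abs_mul, abs_of_nonneg (hη0 _)]
          have := cs3 v (J1 b c p, (J2 a c p, J3 a b p))
          have := mul_le_mul_of_nonneg_left this (hη0 (z - U p))
          calc _ ≤ _ := this
            _ = _ := by simp only [hj]; ring
      _ = _ := integral_const_mul _ _
  refine (level_ineq f g fd fi gc gcs g0 fg).trans ?_
  have e1 : ∀ z, ENNReal.ofReal (g z) = ∫⁻ p, ENNReal.ofReal (η (z - U p) * j p) := fun z =>
    ofReal_integral_eq_lintegral_ofReal (hgi z) (ae_of_all _ fun p => mul_nonneg (hη0 _) (j0 p))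
  simp_rw [e1]
  rw [lintegral_lintegral_swap (by
    refine Measurable.aemeasurable ?_
    refine ENNReal.measurable_ofReal.comp (Continuous.measurable ?_)
    fun_prop)]
  rw [ofReal_integral_eq_lintegral_ofReal ji (ae_of_all _ j0)]
  refine lintegral_mono fun p => ?_
  have : ∀ z, ENNReal.ofReal (η (z - U p) * j p) = ENNReal.ofReal (η (z - U p)) * ENNReal.ofReal (j p) :=
    fun z => ENNReal.ofReal_mul (hη0 _)
  simp_rw [this]
  rw [lintegral_mul_const _ (by fun_prop), lintegral_sub_right_eq_self (fun z => ENNReal.ofReal (η z)),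
    ← ofReal_integral_eq_lintegral_ofReal (ηcont.integrable_of_hasCompactSupport hηc) (ae_of_all _ hη0), hη1]
  simp

theorem iso_param {a b c : ℝ × ℝ → ℝ} (ha : ContDiff ℝ ∞ a) (hb : ContDiff ℝ ∞ b) (hc : ContDiff ℝ ∞ c)
    {K : Set (ℝ × ℝ)} (hK : IsCompact K) (ha0 : ∀ p ∉ K, a p = 0) (hb0 : ∀ p ∉ K, b p = 0)
    (hc0 : ∀ p ∉ K, c p = 0) :
    36 * π * ((∫ p, (a p * J1 b c p + b p * J2 a c p + c p * J3 a b p)) / 3) ^ 2 ≤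
      (∫ p, √(qn (J1 b c p, (J2 a c p, J3 a b p)))) ^ 3 := by
  have hJ := coneJ_cont ha hb hc
  have hdet : (fun x => (coneD a b c x).det) = coneJ a b c := funext (coneD_det a b c)
  obtain ⟨w, hwm, hwi, hw1, hwa⟩ := area_signed (cone a b c) (coneD a b c)
    (Set.Ioc (0:ℝ) 1 ×ˢ (Set.univ : Set (ℝ × ℝ))) (measurableSet_Ioc.prod .univ)
    (cone_hasFDeriv ha hb hc) (cone_cont ha.continuous hb.continuous hc.continuous).measurable
    (by rw [hdet]; exact hJ.measurable)
    (by rw [hdet]; exact intD hJ hK (fun s p hp => by simp [coneJ, ha0 p hp, hb0 p hp, hc0 p hp]))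
  simp_rw [coneD_det] at hwa
  have hV : (∫ p, (a p * J1 b c p + b p * J2 a c p + c p * J3 a b p)) / 3 = ∫ z, w z := by
    rw [← coneJ_total ha hb hc hK ha0 hb0 hc0]
    have := hwa (fun _ => 1) measurable_const ⟨1, fun _ => by simp⟩
    simpa using this
  rw [hV]
  let φ : ℕ → ContDiffBump (0 : P3) := fun n =>
    ⟨1 / ((n:ℝ) + 1), 2 / ((n:ℝ) + 1), by positivity, by gcongr; norm_num⟩
  have hmain := w_ineq w hwm hwi (ae_of_all _ hw1)
    (fun n => convolution ((φ n).normed volume) w (ContinuousLinearMap.lsmul ℝ ℝ) volume)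
    (fun n => by
      have : Differentiable ℝ (convolution ((φ n).normed volume) w (ContinuousLinearMap.lsmul ℝ ℝ) volume) :=
        fun z =>
          let ⟨L, hL, _⟩ := moll_fderiv (φ n).contDiff_normed (φ n).hasCompactSupport_normed hwi z
          hL.differentiableAt
      exact this.continuous.measurable)
    (∫ p, √(qn (J1 b c p, (J2 a c p, J3 a b p)))) (integral_nonneg fun p => Real.sqrt_nonneg _)
    (fun n => moll_bound ha hb hc hK ha0 hb0 hc0 hwi hwa (φ n).contDiff_normed
      (φ n).hasCompactSupport_normed (φ n).nonneg_normed (φ n).integral_normed)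
    (by
      refine ContDiffBump.ae_convolution_tendsto_right_of_locallyIntegrable (K := 2) ?_ ?_ hwi.locallyIntegrable
      · have : Tendsto (fun n : ℕ => 2 * (1 / ((n:ℝ) + 1))) atTop (nhds (2 * 0)) :=
          tendsto_one_div_add_atTop_nhds_zero_nat.const_mul 2
        rw [mul_zero] at this
        refine this.congr fun n => ?_
        simp [φ]; ring
      · refine Eventually.of_forall fun n => ?_
        simp [φ]; apply le_of_eq; ring)
  refine le_trans ?_ hmain
  have : |∫ z, w z| ≤ ∫ z, |w z| := abs_integral_le_integral_abs
  have h2 : (∫ z, w z) ^ 2 ≤ (∫ z, |w z|) ^ 2 := by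
    rw [← sq_abs]
    exact pow_le_pow_left₀ (abs_nonneg _) this 2
  have := Real.pi_pos
  gcongr

theorem sqrt_qn_le (x1 x2 x3 y1 y2 y3 : ℝ) :
    √(qn (x2 * y3 - x3 * y2, (x3 * y1 - x1 * y3, x1 * y2 - x2 * y1))) ≤
      ((x1 * x1 + x2 * x2 + x3 * x3) + (y1 * y1 + y2 * y2 + y3 * y3)) / 2 := by
  refine Real.sqrt_le_iff.2 ⟨by nlinarith [sq_nonneg x1, sq_nonneg x2, sq_nonneg x3, sq_nonneg y1, sq_nonneg y2, sq_nonneg y3], ?_⟩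
  unfold qn
  simp only
  nlinarith [sq_nonneg (x1 * y1 + x2 * y2 + x3 * y3),
    sq_nonneg ((x1 * x1 + x2 * x2 + x3 * x3) - (y1 * y1 + y2 * y2 + y3 * y3))]

theorem iso_energy (Ω : Set (ℝ × ℝ)) (u : ℝ × ℝ → Fin 3 → ℝ) (hu : IsAdmissible Ω u) :
    32 * π * (vol Ω u) ^ 2 ≤ (dirEnergy Ω u) ^ 3 := by
  obtain ⟨hs, hc, hsub⟩ := hu
  have hs' : ∀ i, ContDiff ℝ ∞ (fun q => u q i) := fun i => contDiff_pi.1 hs i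
  have hK : IsCompact (tsupport u) := hc
  have h0 : ∀ p ∉ tsupport u, u p = 0 := fun p hp => image_eq_zero_of_notMem_tsupport hp
  have hz : ∀ i, ∀ p ∉ tsupport u, (fun q => u q i) p = 0 := fun i p hp => by simp [h0 p hp]
  have hder : ∀ p v i, fderiv ℝ u p v i = fderiv ℝ (fun q => u q i) p v := by
    intro p v i
    have h1 := (hasFDerivAt_pi'.1 ((hs.differentiable (by simp)) p).hasFDerivAt i).fderiv
    rw [h1]; rfl
  have hX : ∀ p i, pderivX u p i = dX (fun q => u q i) p := fun p i => hder p _ i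
  have hY : ∀ p i, pderivY u p i = dY (fun q => u q i) p := fun p i => hder p _ i
  have hXz : ∀ i, ∀ p ∉ tsupport u, dX (fun q => u q i) p = 0 := fun i => dX_zero hK.isClosed (hz i)
  have hYz : ∀ i, ∀ p ∉ tsupport u, dY (fun q => u q i) p = 0 := fun i => dY_zero hK.isClosed (hz i)
  set e : ℝ × ℝ → ℝ := fun p => dot3 (pderivX u p) (pderivX u p) + dot3 (pderivY u p) (pderivY u p) with he
  have e_eq : ∀ p, e p =
      (dX (fun q => u q 0) p * dX (fun q => u q 0) p + dX (fun q => u q 1) p * dX (fun q => u q 1) p +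
        dX (fun q => u q 2) p * dX (fun q => u q 2) p) +
      (dY (fun q => u q 0) p * dY (fun q => u q 0) p + dY (fun q => u q 1) p * dY (fun q => u q 1) p +
        dY (fun q => u q 2) p * dY (fun q => u q 2) p) := by
    intro p
    simp only [he, dot3, Fin.sum_univ_three, hX, hY]
  have ez : ∀ p ∉ tsupport u, e p = 0 := by
    intro p hp
    rw [e_eq]; simp [hXz _ p hp, hYz _ p hp]
  have ec : Continuous e := by
    have c1 := fun i => (dX_smooth (hs' i)).continuous
    have c2 := fun i => (dY_smooth (hs' i)).continuous
    have := c1 0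
    have := c1 1
    have := c1 2
    have := c2 0
    have := c2 1
    have := c2 2
    rw [funext e_eq]; fun_prop
  have hE : dirEnergy Ω u = ∫ p, e p :=
    setIntegral_eq_integral_of_forall_compl_eq_zero fun p hp => ez p fun h => hp (hsub h)
  have hVp : ∀ p, dot3 (u p) (crossProduct (pderivX u p) (pderivY u p)) =
      u p 0 * J1 (fun q => u q 1) (fun q => u q 2) p + u p 1 * J2 (fun q => u q 0) (fun q => u q 2) p +
        u p 2 * J3 (fun q => u q 0) (fun q => u q 1) p := by
    intro p
    simp only [dot3, Fin.sum_univ_three, cross_apply, hX, hY, J1, J2, J3, Matrix.cons_val_zero,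
      Matrix.cons_val_one, Matrix.cons_val]
  have hV : vol Ω u = ∫ p, (u p 0 * J1 (fun q => u q 1) (fun q => u q 2) p +
      u p 1 * J2 (fun q => u q 0) (fun q => u q 2) p + u p 2 * J3 (fun q => u q 0) (fun q => u q 1) p) := by
    rw [← funext hVp]
    refine setIntegral_eq_integral_of_forall_compl_eq_zero fun p hp => ?_
    rw [h0 p fun h => hp (hsub h)]
    simp [dot3]
  have main := iso_param (hs' 0) (hs' 1) (hs' 2) hK (hz 0) (hz 1) (hz 2)
  rw [← hV] at main
  have hA : (∫ p, √(qn (J1 (fun q => u q 1) (fun q => u q 2) p,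
      (J2 (fun q => u q 0) (fun q => u q 2) p, J3 (fun q => u q 0) (fun q => u q 1) p)))) ≤
      (∫ p, e p) / 2 := by
    rw [← integral_div]
    refine integral_mono_of_nonneg (ae_of_all _ fun p => Real.sqrt_nonneg _)
      ((int_of_zero ec hK ez).div_const 2) (ae_of_all _ fun p => ?_)
    simp only [e_eq]
    exact sqrt_qn_le _ _ _ _ _ _
  have h3 := pow_le_pow_left₀ (integral_nonneg fun p => Real.sqrt_nonneg _) hA 3
  rw [hE]
  have := main.trans h3
  nlinarith [this]

theorem dichotomy_aux (Ω : Set (ℝ × ℝ)) (H : ℝ) (hH : 0 < H) (δ : ℝ) (hδ : 0 < δ)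
    (u : ℝ × ℝ → Fin 3 → ℝ) (hu : IsAdmissible Ω u) (hD : Dfun Ω H δ u = 0) :
    rPW H δ ≤ dnorm Ω u ∨ dnorm Ω u = 0 := by
  have h := iso_energy Ω u hu
  have hE0 : 0 ≤ dirEnergy Ω u := by
    refine integral_nonneg fun p => ?_
    refine add_nonneg ?_ ?_ <;> exact Finset.sum_nonneg fun i _ => mul_self_nonneg _
  unfold Dfun at hD
  unfold rPW dnorm
  set E := dirEnergy Ω u
  set V := vol Ω u
  rcases hE0.eq_or_lt with h0 | hpos
  · right; rw [← h0]; simp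
  · left
    refine Real.le_sqrt_of_sq_le ?_
    have e1 : (2 * √(2 * π) * δ / H) ^ 2 = 8 * π * δ ^ 2 / H ^ 2 := by
      rw [div_pow, mul_pow, mul_pow, Real.sq_sqrt (by positivity)]; ring
    rw [e1, div_le_iff₀ (by positivity)]
    have e2 : δ ^ 2 * E ^ 2 = 4 * H ^ 2 * V ^ 2 := by
      have : δ * E = - (2 * H * V) := by linarith
      rw [← mul_pow, this]; ring
    have e3 : 8 * π * δ ^ 2 * E ^ 2 ≤ E * H ^ 2 * E ^ 2 := by
      calc 8 * π * δ ^ 2 * E ^ 2 = H ^ 2 * (32 * π * V ^ 2) := by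
            rw [mul_assoc, e2]; ring
        _ ≤ H ^ 2 * E ^ 3 := by gcongr
        _ = _ := by ring
    exact le_of_mul_le_mul_right e3 (by positivity)

/-- If `D_δ(u) = 0` then `‖u‖ ≥ r(δ)` or `‖u‖ = 0`; in particular if `D(u) = 0`
then `‖u‖ ≥ r(1) = 2√(2π)/H` or `‖u‖ = 0`. -/
theorem nehari_norm_dichotomy (Ω : Set (ℝ × ℝ)) (hΩ : IsOpen Ω)
    (hΩb : Bornology.IsBounded Ω) (H : ℝ) (hH : 0 < H) (δ : ℝ) (hδ : 0 < δ)
    (u : ℝ × ℝ → Fin 3 → ℝ) (hu : IsAdmissible Ω u) :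
    (Dfun Ω H δ u = 0 → rPW H δ ≤ dnorm Ω u ∨ dnorm Ω u = 0) ∧
    (Dfun Ω H 1 u = 0 → rPW H 1 ≤ dnorm Ω u ∨ dnorm Ω u = 0) ∧
    rPW H 1 = 2 * Real.sqrt (2 * Real.pi) / H := by
  refine ⟨dichotomy_aux Ω H hH δ hδ u hu, dichotomy_aux Ω H hH 1 one_pos u hu, ?_⟩
  simp [rPW]
end
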